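/- arXiv:0807.3278 — 3 statements merged into one kernel-verified Lean document; each statement's English description precedes it below -/
import Mathlib

section
/- Let g be a real semisimple Lie algebra and X ∈ g a semisimple element (ad(X) diagonalizable over ℂ). Then there exists a Cartan involution θ of g with Cartan decomposition g = k ⊕ s such that X = E + H with H ∈ s, E ∈ k, and [E, H] = 0. -/
open scoped InnerProductSpace

section CartanInv

set_option linter.unusedSectionVars false

variable {V : Type*} [NormedAddCommGroup V] [InnerProductSpace ℝ V] [FiniteDimensional ℝ V]

noncomputable def dact (A : V →L[ℝ] V) (ν : V →L[ℝ] V →L[ℝ] V) : V →L[ℝ] V →L[ℝ] V :=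
  (ContinuousLinearMap.compL ℝ V V V A) ∘L ν - ν ∘L A -
    ((ContinuousLinearMap.compL ℝ V V V).flip A) ∘L ν

@[simp] lemma dact_apply (A : V →L[ℝ] V) (ν : V →L[ℝ] V →L[ℝ] V) (x y : V) :
    dact A ν x y = A (ν x y) - ν (A x) y - ν x (A y) := by
  simp [dact]

noncomputable def gact (g g' : V →L[ℝ] V) (ν : V →L[ℝ] V →L[ℝ] V) : V →L[ℝ] V →L[ℝ] V :=
  (ContinuousLinearMap.compL ℝ V V V g) ∘L
    (((ContinuousLinearMap.compL ℝ V V V).flip g') ∘L (ν ∘L g'))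

@[simp] lemma gact_apply (g g' : V →L[ℝ] V) (ν : V →L[ℝ] V →L[ℝ] V) (x y : V) :
    gact g g' ν x y = g (ν (g' x) (g' y)) := by
  simp [gact]

lemma sum_dual {U M ι : Type*} [AddCommGroup U] [Module ℝ U] [AddCommGroup M] [Module ℝ M]
    [Fintype ι] (e f : ι → U) (B : U → U → ℝ)
    (h : ∀ x, x = ∑ i, B x (f i) • e i) (h' : ∀ x, x = ∑ i, B (e i) x • f i)
    (T T' : U → U) (hT : ∀ x y, B (T x) y = B x (T' y)) (β : U →ₗ[ℝ] U →ₗ[ℝ] M) :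
    ∑ i, β (T (e i)) (f i) = ∑ i, β (e i) (T' (f i)) := by
  have h1 : ∀ i, β (T (e i)) (f i) = ∑ j, B (T (e i)) (f j) • β (e j) (f i) := fun i => by
    conv_lhs => rw [h (T (e i))]
    simp
  have h2 : ∀ i, β (e i) (T' (f i)) = ∑ j, B (e j) (T' (f i)) • β (e i) (f j) := fun i => by
    conv_lhs => rw [h' (T' (f i))]
    simp
  simp_rw [h1, h2, hT]
  exact Finset.sum_comm

/-- Killing form of a bracket. -/
noncomputable def kil (ν : V →L[ℝ] V →L[ℝ] V) : LinearMap.BilinForm ℝ V :=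
  LinearMap.mk₂ ℝ (fun x y => LinearMap.trace ℝ V ((ν x : V →ₗ[ℝ] V) * (ν y : V →ₗ[ℝ] V)))
    (by intros; simp [add_mul]) (by intros; simp) (by intros; simp [mul_add]) (by intros; simp)

lemma kil_apply (ν : V →L[ℝ] V →L[ℝ] V) (x y : V) :
    kil ν x y = LinearMap.trace ℝ V ((ν x : V →ₗ[ℝ] V) * (ν y : V →ₗ[ℝ] V)) := rfl

lemma kil_symm (ν : V →L[ℝ] V →L[ℝ] V) (x y : V) : kil ν x y = kil ν y x := by
  rw [kil_apply, kil_apply, LinearMap.trace_mul_comm]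

/-- Derivations are skew for the Killing form. -/
lemma kil_der (ν : V →L[ℝ] V →L[ℝ] V) (D : V →ₗ[ℝ] V)
    (hD : ∀ x y, D (ν x y) = ν (D x) y + ν x (D y)) (x y : V) :
    kil ν (D x) y = - kil ν x (D y) := by
  have h : ∀ x, ((ν (D x) : V →L[ℝ] V) : V →ₗ[ℝ] V) = D * (ν x : V →ₗ[ℝ] V) - (ν x : V →ₗ[ℝ] V) * D := by
    intro x; ext y; simp [hD]
  rw [kil_apply, kil_apply, h, h, sub_mul, mul_sub, map_sub, map_sub]
  rw [mul_assoc D, LinearMap.trace_mul_comm ℝ D, mul_assoc, mul_assoc]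
  ring

def IsLieBr (ν : V →L[ℝ] V →L[ℝ] V) : Prop :=
  (∀ x y, ν x y = - ν y x) ∧ (∀ x y z, ν x (ν y z) = ν (ν x y) z + ν y (ν x z))

/-- Whitehead: second cohomology with adjoint coefficients vanishes, equivariantly. -/
lemma h2_vanish (ν : V →L[ℝ] V →L[ℝ] V) (hν : IsLieBr ν) (hB : (kil ν).Nondegenerate)
    (D : V →L[ℝ] V) (hD : ∀ x y, D (ν x y) = ν (D x) y + ν x (D y))
    (f : V →L[ℝ] V →L[ℝ] V) (hf : ∀ x y, f x y = - f y x)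
    (hDf : ∀ x y, D (f x y) = f (D x) y + f x (D y))
    (hc : ∀ x y z, ν x (f y z) + ν y (f z x) + ν z (f x y) + f x (ν y z) + f y (ν z x)
      + f z (ν x y) = 0) :
    ∃ A : V →L[ℝ] V, A * D = D * A ∧ dact A ν = f := by
  classical
  obtain ⟨hs, hj⟩ := hν
  let b := Module.finBasis ℝ V
  let b' := (kil ν).dualBasis hB b
  have hsym : (kil ν).IsSymm := ⟨fun x y => by simpa using kil_symm ν x y⟩
  have e1 : ∀ x, x = ∑ i, kil ν x (b i) • b' i := fun x => by
    conv_lhs => rw [← b'.sum_repr x]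
    simp [b', LinearMap.BilinForm.dualBasis_repr_apply]
  have e2 : ∀ x, x = ∑ i, kil ν (b' i) x • b i := fun x => by
    conv_lhs => rw [← b.sum_repr x]
    refine Finset.sum_congr rfl fun i _ => ?_
    congr 1
    conv_rhs => rw [← b.sum_repr x]
    simp only [b', map_sum, map_smul, LinearMap.BilinForm.apply_dualBasis_left]
    simp
  have inv : ∀ (T : V →ₗ[ℝ] V) (_ : ∀ x y, T (ν x y) = ν (T x) y + ν x (T y))
      (β : V →ₗ[ℝ] V →ₗ[ℝ] V), ∑ i, β (T (b' i)) (b i) = ∑ i, β (b' i) (- T (b i)) := by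
    intro T hT β
    exact sum_dual b' b (fun x y => kil ν x y) e1 e2 T (fun x => - T x)
      (fun x y => by simp [kil_der ν T hT]) β
  have had : ∀ z x y, (ν z : V →ₗ[ℝ] V) (ν x y) = ν ((ν z : V →ₗ[ℝ] V) x) y + ν x ((ν z : V →ₗ[ℝ] V) y) := by
    intro z x y; simp [hj z x y]
  -- Casimir
  have cas : ∀ x, ∑ i, ν (b' i) (ν (b i) x) = x := by
    intro x
    have key : ∀ y, kil ν (∑ i, ν (b' i) (ν (b i) x)) y = kil ν x y := by
      intro y
      have t : kil ν y x = ∑ i, kil ν (b' i) (ν y (ν x (b i))) := by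
        rw [kil_apply, LinearMap.trace_eq_matrix_trace ℝ b, Matrix.trace]
        refine Finset.sum_congr rfl fun i _ => ?_
        rw [Matrix.diag_apply, LinearMap.toMatrix_apply]
        have := e2 (ν y (ν x (b i)))
        simp only [Module.End.mul_apply, ContinuousLinearMap.coe_coe]
        conv_lhs => rw [this]
        simp [Finsupp.single_apply]
      rw [kil_symm ν x y, t, map_sum, LinearMap.sum_apply]
      refine Finset.sum_congr rfl fun i _ => ?_
      have a1 := kil_der ν (ν (b' i) : V →ₗ[ℝ] V) (had _) (ν (b i) x) y
      have a3 := kil_der ν (ν y : V →ₗ[ℝ] V) (had _) (b' i) (ν x (b i))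
      simp only [ContinuousLinearMap.coe_coe] at a1 a3
      rw [a1, kil_symm, hs (b' i) y, hs (b i) x]
      simp only [map_neg, LinearMap.neg_apply, neg_neg]
      rw [a3, neg_neg]
    have := e1 (∑ i, ν (b' i) (ν (b i) x))
    simp_rw [key] at this
    rw [this]; exact (e1 x).symm
  let A : V →L[ℝ] V := -∑ i, (ν (b' i)) ∘L (f (b i))
  have hA : ∀ x, A x = -∑ i, ν (b' i) (f (b i) x) := fun x => by simp [A]
  let β : V → V →ₗ[ℝ] V →ₗ[ℝ] V := fun z => LinearMap.mk₂ ℝ (fun u v => ν u (f v z))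
    (by intros; simp) (by intros; simp) (by intros; simp) (by intros; simp)
  have hβ : ∀ z u v, β z u v = ν u (f v z) := fun z u v => rfl
  refine ⟨A, ?_, ?_⟩
  · ext x
    have h1 := inv (D : V →ₗ[ℝ] V) hD (β x)
    simp only [hβ, ContinuousLinearMap.coe_coe, map_neg, ContinuousLinearMap.neg_apply,
      Finset.sum_neg_distrib] at h1
    simp only [ContinuousLinearMap.mul_apply, hA, map_neg, map_sum, hD, hDf, map_add,
      Finset.sum_add_distrib, h1]
    abel
  · ext y z
    have h1 := inv (ν y : V →ₗ[ℝ] V) (had y) (β z)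
    have h2 := inv (ν z : V →ₗ[ℝ] V) (had z) (β y)
    simp only [hβ, ContinuousLinearMap.coe_coe, map_neg, ContinuousLinearMap.neg_apply,
      Finset.sum_neg_distrib] at h1 h2
    have h3 : ∑ i, ν (b' i) (ν (b i) (f y z) + ν y (f z (b i)) + ν z (f (b i) y)
      + f (b i) (ν y z) + f y (ν z (b i)) + f z (ν (b i) y)) = 0 := by
      simp [hc]
    have c1 : ∀ i, ν (b' i) (ν y (f z (b i))) = ν (ν y (b' i)) (f (b i) z)
        - ν y (ν (b' i) (f (b i) z)) := fun i => by
      rw [hj y, hf z]; simp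
    have c2 : ∀ i, ν (b' i) (ν z (f (b i) y)) = - ν (ν z (b' i)) (f (b i) y)
        + ν z (ν (b' i) (f (b i) y)) := fun i => by
      rw [hj z]; simp
    have c3 : ∀ i, ν (b' i) (f y (ν z (b i))) = - ν (b' i) (f (ν z (b i)) y) := fun i => by
      rw [hf]; simp
    have c4 : ∀ i, ν (b' i) (f z (ν (b i) y)) = ν (b' i) (f (ν y (b i)) z) := fun i => by
      rw [hf, hs (b i)]; simp
    simp only [map_add, c1, c2, c3, c4, Finset.sum_add_distrib, Finset.sum_sub_distrib,
      Finset.sum_neg_distrib, cas, h1, h2] at h3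
    rw [dact_apply, hs (A y) z, hA, hA, hA]
    simp only [map_neg, map_sum]
    rw [← sub_eq_zero, ← neg_eq_zero, ← h3]
    abel

end CartanInv

section CartanInv2

set_option linter.unusedSectionVars false

variable {V : Type*} [NormedAddCommGroup V] [InnerProductSpace ℝ V] [FiniteDimensional ℝ V]

lemma strict_exp_neg {R : Type*} [NormedRing R] [NormedAlgebra ℝ R] [CompleteSpace R] :
    HasStrictFDerivAt (fun A : R => NormedSpace.exp (-A)) (-(1 : R →L[ℝ] R)) 0 := by
  have he : HasStrictFDerivAt (fun A : R => NormedSpace.exp A) (1 : R →L[ℝ] R) (-0) := by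
    rw [neg_zero]; exact hasStrictFDerivAt_exp_zero
  have h1 : HasStrictFDerivAt (fun A : R => -A) (-(1 : R →L[ℝ] R)) 0 :=
    (hasStrictFDerivAt_id (0 : R)).neg
  exact he.comp (0 : R) h1

lemma clm_post {E F P : Type*} [NormedAddCommGroup P] [NormedSpace ℝ P] [NormedAddCommGroup E]
    [NormedSpace ℝ E] [NormedAddCommGroup F] [NormedSpace ℝ F] (L : E →L[ℝ] F) {f : P → E}
    {f' : P →L[ℝ] E} {x : P} (h : HasStrictFDerivAt f f' x) :
    HasStrictFDerivAt (fun p => L (f p)) (L ∘L f') x :=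
  L.hasStrictFDerivAt.comp x h

lemma strict_gact_aux {P : Type*} [NormedAddCommGroup P] [NormedSpace ℝ P]
    (a : P →L[ℝ] (V →L[ℝ] V)) (c : P →L[ℝ] (V →L[ℝ] V →L[ℝ] V)) (x0 : P) (h0 : a x0 = 0) :
    ∃ Φ' : P →L[ℝ] (V →L[ℝ] V →L[ℝ] V),
      HasStrictFDerivAt (fun p : P =>
        gact (NormedSpace.exp (a p)) (NormedSpace.exp (-(a p))) (c p)) Φ' x0 ∧
      ∀ p, Φ' p = dact (a p) (c x0) + c p := by
  have he : HasStrictFDerivAt (fun A : V →L[ℝ] V => NormedSpace.exp A)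
      (1 : (V →L[ℝ] V) →L[ℝ] (V →L[ℝ] V)) (a x0) := by
    rw [h0]; exact hasStrictFDerivAt_exp_zero
  have he' : HasStrictFDerivAt (fun A : V →L[ℝ] V => NormedSpace.exp (-A))
        (-(1 : (V →L[ℝ] V) →L[ℝ] (V →L[ℝ] V))) (a x0) := by rw [h0]; exact strict_exp_neg
  have h1 := he.comp x0 a.hasStrictFDerivAt
  have h2 := he'.comp x0 a.hasStrictFDerivAt
  have h3 := c.hasStrictFDerivAt (x := x0)
  have k1 := clm_post (E := V →L[ℝ] V) (F := (V →L[ℝ] V) →L[ℝ] (V →L[ℝ] V)) (ContinuousLinearMap.compL ℝ V V V) h1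
  have k2 := clm_post (E := V →L[ℝ] V) (F := (V →L[ℝ] V) →L[ℝ] (V →L[ℝ] V)) (ContinuousLinearMap.compL ℝ V V V).flip h2
  have k := k1.clm_comp (k2.clm_comp (h3.clm_comp h2))
  refine ⟨_, k, ?_⟩
  intro p
  ext x y
  simp [h0]
  abel

theorem strict_gact (ν : V →L[ℝ] V →L[ℝ] V) :
    ∃ Φ' : (V →L[ℝ] V) × (V →L[ℝ] V →L[ℝ] V) →L[ℝ] (V →L[ℝ] V →L[ℝ] V),
      HasStrictFDerivAt (fun p : (V →L[ℝ] V) × (V →L[ℝ] V →L[ℝ] V) =>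
        gact (NormedSpace.exp p.1) (NormedSpace.exp (-p.1)) p.2) Φ' (0, ν) ∧
      ∀ p, Φ' p = dact p.1 ν + p.2 :=
  strict_gact_aux (P := (V →L[ℝ] V) × (V →L[ℝ] V →L[ℝ] V)) (ContinuousLinearMap.fst ℝ (V →L[ℝ] V) (V →L[ℝ] V →L[ℝ] V))
    (ContinuousLinearMap.snd ℝ (V →L[ℝ] V) (V →L[ℝ] V →L[ℝ] V)) (0, ν) rfl

lemma exp_mul_exp_neg (A : V →L[ℝ] V) : NormedSpace.exp A * NormedSpace.exp (-A) = 1 := by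
  let _ := NormedAlgebra.restrictScalars ℚ ℝ (V →L[ℝ] V)
  rw [← NormedSpace.exp_add_of_commute (Commute.refl A).neg_right]; simp

lemma exp_neg_mul_exp (A : V →L[ℝ] V) : NormedSpace.exp (-A) * NormedSpace.exp A = 1 := by
  simpa using exp_mul_exp_neg (-A)

lemma mul_eq_one_apply {g g' : V →L[ℝ] V} (h : g * g' = 1) (x : V) : g (g' x) = x := by
  have := congrArg (fun T : V →L[ℝ] V => T x) h
  simpa using this

lemma commute_apply {g D : V →L[ℝ] V} (h : g * D = D * g) (x : V) : g (D x) = D (g x) := by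
  have := congrArg (fun T : V →L[ℝ] V => T x) h
  simpa using this

lemma comm_inv {g g' D : V →L[ℝ] V} (h1 : g * g' = 1) (h2 : g' * g = 1) (h : g * D = D * g) :
    g' * D = D * g' := by
  calc g' * D = g' * (D * g) * g' := by rw [mul_assoc g', mul_assoc D, h1, mul_one]
    _ = D * g' := by rw [← h, ← mul_assoc g', h2, one_mul]

lemma gact_gact (g g' k k' : V →L[ℝ] V) (ν : V →L[ℝ] V →L[ℝ] V) :
    gact g g' (gact k k' ν) = gact (g * k) (k' * g') ν := by
  ext x y; simp

lemma gact_one (ν : V →L[ℝ] V →L[ℝ] V) : gact 1 1 ν = ν := by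
  ext x y; simp

lemma gact_der {g g' D : V →L[ℝ] V} (h1 : g * g' = 1) (h2 : g' * g = 1) (h : g * D = D * g)
    {ν : V →L[ℝ] V →L[ℝ] V} (hD : ∀ x y, D (ν x y) = ν (D x) y + ν x (D y)) (x y : V) :
    D (gact g g' ν x y) = gact g g' ν (D x) y + gact g g' ν x (D y) := by
  have h' := comm_inv h1 h2 h
  simp [← commute_apply h, commute_apply h', hD]

lemma gact_lie {g g' : V →L[ℝ] V} (h2 : g' * g = 1)
    {ν : V →L[ℝ] V →L[ℝ] V} (hν : IsLieBr ν) : IsLieBr (gact g g' ν) := by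
  refine ⟨fun x y => ?_, fun x y z => ?_⟩
  · rw [gact_apply, hν.1]; simp
  · simp only [gact_apply, mul_eq_one_apply h2]
    rw [hν.2, map_add]

lemma lin_ext {U : Type*} [AddCommGroup U] [Module ℝ U] {ι : Type*} [Fintype ι]
    (b : Module.Basis ι ℝ V) (f : V → U)
    (ha : ∀ x y, f (x + y) = f x + f y) (hs : ∀ (r : ℝ) x, f (r • x) = r • f x)
    (h : ∀ i, f (b i) = 0) (x : V) : f x = 0 := by
  let F : V →ₗ[ℝ] U := ⟨⟨f, ha⟩, hs⟩
  have : F = 0 := b.ext fun i => h i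
  exact congrArg (fun T : V →ₗ[ℝ] U => T x) this

lemma antilip {E F : Type*} [NormedAddCommGroup E] [NormedSpace ℝ E] [FiniteDimensional ℝ E]
    [NormedAddCommGroup F] [NormedSpace ℝ F] (d : E →ₗ[ℝ] F) (C : Submodule ℝ E)
    (h : ∀ c ∈ C, d c = 0 → c = 0) : ∃ K : ℝ, 0 < K ∧ ∀ c ∈ C, ‖c‖ ≤ K * ‖d c‖ := by
  have hinj : LinearMap.ker (d ∘ₗ C.subtype) = ⊥ := by
    rw [LinearMap.ker_eq_bot']
    rintro ⟨c, hc⟩ h1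
    have := h c hc h1
    simpa using this
  obtain ⟨K, hK, hKl⟩ := LinearMap.exists_antilipschitzWith _ hinj
  refine ⟨K, hK, fun c hc => ?_⟩
  have h5 := hKl.le_mul_dist ⟨c, hc⟩ 0
  simp only [dist_zero_right, map_zero] at h5
  exact h5

open Filter Topology in
lemma ift_abs {P W : Type*} [NormedAddCommGroup P] [NormedSpace ℝ P] [FiniteDimensional ℝ P]
    [NormedAddCommGroup W] [NormedSpace ℝ W] [FiniteDimensional ℝ W]
    (Φ : P × W → W) (Φ' : P × W →L[ℝ] W) (ν : W) (hΦ : HasStrictFDerivAt Φ Φ' (0, ν))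
    (WD C : Submodule ℝ W) (ED : Submodule ℝ P) (hνW : ν ∈ WD) (h0 : Φ (0, ν) = ν)
    (hmem : ∀ A ∈ ED, ∀ c ∈ C, Φ (A, c + ν) ∈ WD)
    (hs : ∀ w ∈ WD, ∃ A ∈ ED, ∃ c ∈ C, Φ' (A, c) = w) (K : ℝ) :
    ∀ᶠ μ in 𝓝 ν, μ ∈ WD → ∃ A ∈ ED, ∃ c ∈ C, K * ‖c‖ < 1 ∧ Φ (A, c + ν) = μ := by
  have hcW : CompleteSpace W := FiniteDimensional.complete ℝ W
  have hcP : CompleteSpace P := FiniteDimensional.complete ℝ P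
  have c1 : CompleteSpace WD := FiniteDimensional.complete ℝ WD
  have c2 : CompleteSpace C := FiniteDimensional.complete ℝ C
  have c3 : CompleteSpace ED := FiniteDimensional.complete ℝ ED
  obtain ⟨π, hπ⟩ := LinearMap.exists_leftInverse_of_injective WD.subtype WD.ker_subtype
  have hπ' : ∀ w : WD, π (w : W) = w := fun w =>
    congrArg (fun T : WD →ₗ[ℝ] WD => T w) hπ
  let ι : ED × C →L[ℝ] P × W := ContinuousLinearMap.prodMap ED.subtypeL C.subtypeL
  have hι : HasStrictFDerivAt (fun p : ED × C => ι p + (0, ν)) ι 0 :=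
    ι.hasStrictFDerivAt.add_const (c := (0, ν))
  let Ψ : ED × C → WD := fun p => π (Φ (p.1, p.2 + ν))
  have hΨ : HasStrictFDerivAt Ψ ((LinearMap.toContinuousLinearMap π) ∘L (Φ' ∘L ι)) 0 := by
    have h1 := HasStrictFDerivAt.comp (g := Φ) (0 : ED × C) (by simpa using hΦ) hι
    have h2 := (LinearMap.toContinuousLinearMap π).hasStrictFDerivAt.comp (0 : ED × C) h1
    refine h2.congr_of_eventuallyEq (Eventually.of_forall fun p => ?_)
    change π (Φ ((p.1 : P) + 0, (p.2 : W) + ν)) = π (Φ (p.1, p.2 + ν))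
    rw [add_zero]
  have hsurj : (((LinearMap.toContinuousLinearMap π) ∘L (Φ' ∘L ι) : ED × C →L[ℝ] WD) :
      ED × C →ₗ[ℝ] WD).range = ⊤ := by
    rw [LinearMap.range_eq_top]
    rintro ⟨w, hw⟩
    obtain ⟨A, hA, c, hc, e⟩ := hs w hw
    refine ⟨(⟨A, hA⟩, ⟨c, hc⟩), ?_⟩
    have := hπ' ⟨w, hw⟩
    simpa [e, ι] using this
  have hmap := hΨ.map_nhds_eq_of_surj hsurj
  have hΨ0 : Ψ 0 = ⟨ν, hνW⟩ := by
    have := hπ' ⟨ν, hνW⟩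
    simpa [Ψ, h0] using this
  rw [hΨ0] at hmap
  have hsmall : ∀ᶠ p in 𝓝 (0 : ED × C), K * ‖(p.2 : W)‖ < 1 := by
    have : ContinuousAt (fun p : ED × C => K * ‖(p.2 : W)‖) 0 := by
      fun_prop
    exact this.eventually_lt continuousAt_const (by simp)
  have hev : ∀ᶠ w in 𝓝 (⟨ν, hνW⟩ : WD), ∃ p : ED × C,
      K * ‖(p.2 : W)‖ < 1 ∧ Ψ p = w := by
    rw [← hmap, eventually_map]
    filter_upwards [hsmall] with p hp using ⟨p, hp, rfl⟩
  rw [nhds_subtype_eq_comap, eventually_comap] at hev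
  filter_upwards [hev] with μ hμ hμW
  obtain ⟨⟨⟨A, hA⟩, ⟨c, hc⟩⟩, hp, hΨp⟩ := hμ ⟨μ, hμW⟩ rfl
  refine ⟨A, hA, c, hc, hp, ?_⟩
  have h4 := hΨp.symm.trans (hπ' ⟨_, hmem A hA c hc⟩)
  exact (congrArg Subtype.val h4).symm

set_option maxHeartbeats 2000000 in
open Filter Topology in
theorem rigid (ν : V →L[ℝ] V →L[ℝ] V) (hν : IsLieBr ν) (hB : (kil ν).Nondegenerate)
    (D : V →L[ℝ] V) (hD : ∀ x y, D (ν x y) = ν (D x) y + ν x (D y)) :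
    ∀ᶠ μ in 𝓝 ν, IsLieBr μ → (∀ x y, D (μ x y) = μ (D x) y + μ x (D y)) →
      ∃ g g' : V →L[ℝ] V, g * g' = 1 ∧ g' * g = 1 ∧ g * D = D * g ∧ μ = gact g g' ν := by
  let b := stdOrthonormalBasis ℝ V
  let n := Module.finrank ℝ V
  -- invariant alternating maps
  obtain ⟨WD, hWD⟩ : ∃ WD : Submodule ℝ (V →L[ℝ] V →L[ℝ] V), ∀ c, c ∈ WD ↔
      (∀ x y, c x y = - c y x) ∧ ∀ x y, D (c x y) = c (D x) y + c x (D y) := ⟨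
    { carrier := {c | (∀ x y, c x y = - c y x) ∧ ∀ x y, D (c x y) = c (D x) y + c x (D y)}
      zero_mem' := by simp
      add_mem' := by
        rintro a c ⟨h1, h2⟩ ⟨h3, h4⟩
        refine ⟨fun x y => ?_, fun x y => ?_⟩
        · simp only [add_apply]; rw [h1, h3]; abel
        · simp only [add_apply, map_add, h2, h4]; abel
      smul_mem' := by
        rintro r c ⟨h1, h2⟩
        refine ⟨fun x y => ?_, fun x y => ?_⟩
        · simp only [smul_apply]; rw [h1]; simp
        · simp [h2] }, fun c => Iff.rfl⟩
  obtain ⟨d2, d2a⟩ : ∃ d2 : (V →L[ℝ] V →L[ℝ] V) →ₗ[ℝ] (Fin n → Fin n → Fin n → V),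
      ∀ f i j k, d2 f i j k = ν (b i) (f (b j) (b k)) + ν (b j) (f (b k) (b i))
        + ν (b k) (f (b i) (b j)) + f (b i) (ν (b j) (b k)) + f (b j) (ν (b k) (b i))
        + f (b k) (ν (b i) (b j)) := ⟨
    { toFun := fun f i j k => ν (b i) (f (b j) (b k)) + ν (b j) (f (b k) (b i))
        + ν (b k) (f (b i) (b j)) + f (b i) (ν (b j) (b k)) + f (b j) (ν (b k) (b i))
        + f (b k) (ν (b i) (b j))
      map_add' := fun f g => by
        funext i j k
        simp only [Pi.add_apply, add_apply, map_add]; abel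
      map_smul' := fun r f => by
        funext i j k
        simp }, fun _ _ _ _ => rfl⟩
  have hd2 : ∀ f, d2 f = 0 → ∀ x y z, ν x (f y z) + ν y (f z x) + ν z (f x y) + f x (ν y z)
      + f y (ν z x) + f z (ν x y) = 0 := by
    intro f hf x y z
    have hijk : ∀ i j k, _ := fun i j k => congrFun (congrFun (congrFun hf i) j) k
    refine lin_ext b.toBasis (fun x => ν x (f y z) + ν y (f z x) + ν z (f x y) + f x (ν y z)
      + f y (ν z x) + f z (ν x y)) (fun _ _ => ?_) (fun _ _ => ?_) (fun i => ?_) x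
    · simp; abel
    · simp
    refine lin_ext b.toBasis (fun y => ν (b.toBasis i) (f y z) + ν y (f z (b.toBasis i)) + ν z (f (b.toBasis i) y) + f (b.toBasis i) (ν y z)
      + f y (ν z (b.toBasis i)) + f z (ν (b.toBasis i) y)) (fun _ _ => ?_) (fun _ _ => ?_) (fun j => ?_) y
    · simp; abel
    · simp
    refine lin_ext b.toBasis (fun z => ν (b.toBasis i) (f (b.toBasis j) z) + ν (b.toBasis j) (f z (b.toBasis i)) + ν z (f (b.toBasis i) (b.toBasis j)) + f (b.toBasis i) (ν (b.toBasis j) z)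
      + f (b.toBasis j) (ν z (b.toBasis i)) + f z (ν (b.toBasis i) (b.toBasis j))) (fun _ _ => ?_) (fun _ _ => ?_) (fun k => ?_) z
    · simp; abel
    · simp
    have := hijk i j k
    rw [d2a] at this
    simpa using this
  obtain ⟨C0, hC0⟩ := Submodule.exists_isCompl (LinearMap.ker d2 ⊓ WD)
  obtain ⟨C, hC⟩ : ∃ C : Submodule ℝ (V →L[ℝ] V →L[ℝ] V), ∀ c, c ∈ C ↔ c ∈ C0 ∧ c ∈ WD :=
    ⟨C0 ⊓ WD, fun c => Submodule.mem_inf⟩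
  obtain ⟨ED, hED⟩ : ∃ ED : Submodule ℝ (V →L[ℝ] V), ∀ A, A ∈ ED ↔ A * D = D * A := ⟨
    { carrier := {A | A * D = D * A}
      zero_mem' := by simp
      add_mem' := fun {a c} h1 h2 => by
        simp only [Set.mem_ofPred_eq] at *; rw [add_mul, mul_add, h1, h2]
      smul_mem' := fun r c h => by
        simp only [Set.mem_ofPred_eq] at *; simp [h] }, fun _ => Iff.rfl⟩
  -- antilipschitz
  obtain ⟨K, hK, hKl⟩ := antilip (E := V →L[ℝ] V →L[ℝ] V) (F := Fin n → Fin n → Fin n → V) d2 C (fun c hc h => by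
    have hk : c ∈ LinearMap.ker d2 := LinearMap.mem_ker.2 h
    have : c ∈ (LinearMap.ker d2 ⊓ WD) ⊓ C0 :=
      Submodule.mem_inf.2 ⟨Submodule.mem_inf.2 ⟨hk, ((hC c).1 hc).2⟩, ((hC c).1 hc).1⟩
    rw [hC0.inf_eq_bot] at this
    simpa using this)
  obtain ⟨Φ', hΦ, hΦ'⟩ := strict_gact ν
  have hνW : ν ∈ WD := (hWD ν).2 ⟨hν.1, hD⟩
  have hexp : ∀ A ∈ ED, NormedSpace.exp A * D = D * NormedSpace.exp A := fun A hA =>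
    (Commute.exp_left (show Commute A D from (hED A).1 hA)).eq
  have hev := ift_abs _ Φ' ν hΦ WD C ED hνW (by simp [gact_one]) (by
      intro A hA c hc
      have hcn : c + ν ∈ WD := WD.add_mem ((hC c).1 hc).2 hνW
      have hcn' := (hWD _).1 hcn
      refine (hWD _).2 ⟨fun x y => ?_, gact_der (exp_mul_exp_neg A) (exp_neg_mul_exp A)
        (hexp A hA) hcn'.2⟩
      rw [gact_apply, hcn'.1]; simp) (by
    intro w hw
    have : w ∈ (LinearMap.ker d2 ⊓ WD) ⊔ C0 := by rw [hC0.sup_eq_top]; trivial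
    obtain ⟨z, hz, c, hc, rfl⟩ := Submodule.mem_sup.mp this
    obtain ⟨hzk, hzW⟩ := Submodule.mem_inf.1 hz
    have hcW : c ∈ WD := by simpa using WD.sub_mem hw hzW
    have hcC : c ∈ C := (hC c).2 ⟨hc, hcW⟩
    obtain ⟨A, hA1, hA2⟩ := h2_vanish ν hν hB D hD z ((hWD z).1 hzW).1 ((hWD z).1 hzW).2
      (hd2 z (LinearMap.mem_ker.1 hzk))
    refine ⟨A, (hED A).2 hA1, c, hcC, ?_⟩
    rw [hΦ', hA2]) (3 * K)
  filter_upwards [hev] with μ hμ hl hDμ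
  obtain ⟨A, hA, c, hc, hp, hμ'⟩ := hμ ((hWD μ).2 ⟨hl.1, hDμ⟩)
  have hexpD := hexp A hA
  replace hμ' := hμ'.symm
  have hlc : IsLieBr (c + ν) := by
    have : c + ν = gact (NormedSpace.exp (-A)) (NormedSpace.exp A) μ := by
      rw [hμ', gact_gact, exp_neg_mul_exp, gact_one]
    rw [this]
    exact gact_lie (exp_mul_exp_neg A) hl
  have hc0 : c = 0 := by
    by_contra hne
    have hpos : 0 < ‖c‖ := (norm_pos_iff (a := c)).mpr hne
    have jac : ∀ {τ : V →L[ℝ] V →L[ℝ] V}, IsLieBr τ → ∀ x y z,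
        τ x (τ y z) + τ y (τ z x) + τ z (τ x y) = 0 := by
      intro τ hτ x y z
      rw [hτ.2 x y z, hτ.1 z (τ x y), hτ.1 z x]; simp
    have hd : ∀ i j k, d2 c i j k = -(c (b i) (c (b j) (b k)) + c (b j) (c (b k) (b i))
        + c (b k) (c (b i) (b j))) := by
      intro i j k
      have j1 := jac hlc (b i) (b j) (b k)
      have j2 := jac hν (b i) (b j) (b k)
      simp only [add_apply, map_add] at j1
      rw [eq_neg_iff_add_eq_zero, ← sub_eq_zero.mpr (j1.trans j2.symm)]
      rw [d2a]
      abel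
    have hb : ∀ i, ‖b i‖ = 1 := fun i => b.norm_eq_one i
    have hcc : ∀ i j k, ‖c (b i) (c (b j) (b k))‖ ≤ ‖c‖ * ‖c‖ := by
      intro i j k
      have h1 := c.le_opNorm₂ (b i) (c (b j) (b k))
      have h2 := c.le_opNorm₂ (b j) (b k)
      simp only [hb, mul_one] at h1 h2
      exact h1.trans (mul_le_mul_of_nonneg_left h2 hpos.le)
    have hn : ‖d2 c‖ ≤ 3 * (‖c‖ * ‖c‖) := by
      refine (pi_norm_le_iff_of_nonneg (by positivity)).mpr fun i =>
        (pi_norm_le_iff_of_nonneg (by positivity)).mpr fun j =>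
        (pi_norm_le_iff_of_nonneg (by positivity)).mpr fun k => ?_
      rw [hd, norm_neg]
      refine (norm_add₃_le).trans ?_
      linarith [hcc i j k, hcc j k i, hcc k i j]
    have h6 : ‖c‖ ≤ K * ‖d2 c‖ := hKl c hc
    have hK0 : (0 : ℝ) < K := hK
    have h7 : ‖c‖ ≤ (3 * K * ‖c‖) * ‖c‖ := h6.trans (by nlinarith [mul_le_mul_of_nonneg_left hn hK0.le])
    have hp' : 3 * K * ‖c‖ < 1 := hp
    nlinarith
  refine ⟨NormedSpace.exp A, NormedSpace.exp (-A), exp_mul_exp_neg A, exp_neg_mul_exp A, hexpD, ?_⟩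
  rw [hμ', hc0, zero_add]

end CartanInv2

open scoped InnerProductSpace Topology
section CartanInv3

set_option linter.unusedSectionVars false

variable {V : Type*} [NormedAddCommGroup V] [InnerProductSpace ℝ V] [FiniteDimensional ℝ V]

noncomputable abbrev ob (V : Type*) [NormedAddCommGroup V] [InnerProductSpace ℝ V]
    [FiniteDimensional ℝ V] : OrthonormalBasis (Fin (Module.finrank ℝ V)) ℝ V :=
  stdOrthonormalBasis ℝ V

lemma ob_sum (x : V) : x = ∑ i, ⟪x, ob V i⟫_ℝ • ob V i := by
  conv_lhs => rw [← (ob V).sum_repr' x]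
  simp [real_inner_comm]

lemma ob_sum' (x : V) : x = ∑ i, ⟪ob V i, x⟫_ℝ • ob V i := by
  conv_lhs => rw [← (ob V).sum_repr' x]

noncomputable def hsEmb : (V →L[ℝ] V →L[ℝ] V) →ₗ[ℝ]
    PiLp 2 (fun _ : Fin (Module.finrank ℝ V) × Fin (Module.finrank ℝ V) => V) where
  toFun ν := WithLp.toLp 2 (fun p => ν (ob V p.1) (ob V p.2))
  map_add' := by intros; ext; simp
  map_smul' := by intros; ext; simp

lemma hsEmb_inj : Function.Injective (hsEmb (V := V)) := by
  intro ν ν' h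
  have h1 : ∀ i j, ν (ob V i) (ob V j) = ν' (ob V i) (ob V j) := fun i j => by
    have := congrArg (fun z : PiLp 2 (fun _ : Fin (Module.finrank ℝ V) × Fin (Module.finrank ℝ V) => V) => z (i, j)) h
    simpa [hsEmb] using this
  ext x y
  rw [ob_sum x, ob_sum y]
  simp only [map_sum, map_smul, sum_apply, smul_apply, h1]

noncomputable def hs (ν ν' : V →L[ℝ] V →L[ℝ] V) : ℝ := ⟪hsEmb ν, hsEmb ν'⟫_ℝ

lemma hs_eq (ν ν' : V →L[ℝ] V →L[ℝ] V) :
    hs ν ν' = ∑ i, ∑ j, ⟪ν (ob V i) (ob V j), ν' (ob V i) (ob V j)⟫_ℝ := by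
  rw [hs, PiLp.inner_apply, Fintype.sum_prod_type]; rfl

lemma hs_self {ν : V →L[ℝ] V →L[ℝ] V} (h : hs ν ν = 0) : ν = 0 := by
  apply hsEmb_inj
  rw [map_zero]; exact inner_self_eq_zero.1 h

noncomputable def hsB1 (ν ν' : V →L[ℝ] V →L[ℝ] V) : V →ₗ[ℝ] V →ₗ[ℝ] ℝ :=
  LinearMap.mk₂ ℝ (fun x y => ∑ j, ⟪ν x (ob V j), ν' y (ob V j)⟫_ℝ)
    (by intros; simp [inner_add_left, Finset.sum_add_distrib])
    (by intros; simp [inner_smul_left, Finset.mul_sum])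
    (by intros; simp [inner_add_right, Finset.sum_add_distrib])
    (by intros; simp [inner_smul_right, Finset.mul_sum])

noncomputable def hsB2 (ν ν' : V →L[ℝ] V →L[ℝ] V) : V →ₗ[ℝ] V →ₗ[ℝ] ℝ :=
  LinearMap.mk₂ ℝ (fun x y => ∑ j, ⟪ν (ob V j) x, ν' (ob V j) y⟫_ℝ)
    (by intros; simp [inner_add_left, Finset.sum_add_distrib])
    (by intros; simp [inner_smul_left, Finset.mul_sum])
    (by intros; simp [inner_add_right, Finset.sum_add_distrib])
    (by intros; simp [inner_smul_right, Finset.mul_sum])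

lemma hs_dact (A : V →L[ℝ] V) (ν ν' : V →L[ℝ] V →L[ℝ] V) :
    hs (dact A ν) ν' = hs ν (dact (ContinuousLinearMap.adjoint A) ν') := by
  have k1 := sum_dual (ob V) (ob V) (fun x y => ⟪x, y⟫_ℝ) ob_sum ob_sum' A
    (ContinuousLinearMap.adjoint A) (fun x y => (ContinuousLinearMap.adjoint_inner_right A x y).symm)
    (hsB1 ν ν')
  have k2 := sum_dual (ob V) (ob V) (fun x y => ⟪x, y⟫_ℝ) ob_sum ob_sum' A
    (ContinuousLinearMap.adjoint A) (fun x y => (ContinuousLinearMap.adjoint_inner_right A x y).symm)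
    (hsB2 ν ν')
  simp only [hsB1, hsB2, LinearMap.mk₂_apply] at k1 k2
  have k2' := Finset.sum_comm.trans (k2.trans Finset.sum_comm)
  simp only [hs_eq, dact_apply, inner_sub_left, inner_sub_right, Finset.sum_sub_distrib,
    ContinuousLinearMap.adjoint_inner_right, k1, k2']

lemma hs_symm (ν ν' : V →L[ℝ] V →L[ℝ] V) : hs ν ν' = hs ν' ν := real_inner_comm _ _

lemma dact_mul (P Q : V →L[ℝ] V) (ν : V →L[ℝ] V →L[ℝ] V) :
    dact P (dact Q ν) = dact (P * Q - Q * P) ν + dact Q (dact P ν) := by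
  ext x y
  simp
  abel

lemma dact_zero_iff (P : V →L[ℝ] V) (ν : V →L[ℝ] V →L[ℝ] V) :
    dact P ν = 0 ↔ ∀ x y, P (ν x y) = ν (P x) y + ν x (P y) := by
  constructor
  · intro h x y
    have : dact P ν x y = 0 := by rw [h]; rfl
    rw [dact_apply, sub_sub, sub_eq_zero] at this
    exact this
  · intro h; ext x y; simp [h]

noncomputable def ctr (A : V →L[ℝ] V) : ℝ := LinearMap.trace ℝ V (A : V →ₗ[ℝ] V)

lemma ctr_eq (A : V →L[ℝ] V) : ctr A = ∑ i, ⟪ob V i, A (ob V i)⟫_ℝ :=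
  LinearMap.trace_eq_sum_inner _ (ob V)

lemma ctr_mul_comm (A B : V →L[ℝ] V) : ctr (A * B) = ctr (B * A) := by
  exact LinearMap.trace_mul_comm ℝ (A : V →ₗ[ℝ] V) (B : V →ₗ[ℝ] V)

lemma ctr_sub (A B : V →L[ℝ] V) : ctr (A - B) = ctr A - ctr B := by simp [ctr]
lemma ctr_smul (c : ℝ) (B : V →L[ℝ] V) : ctr (c • B) = c * ctr B := by simp [ctr]

lemma ctr_adj (A : V →L[ℝ] V) : ctr (ContinuousLinearMap.adjoint A) = ctr A := by
  rw [ctr_eq, ctr_eq]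
  refine Finset.sum_congr rfl fun i _ => ?_
  rw [ContinuousLinearMap.adjoint_inner_right, real_inner_comm]

lemma ctr_adj_mul (A : V →L[ℝ] V) :
    ctr (ContinuousLinearMap.adjoint A * A) = ∑ i, ‖A (ob V i)‖ ^ 2 := by
  rw [ctr_eq]
  refine Finset.sum_congr rfl fun i _ => ?_
  simp [ContinuousLinearMap.adjoint_inner_right]

lemma ctr_adj_mul_zero {A : V →L[ℝ] V} (h : ctr (ContinuousLinearMap.adjoint A * A) = 0) :
    A = 0 := by
  rw [ctr_adj_mul, Finset.sum_eq_zero_iff_of_nonneg (fun _ _ => by positivity)] at h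
  ext x
  rw [ob_sum x, map_sum]
  simp only [map_smul]
  have : ∀ i, A (ob V i) = 0 := fun i => by simpa using h i (Finset.mem_univ i)
  simp [this]

lemma ctr_adj_mul_pos {A : V →L[ℝ] V} (h : A ≠ 0) :
    0 < ctr (ContinuousLinearMap.adjoint A * A) := by
  refine lt_of_le_of_ne ?_ (fun h' => h (ctr_adj_mul_zero h'.symm))
  rw [ctr_adj_mul]; positivity

noncomputable def E1 (i j : Fin (Module.finrank ℝ V)) : V →L[ℝ] V :=
  (innerSL ℝ (ob V j)).smulRight (ob V i)

lemma exists_moment (φ : (V →L[ℝ] V) →ₗ[ℝ] ℝ) : ∃ m : V →L[ℝ] V, ∀ A, ctr (A * m) = φ A := by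
  refine ⟨∑ i, ∑ j, φ (E1 i j) • E1 j i, fun A => ?_⟩
  have hA : A = ∑ i, ∑ j, ⟪ob V i, A (ob V j)⟫_ℝ • E1 i j := by
    ext x
    conv_lhs => rw [ob_sum' x, map_sum]
    simp only [map_smul]
    simp only [sum_apply, smul_apply, E1, ContinuousLinearMap.smulRight_apply, innerSL_apply_apply]
    rw [Finset.sum_comm]
    refine Finset.sum_congr rfl fun j _ => ?_
    conv_lhs => rw [ob_sum' (A (ob V j))]
    rw [Finset.smul_sum]
    refine Finset.sum_congr rfl fun i _ => ?_
    rw [smul_comm]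
  have h2 : ∀ i j, ctr (A * E1 j i) = ⟪ob V i, A (ob V j)⟫_ℝ := fun i j => by
    rw [ctr_eq]
    simp only [E1, mul_apply_eq_comp, ContinuousLinearMap.smulRight_apply, innerSL_apply_apply,
      map_smul, inner_smul_right, orthonormal_iff_ite.1 (ob V).orthonormal]
    simp
  conv_rhs => rw [hA]
  have h3 : ∀ B : V →L[ℝ] V, ctr B = LinearMap.trace ℝ V (B : V →ₗ[ℝ] V) := fun _ => rfl
  rw [Finset.mul_sum]
  simp only [Finset.mul_sum, map_sum, map_smul, mul_smul_comm]
  rw [ctr]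
  simp only [ContinuousLinearMap.toLinearMap_sum, map_sum, ContinuousLinearMap.toLinearMap_smul, map_smul, ← h3, h2, smul_eq_mul]
  simp only [mul_comm]

end CartanInv3

open scoped InnerProductSpace Topology
section CartanInv4

set_option linter.unusedSectionVars false

variable {V : Type*} [NormedAddCommGroup V] [InnerProductSpace ℝ V] [FiniteDimensional ℝ V]

lemma exp_eig (A : V →L[ℝ] V) (c : ℝ) (v : V) (h : A v = c • v) :
    NormedSpace.exp A v = Real.exp c • v := by
  have hp : ∀ n : ℕ, (A ^ n) v = c ^ n • v := by
    intro n
    induction n with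
    | zero => simp
    | succ n ih => rw [pow_succ', mul_apply_eq_comp, ih, map_smul, h, smul_smul, pow_succ]
  have h1 := (NormedSpace.exp_series_hasSum_exp' (𝕂 := ℝ) A)
  have h2 := (ContinuousLinearMap.apply ℝ V v).hasSum h1
  have h3 := (NormedSpace.exp_series_hasSum_exp' (𝕂 := ℝ) c).smul_const v
  rw [Real.exp_eq_exp_ℝ]
  refine h2.unique ?_
  convert h3 using 2 with n
  simp [hp, smul_smul]

lemma det_exp_symm (A : V →L[ℝ] V) (hA : ContinuousLinearMap.adjoint A = A) (ht : ctr A = 0) :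
    LinearMap.det (NormedSpace.exp A : V →L[ℝ] V).toLinearMap = 1 := by
  have hS : (A : V →ₗ[ℝ] V).IsSymmetric := by
    intro x y
    show ⟪A x, y⟫_ℝ = ⟪x, A y⟫_ℝ
    conv_rhs => rw [← hA, ContinuousLinearMap.adjoint_inner_right]
  let e := hS.eigenvectorBasis rfl
  let l := hS.eigenvalues rfl
  have he : ∀ i, A (e i) = l i • e i := fun i => hS.apply_eigenvectorBasis rfl i
  have h1 : ctr A = ∑ i, l i := by
    rw [ctr, LinearMap.trace_eq_sum_inner _ e]
    refine Finset.sum_congr rfl fun i _ => ?_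
    simp [he, inner_smul_right]
  rw [← LinearMap.det_toMatrix e.toBasis]
  have : LinearMap.toMatrix e.toBasis e.toBasis (NormedSpace.exp A : V →L[ℝ] V).toLinearMap
      = Matrix.diagonal (fun i => Real.exp (l i)) := by
    ext i j
    rw [LinearMap.toMatrix_apply]
    simp [exp_eig A _ _ (he j), Matrix.diagonal_apply]
    split_ifs with h
    · rw [h]
    · rfl
  rw [this, Matrix.det_diagonal, ← Real.exp_sum, ← h1, ht, Real.exp_zero]

lemma kil_gact {g g' : V →L[ℝ] V} (h1 : g * g' = 1) (h2 : g' * g = 1) (μ : V →L[ℝ] V →L[ℝ] V) (x y : V) :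
    kil (gact g g' μ) x y = kil μ (g' x) (g' y) := by
  have : ∀ x, gact g g' μ x = g * (μ (g' x) * g') := fun x => by ext; simp
  rw [kil_apply, kil_apply]
  change ctr (gact g g' μ x * gact g g' μ y) = ctr (μ (g' x) * μ (g' y))
  have e : gact g g' μ x * gact g g' μ y = g * (μ (g' x) * μ (g' y) * g') := by
    rw [this, this]
    calc g * (μ (g' x) * g') * (g * (μ (g' y) * g'))
        = g * (μ (g' x) * ((g' * g) * (μ (g' y) * g'))) := by simp only [mul_assoc]
      _ = _ := by rw [h2, one_mul, mul_assoc]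
  rw [e, ctr_mul_comm, mul_assoc, h2, mul_one]

noncomputable def kdet (ν : V →L[ℝ] V →L[ℝ] V) : ℝ :=
  (LinearMap.BilinForm.toMatrix (ob V).toBasis (kil ν)).det

lemma kdet_ne (ν : V →L[ℝ] V →L[ℝ] V) : (kil ν).Nondegenerate ↔ kdet ν ≠ 0 :=
  LinearMap.BilinForm.nondegenerate_iff_det_ne_zero _

lemma kdet_gact {g g' : V →L[ℝ] V} (h1 : g * g' = 1) (h2 : g' * g = 1)
    (hd : LinearMap.det g'.toLinearMap = 1) (μ : V →L[ℝ] V →L[ℝ] V) :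
    kdet (gact g g' μ) = kdet μ := by
  have : kil (gact g g' μ) = (kil μ).comp g'.toLinearMap g'.toLinearMap := by
    ext x y; rw [kil_gact h1 h2]; rfl
  rw [kdet, this, LinearMap.BilinForm.toMatrix_comp (ob V).toBasis (ob V).toBasis]
  simp [hd, kdet]

lemma cont_apply2 (x y : V) : Continuous fun ν : V →L[ℝ] V →L[ℝ] V => ν x y := by
  fun_prop

lemma kdet_cont : Continuous (kdet (V := V)) := by
  unfold kdet
  refine Continuous.matrix_det ?_
  refine continuous_matrix fun i j => ?_
  have : ∀ ν : V →L[ℝ] V →L[ℝ] V, LinearMap.BilinForm.toMatrix (ob V).toBasis (kil ν) i j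
    = ∑ k, ⟪ob V k, ν (ob V i) (ν (ob V j) (ob V k))⟫_ℝ := fun ν => by
      rw [LinearMap.BilinForm.toMatrix_apply, kil_apply, LinearMap.trace_eq_sum_inner _ (ob V)]
      simp
  simp only [this]
  fun_prop

lemma gact_cont (g g' : V →L[ℝ] V) : Continuous (gact g g') := by
  unfold gact
  fun_prop

lemma exists_min (S : Set (V →L[ℝ] V →L[ℝ] V)) (hS : IsClosed S) (hne : S.Nonempty) :
    ∃ ν ∈ S, ∀ ν' ∈ S, ‖hsEmb ν‖ ≤ ‖hsEmb ν'‖ := by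
  have hc := LinearMap.isClosedEmbedding_of_injective (f := hsEmb (V := V))
    (LinearMap.ker_eq_bot.2 hsEmb_inj)
  obtain ⟨_, ⟨ν, hν, rfl⟩, hy⟩ := (hc.isClosedMap S hS).exists_infDist_eq_dist (hne.image _) 0
  refine ⟨ν, hν, fun ν' hν' => ?_⟩
  have := Metric.infDist_le_dist_of_mem (x := 0) (Set.mem_image_of_mem hsEmb hν')
  rw [hy] at this
  simpa using this

lemma chain_abs {E F : Type*} [NormedAddCommGroup E] [NormedSpace ℝ E] [NormedAddCommGroup F]
    [NormedSpace ℝ F] {Φ : E → F} {Φ' : E →L[ℝ] F} {f : ℝ → E} {v x0 : E} {t : ℝ}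
    (h : HasFDerivAt Φ Φ' x0) (h1 : HasDerivAt f v t) (h0 : f t = x0) :
    HasDerivAt (fun t => Φ (f t)) (Φ' v) t := by
  subst h0
  exact h.comp_hasDerivAt t h1

lemma pair_abs {E F : Type*} [NormedAddCommGroup E] [NormedSpace ℝ E] [NormedAddCommGroup F]
    [NormedSpace ℝ F] (A : E) (ν : F) :
    HasDerivAt (fun t : ℝ => (t • A, ν)) (A, (0 : F)) 0 := by
  have := ((hasDerivAt_id (0:ℝ)).smul_const A).prodMk (hasDerivAt_const (0:ℝ) ν)
  simpa using this

lemma min_abs {E F : Type*} [NormedAddCommGroup E] [NormedSpace ℝ E] [NormedAddCommGroup F]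
    [InnerProductSpace ℝ F] (L : E →L[ℝ] F) {f : ℝ → E} {v x0 : E}
    (h1 : HasDerivAt f v 0) (h0 : f 0 = x0) (hm : ∀ t, ‖L x0‖ ≤ ‖L (f t)‖) :
    ⟪L x0, L v⟫_ℝ = 0 := by
  have h2 := (chain_abs L.hasFDerivAt h1 rfl).norm_sq
  have h3 : IsLocalMin (fun t : ℝ => ‖L (f t)‖ ^ 2) 0 := by
    refine Filter.Eventually.of_forall fun t => ?_
    have := hm t
    simp only [h0]
    gcongr
  have h4 := h3.hasDerivAt_eq_zero h2
  rw [h0] at h4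
  linarith

lemma flow_deriv (ν : V →L[ℝ] V →L[ℝ] V) (A : V →L[ℝ] V) :
    HasDerivAt (fun t : ℝ => gact (NormedSpace.exp (t • A)) (NormedSpace.exp (-(t • A))) ν)
      (dact A ν) 0 := by
  obtain ⟨Φ, h, hΦ⟩ := strict_gact ν
  have h2 := chain_abs (E := (V →L[ℝ] V) × (V →L[ℝ] V →L[ℝ] V)) (F := V →L[ℝ] V →L[ℝ] V)
    h.hasFDerivAt (pair_abs A ν) (by rw [zero_smul])
  rw [hΦ, add_zero] at h2
  exact h2

lemma min_deriv (ν : V →L[ℝ] V →L[ℝ] V) (A : V →L[ℝ] V)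
    (h : ∀ t : ℝ, ‖hsEmb ν‖ ≤
      ‖hsEmb (gact (NormedSpace.exp (t • A)) (NormedSpace.exp (-(t • A))) ν)‖) :
    hs (dact A ν) ν = 0 := by
  rw [hs_symm]
  exact min_abs (E := V →L[ℝ] V →L[ℝ] V) (hsEmb (V := V)).toContinuousLinearMap (flow_deriv ν A)
    (by simp [gact_one]) h

end CartanInv4

open scoped InnerProductSpace Topology
section CartanInv5

set_option linter.unusedSectionVars false

variable {V : Type*} [NormedAddCommGroup V] [InnerProductSpace ℝ V] [FiniteDimensional ℝ V]

noncomputable def momF (ν : V →L[ℝ] V →L[ℝ] V) : (V →L[ℝ] V) →ₗ[ℝ] ℝ where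
  toFun A := hs (dact A ν) ν
  map_add' A B := by
    have : dact (A + B) ν = dact A ν + dact B ν := by ext; simp; abel
    rw [this]; simp [hs, inner_add_left]
  map_smul' c A := by
    have : dact (c • A) ν = c • dact A ν := by ext; simp [smul_sub]
    rw [this]; simp [hs, inner_smul_left]

lemma adj_mul (A B : V →L[ℝ] V) : ContinuousLinearMap.adjoint (A * B) =
    ContinuousLinearMap.adjoint B * ContinuousLinearMap.adjoint A :=
  ContinuousLinearMap.adjoint_comp A B

lemma hs_zero_left (ν : V →L[ℝ] V →L[ℝ] V) : hs 0 ν = 0 := by simp [hs]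
lemma hs_zero_right (ν : V →L[ℝ] V →L[ℝ] V) : hs ν 0 = 0 := by simp [hs]
lemma hs_add_left (a b ν : V →L[ℝ] V →L[ℝ] V) : hs (a + b) ν = hs a ν + hs b ν := by
  simp [hs, inner_add_left]
lemma dact_z (A : V →L[ℝ] V) : dact A (0 : V →L[ℝ] V →L[ℝ] V) = 0 := by ext; simp
lemma dact_z' (ν : V →L[ℝ] V →L[ℝ] V) : dact (0 : V →L[ℝ] V) ν = 0 := by ext; simp

local notation "adj" => ContinuousLinearMap.adjoint

/-- commuting with an operator whose adjoint is a derivation -/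
lemma hs_comm_key (ν : V →L[ℝ] V →L[ℝ] V) (P : V →L[ℝ] V) (hP : dact P ν = 0) :
    hs (dact (adj P) ν) (dact (adj P) ν) = hs (dact (P * adj P - adj P * P) ν) ν := by
  have := hs_dact P (dact (adj P) ν) ν
  rw [← this, dact_mul, hP, dact_z, add_zero]

lemma kn_alg (ν : V →L[ℝ] V →L[ℝ] V) (D : V →L[ℝ] V) (hD : dact D ν = 0)
    (hn : D * adj D = adj D * D)
    (hmin : ∀ A : V →L[ℝ] V, adj A = A → ctr A = 0 → A * D = D * A → hs (dact A ν) ν = 0)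
    (P : V →L[ℝ] V) (hP : dact P ν = 0) : dact (adj P) ν = 0 := by
  rcases subsingleton_or_nontrivial V with hV | hV
  · ext x y; exact Subsingleton.elim _ _
  have hD' : dact (adj D) ν = 0 := by
    apply hs_self
    rw [hs_comm_key ν D hD, hn, sub_self, dact_z', hs_zero_left]
  obtain ⟨m, hm⟩ := exists_moment (momF ν)
  have hm' : ∀ A, ctr (A * m) = hs (dact A ν) ν := hm
  have hext : ∀ N : V →L[ℝ] V, (∀ A, ctr (A * N) = 0) → N = 0 := fun N h =>
    ctr_adj_mul_zero (h _)
  have hsym : adj m = m := by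
    rw [← sub_eq_zero]
    apply hext
    intro A
    rw [mul_sub, ctr_sub, hm', sub_eq_zero, ← ctr_adj, adj_mul, ContinuousLinearMap.adjoint_adjoint,
      ctr_mul_comm, hm', hs_dact, ContinuousLinearMap.adjoint_adjoint, hs_symm]
  have hcom : m * D = D * m := by
    rw [← sub_eq_zero]
    apply hext
    intro A
    have e1 : ctr (A * (m * D - D * m)) = ctr ((D * A - A * D) * m) := by
      rw [mul_sub, ctr_sub, sub_mul, ctr_sub, ← mul_assoc, ctr_mul_comm (A * m), mul_assoc, mul_assoc]
    rw [e1, hm']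
    have e2 := dact_mul D A ν
    rw [hD, dact_z, add_zero] at e2
    rw [← e2, hs_dact, hD', hs_zero_right]
  obtain ⟨c, hc⟩ : ∃ c : ℝ, m = c • (1 : V →L[ℝ] V) := by
    refine ⟨ctr m / Module.finrank ℝ V, ?_⟩
    set c : ℝ := ctr m / Module.finrank ℝ V
    have hn0 : (Module.finrank ℝ V : ℝ) ≠ 0 := by
      exact_mod_cast (Module.finrank_pos (R := ℝ) (M := V)).ne'
    have h1 : ctr (1 : V →L[ℝ] V) = Module.finrank ℝ V := LinearMap.trace_one ℝ V
    rw [← sub_eq_zero]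
    set A := m - c • (1 : V →L[ℝ] V) with hA
    have a1 : adj A = A := by
      rw [hA, map_sub, map_smulₛₗ, hsym]
      have : adj (1 : V →L[ℝ] V) = 1 := by
        exact ContinuousLinearMap.adjoint_id
      rw [this]; rfl
    have a2 : ctr A = 0 := by
      rw [hA, ctr_sub, ctr_smul, h1, div_mul_cancel₀ _ hn0, sub_self]
    have a3 : A * D = D * A := by
      rw [hA, sub_mul, mul_sub, hcom]; simp
    have a4 := hmin A a1 a2 a3
    rw [← hm', show m = A + c • (1 : V →L[ℝ] V) by rw [hA]; abel] at a4
    have a5 : ctr (A * A) = 0 := by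
      have : ctr (A * (A + c • (1 : V →L[ℝ] V))) - ctr (c • A) = ctr (A * A) := by
        rw [← ctr_sub]; congr 1; rw [mul_add]; simp
      rw [← this, a4, ctr_smul, a2]; simp
    apply ctr_adj_mul_zero
    rw [a1, a5]
  apply hs_self
  rw [hs_comm_key ν P hP, ← hm', hc]
  rw [mul_smul_comm, mul_one, ctr_smul, ctr_sub, ctr_mul_comm, sub_self, mul_zero]

lemma exp_comm {A D : V →L[ℝ] V} (h : A * D = D * A) :
    NormedSpace.exp A * D = D * NormedSpace.exp A := by
  let _ := NormedAlgebra.restrictScalars ℚ ℝ (V →L[ℝ] V)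
  exact (Commute.exp_left (show Commute A D from h)).eq

theorem kempf_ness (μ : V →L[ℝ] V →L[ℝ] V) (hμ : IsLieBr μ) (hB : (kil μ).Nondegenerate)
    (D : V →L[ℝ] V) (hD : ∀ x y, D (μ x y) = μ (D x) y + μ x (D y))
    (hn : D * adj D = adj D * D) :
    ∃ g g' : V →L[ℝ] V, g * g' = 1 ∧ g' * g = 1 ∧ g * D = D * g ∧
      ∀ P : V →L[ℝ] V, dact P (gact g g' μ) = 0 → dact (adj P) (gact g g' μ) = 0 := by
  obtain ⟨O, hO⟩ : ∃ O : Set (V →L[ℝ] V →L[ℝ] V), ∀ ν, ν ∈ O ↔ ∃ g g' : V →L[ℝ] V,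
      g * g' = 1 ∧ g' * g = 1 ∧ g * D = D * g ∧ LinearMap.det g'.toLinearMap = 1 ∧
        ν = gact g g' μ := ⟨{ν | _}, fun ν => Iff.rfl⟩
  have hOne : O.Nonempty := ⟨μ, (hO μ).2 ⟨1, 1, by simp, by simp, by simp,
    LinearMap.det_id, (gact_one μ).symm⟩⟩
  obtain ⟨ν, hν, hmin⟩ := exists_min (closure O) isClosed_closure hOne.closure
  -- closed conditions
  have hcl : closure O ⊆ {ν | IsLieBr ν ∧ (∀ x y, D (ν x y) = ν (D x) y + ν x (D y)) ∧
      kdet ν = kdet μ} := by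
    apply closure_minimal
    · intro ν hν
      obtain ⟨g, g', h1, h2, h3, h4, rfl⟩ := (hO ν).1 hν
      exact ⟨gact_lie h2 hμ, gact_der h1 h2 h3 hD, kdet_gact h1 h2 h4 μ⟩
    · have c1 : IsClosed {ν : V →L[ℝ] V →L[ℝ] V | kdet ν = kdet μ} :=
        isClosed_eq kdet_cont continuous_const
      have c2 : IsClosed {ν : V →L[ℝ] V →L[ℝ] V | ∀ x y, D (ν x y) = ν (D x) y + ν x (D y)} := by
        simp only [Set.ofPred_forall]
        exact isClosed_iInter fun x => isClosed_iInter fun y =>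
          isClosed_eq (by fun_prop) (by fun_prop)
      have c3 : IsClosed {ν : V →L[ℝ] V →L[ℝ] V | ∀ x y, ν x y = - ν y x} := by
        simp only [Set.ofPred_forall]
        exact isClosed_iInter fun x => isClosed_iInter fun y =>
          isClosed_eq (by fun_prop) (by fun_prop)
      have c4 : IsClosed {ν : V →L[ℝ] V →L[ℝ] V |
          ∀ x y z, ν x (ν y z) = ν (ν x y) z + ν y (ν x z)} := by
        simp only [Set.ofPred_forall]
        exact isClosed_iInter fun x => isClosed_iInter fun y => isClosed_iInter fun z =>
          isClosed_eq (by fun_prop) (by fun_prop)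
      exact (c3.inter c4).inter (c2.inter c1)
  obtain ⟨hLie, hder, hk⟩ := hcl hν
  have hBν : (kil ν).Nondegenerate := by
    rw [kdet_ne] at hB ⊢
    rwa [hk]
  have hDν : dact D ν = 0 := (dact_zero_iff D ν).2 hder
  have hflow : ∀ A : V →L[ℝ] V, adj A = A → ctr A = 0 → A * D = D * A →
      gact (NormedSpace.exp A) (NormedSpace.exp (-A)) ν ∈ closure O := by
    intro A a1 a2 a3
    have hm : Set.MapsTo (gact (NormedSpace.exp A) (NormedSpace.exp (-A))) O O := by
      intro ν' hν'
      obtain ⟨g, g', h1, h2, h3, h4, rfl⟩ := (hO ν').1 hν'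
      refine (hO _).2 ⟨_, _, ?_, ?_, ?_, ?_, gact_gact _ _ _ _ _⟩
      · rw [mul_assoc, ← mul_assoc g, h1, one_mul, exp_mul_exp_neg]
      · rw [mul_assoc, ← mul_assoc (NormedSpace.exp (-A)), exp_neg_mul_exp, one_mul, h2]
      · rw [mul_assoc, h3, ← mul_assoc, exp_comm a3, mul_assoc]
      · have : (g' * NormedSpace.exp (-A) : V →L[ℝ] V).toLinearMap =
          g'.toLinearMap * (NormedSpace.exp (-A) : V →L[ℝ] V).toLinearMap := rfl
        rw [this, map_mul, h4, one_mul, det_exp_symm]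
        · rw [map_neg, a1]
        · have : -A = (-1 : ℝ) • A := by simp
          rw [this, ctr_smul, a2, mul_zero]
    exact hm.closure (gact_cont _ _) hν
  have hmin' : ∀ A : V →L[ℝ] V, adj A = A → ctr A = 0 → A * D = D * A →
      hs (dact A ν) ν = 0 := by
    intro A a1 a2 a3
    apply min_deriv
    intro t
    apply hmin
    apply hflow
    · rw [map_smulₛₗ, a1]; rfl
    · rw [ctr_smul, a2, mul_zero]
    · rw [smul_mul_assoc, a3, mul_smul_comm]
  have key := kn_alg ν D hDν hn hmin'
  obtain ⟨ν', hr, hν'⟩ := mem_closure_iff_nhds.1 hν _ (rigid ν hLie hBν D hder)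
  obtain ⟨g, g', h1, h2, h3, h4, rfl⟩ := (hO ν').1 hν'
  obtain ⟨k, k', k1, k2, k3, k4⟩ := hr (gact_lie h2 hμ) (gact_der h1 h2 h3 hD)
  have e : ν = gact (k' * g) (g' * k) μ := by
    rw [← gact_gact, k4, gact_gact, k2, gact_one]
  refine ⟨k' * g, g' * k, ?_, ?_, ?_, ?_⟩
  · rw [mul_assoc, ← mul_assoc g, h1, one_mul, k2]
  · rw [mul_assoc, ← mul_assoc k, k1, one_mul, h2]
  · rw [mul_assoc, h3, ← mul_assoc, comm_inv k1 k2 k3, mul_assoc]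
  · rw [← e]; exact key

end CartanInv5

open scoped InnerProductSpace Topology TensorProduct
section CartanInv6

set_option linter.unusedSectionVars false

lemma exists_coords {L : Type*} [AddCommGroup L] [Module ℝ L] [Module.Finite ℝ L] (D : L →ₗ[ℝ] L)
    (hD : Module.End.IsSemisimple (LinearMap.baseChange ℂ D)) :
    ∃ (m : ℕ) (c : Fin m → L →ₗ[ℝ] ℂ) (l : Fin m → ℂ), (∀ i x, c i (D x) = l i * c i x) ∧
      ∀ x, (∀ i, c i x = 0) → x = 0 := by
  classical
  set T : (ℂ ⊗[ℝ] L) →ₗ[ℂ] (ℂ ⊗[ℝ] L) := LinearMap.baseChange ℂ D with hT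
  have htop := hD.iSup_eigenspace_eq_top
  set s : Set (ℂ ⊗[ℝ] L) := {v | ∃ a : ℂ, T v = a • v} with hs
  have hspan : ⊤ ≤ Submodule.span ℂ s := by
    rw [← htop]
    refine iSup_le fun a v hv => Submodule.subset_span ⟨a, ?_⟩
    exact Module.End.mem_eigenspace_iff.1 hv
  obtain ⟨m, b', hb⟩ : ∃ (m : ℕ) (b' : Module.Basis (Fin m) ℂ (ℂ ⊗[ℝ] L)),
      ∀ i, ∃ a : ℂ, T (b' i) = a • b' i := by
    let b := Module.Basis.ofSpan hspan
    have : Finite ((linearIndepOn_empty ℂ id).extend (Set.empty_subset s)) :=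
      Module.Finite.finite_basis b
    refine ⟨_, b.reindex (Finite.equivFin _), fun i => ?_⟩
    have : (b.reindex (Finite.equivFin _)) i ∈ s := by
      rw [Module.Basis.reindex_apply]
      exact Module.Basis.ofSpan_subset hspan ⟨_, rfl⟩
    exact this
  choose l hl using hb
  have hrep : ∀ z i, b'.repr (T z) i = l i * b'.repr z i := by
    intro z i
    have : (b'.coord i) ∘ₗ T = l i • b'.coord i := by
      apply b'.ext
      intro j
      simp [hl, Finsupp.single_apply]
      split_ifs with h
      · rw [h]
      · rfl
    have := LinearMap.congr_fun this z
    simpa using this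
  refine ⟨_, fun i => ((b'.coord i).restrictScalars ℝ) ∘ₗ (TensorProduct.mk ℝ ℂ L 1), l, ?_, ?_⟩
  · intro i x
    have := hrep (1 ⊗ₜ x) i
    simpa [hT] using this
  · intro x hx
    apply Module.Flat.tensorProduct_mk_injective (R := ℝ) (S := ℂ) (M := L)
    rw [map_zero]
    apply b'.repr.injective
    ext i
    simpa using hx i

open Polynomial in
lemma exists_conj_poly (S : Finset ℂ) : ∃ q : ℝ[X], ∀ z ∈ S, aeval z q = (starRingEnd ℂ) z := by
  classical
  let S' := S ∪ S.image (starRingEnd ℂ)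
  let p : ℂ[X] := Lagrange.interpolate S' id (starRingEnd ℂ)
  have hp : ∀ z ∈ S', p.eval z = (starRingEnd ℂ) z := fun z hz =>
    Lagrange.eval_interpolate_at_node (v := id) _ (Set.injOn_id _) hz
  have hp' : ∀ z ∈ S, (p.map (starRingEnd ℂ)).eval z = (starRingEnd ℂ) z := fun z hz => by
    have := hp ((starRingEnd ℂ) z) (Finset.mem_union_right _ (Finset.mem_image_of_mem _ hz))
    have h2 := eval₂_hom (p := p) (starRingEnd ℂ) ((starRingEnd ℂ) z)
    rw [this] at h2
    simpa [eval_map] using h2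
  obtain ⟨q, hq⟩ : ∃ q : ℝ[X], q.map (algebraMap ℝ ℂ) = C (1/2 : ℂ) * (p + p.map (starRingEnd ℂ)) := by
    rw [← mem_lifts, lifts_iff_coeff_lifts]
    intro n
    refine ⟨(p.coeff n).re, ?_⟩
    simp [Complex.add_conj]
  refine ⟨q, fun z hz => ?_⟩
  rw [← eval_map_algebraMap, hq]
  simp [hp' z hz, hp z (Finset.mem_union_left _ hz)]
  ring

theorem exists_normal {L : Type*} [AddCommGroup L] [Module ℝ L] [Module.Finite ℝ L] (D : L →ₗ[ℝ] L)
    (hD : Module.End.IsSemisimple (LinearMap.baseChange ℂ D)) :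
    ∃ (n : ℕ) (e : L ≃ₗ[ℝ] EuclideanSpace ℝ (Fin n)) (D' : L →ₗ[ℝ] L), D * D' = D' * D ∧
      ∀ x y, ⟪e (D x), e y⟫_ℝ = ⟪e x, e (D' y)⟫_ℝ := by
  classical
  obtain ⟨m, c, l, hc, hinj⟩ := exists_coords D hD
  obtain ⟨q, hq⟩ := exists_conj_poly (Finset.univ.image l)
  have hq' : ∀ i, Polynomial.aeval (l i) q = (starRingEnd ℂ) (l i) := fun i => hq _ (by simp)
  let F : L →ₗ[ℝ] PiLp 2 (fun _ : Fin m => ℂ) :=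
    { toFun := fun x => WithLp.toLp 2 (fun i => c i x)
      map_add' := by intros; ext; simp
      map_smul' := by intros; ext; simp }
  have hF : Function.Injective F := by
    rw [← LinearMap.ker_eq_bot, LinearMap.ker_eq_bot']
    intro x hx
    apply hinj
    intro i
    exact congrArg (fun z : PiLp 2 (fun _ : Fin m => ℂ) => z i) hx
  let e0 := LinearEquiv.ofInjective F hF
  let e1 := (stdOrthonormalBasis ℝ (LinearMap.range F)).repr
  have he : ∀ x y, ⟪(e0.trans e1.toLinearEquiv) x, (e0.trans e1.toLinearEquiv) y⟫_ℝ
      = ∑ i, ((starRingEnd ℂ) (c i x) * c i y).re := by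
    intro x y
    have : ⟪(e0.trans e1.toLinearEquiv) x, (e0.trans e1.toLinearEquiv) y⟫_ℝ = ⟪e0 x, e0 y⟫_ℝ :=
      e1.inner_map_map _ _
    rw [this, Submodule.coe_inner, PiLp.inner_apply]
    refine Finset.sum_congr rfl fun i _ => ?_
    rw [Complex.inner, mul_comm]
    rfl
  refine ⟨_, e0.trans e1.toLinearEquiv, Polynomial.aeval D q, ?_, ?_⟩
  · have : Polynomial.aeval D (Polynomial.X * q) = Polynomial.aeval D (q * Polynomial.X) := by
      rw [mul_comm]
    simpa only [map_mul, Polynomial.aeval_X] using this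
  · intro x y
    rw [he, he]
    refine Finset.sum_congr rfl fun i _ => ?_
    have hpow : ∀ (p : Polynomial ℝ) y, c i (Polynomial.aeval D p y) = Polynomial.aeval (l i) p * c i y := by
      intro p
      induction p using Polynomial.induction_on' with
      | add p q hp hq => intro y; simp [hp, hq, add_mul]
      | monomial n a =>
        intro y
        have : ∀ n y, c i ((D ^ n) y) = l i ^ n * c i y := by
          intro n
          induction n with
          | zero => simp
          | succ n ih => intro y; rw [pow_succ', Module.End.mul_apply, hc, ih]; ring
        simp [Polynomial.aeval_monomial, this, mul_assoc]
    rw [hc, hpow, hq', map_mul]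
    congr 1
    ring

end CartanInv6

open scoped InnerProductSpace Topology TensorProduct
section CartanInv7

lemma final_aux {V : Type*} [NormedAddCommGroup V] [InnerProductSpace ℝ V] [FiniteDimensional ℝ V]
    {L : Type*} [LieRing L] [LieAlgebra ℝ L] [Module.Finite ℝ L]
    [LieAlgebra.IsKilling ℝ L] (X : L) (f : L ≃ₗ[ℝ] V) (ν : V →L[ℝ] V →L[ℝ] V)
    (hf : ∀ x y, ν (f x) (f y) = f ⁅x, y⁆)
    (hn : ν (f X) * ContinuousLinearMap.adjoint (ν (f X)) =
      ContinuousLinearMap.adjoint (ν (f X)) * ν (f X))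
    (hP : ∀ P : V →L[ℝ] V, dact P ν = 0 → dact (ContinuousLinearMap.adjoint P) ν = 0) :
    ∃ θ : L →ₗ⁅ℝ⁆ L, (∀ Y : L, θ (θ Y) = Y) ∧
      (∀ Y : L, Y ≠ 0 → 0 < -(killingForm ℝ L Y (θ Y))) ∧
      ∃ E H : L, X = E + H ∧ θ E = E ∧ θ H = -H ∧ ⁅E, H⁆ = 0 := by
  have hinj : ∀ x, ν (f x) = 0 → x = 0 := by
    intro x hx
    rw [← LieDerivation.IsKilling.ad_apply_eq_zero_iff (R := ℝ)]
    ext y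
    apply f.injective
    simp [← hf, hx]
  have hinj' : ∀ x y, ν (f x) = ν (f y) → x = y := fun x y h => by
    rw [← sub_eq_zero]; apply hinj; rw [map_sub, map_sub, h, sub_self]
  have hbr : ∀ x y, ν (f ⁅x, y⁆) = ν (f x) * ν (f y) - ν (f y) * ν (f x) := by
    intro x y
    ext v
    obtain ⟨w, rfl⟩ := f.surjective v
    simp [hf]
  have hτ : ∀ x, ∃ z, ν (f z) = ContinuousLinearMap.adjoint (ν (f x)) := by
    intro x
    have h1 : dact (ν (f x)) ν = 0 := by
      rw [dact_zero_iff]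
      intro v w
      obtain ⟨v, rfl⟩ := f.surjective v
      obtain ⟨w, rfl⟩ := f.surjective w
      simp only [hf]
      rw [← map_add, leibniz_lie]
    have h2 := (dact_zero_iff _ _).1 (hP _ h1)
    set Q := ContinuousLinearMap.adjoint (ν (f x))
    let d : LieDerivation ℝ L L :=
      { toLinearMap := f.symm.toLinearMap ∘ₗ Q.toLinearMap ∘ₗ f.toLinearMap
        leibniz' := by
          intro a b
          apply f.injective
          have := h2 (f a) (f b)
          rw [hf] at this
          simp only [LinearMap.comp_apply, LinearEquiv.coe_coe, LinearEquiv.apply_symm_apply,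
            map_sub, ContinuousLinearMap.coe_coe]
          rw [this, ← hf, ← hf, LinearEquiv.apply_symm_apply, LinearEquiv.apply_symm_apply]
          have h3 : ∀ v w, ν v w = - ν w v := by
            intro v w
            obtain ⟨v, rfl⟩ := f.surjective v
            obtain ⟨w, rfl⟩ := f.surjective w
            rw [hf, hf, ← map_neg, lie_skew]
          rw [h3 (f b)]; abel }
    obtain ⟨z, hz⟩ := LieDerivation.IsKilling.exists_eq_ad d
    refine ⟨z, ?_⟩
    ext v
    obtain ⟨y, rfl⟩ := f.surjective v
    have := congrArg (fun T : LieDerivation ℝ L L => f (T y)) hz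
    rw [hf]
    simpa [d] using this
  choose τ hτ using hτ
  have hadd : ∀ x y, τ (x + y) = τ x + τ y := fun x y => hinj' _ _ (by simp [hτ])
  have hsmul : ∀ (c : ℝ) x, τ (c • x) = c • τ x := fun c x => hinj' _ _ (by
    rw [hτ, map_smul f, map_smul ν, map_smul f, map_smul ν, hτ, map_smulₛₗ]; rfl)
  have hneg : ∀ x, τ (-x) = - τ x := fun x => by simpa using hsmul (-1) x
  have hlie : ∀ x y, τ ⁅x, y⁆ = - ⁅τ x, τ y⁆ := fun x y => hinj' _ _ (by
    rw [hτ, hbr, map_sub, adj_mul, adj_mul, map_neg, map_neg, hbr, hτ, hτ]; abel)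
  have hinv : ∀ x, τ (τ x) = x := fun x => hinj' _ _ (by
    rw [hτ, hτ, ContinuousLinearMap.adjoint_adjoint])
  have hkil : ∀ x y, killingForm ℝ L x y = ctr (ν (f x) * ν (f y)) := by
    intro x y
    rw [killingForm_apply_apply, ctr, ← LinearMap.trace_conj' _ f]
    congr 1
    ext v
    obtain ⟨w, rfl⟩ := f.surjective v
    simp [hf, LinearEquiv.conj_apply]
  have hXX : ⁅X, τ X⁆ = 0 := by
    apply hinj
    rw [hbr, hτ, hn, sub_self]
  let θ : L →ₗ⁅ℝ⁆ L :=
    { toFun := fun x => - τ x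
      map_add' := fun x y => by rw [hadd]; abel
      map_smul' := fun c x => by rw [hsmul]; simp
      map_lie' := fun {x y} => by show -τ ⁅x, y⁆ = ⁅-τ x, -τ y⁆; rw [hlie]; simp }
  have hθ : ∀ x, θ x = - τ x := fun _ => rfl
  refine ⟨θ, ?_, ?_, (1/2 : ℝ) • (X - τ X), (1/2 : ℝ) • (X + τ X), ?_, ?_, ?_, ?_⟩
  · intro Y; rw [hθ, hθ, hneg, hinv, neg_neg]
  · intro Y hY
    rw [hθ, map_neg, neg_neg, hkil, hτ, ctr_mul_comm]
    exact ctr_adj_mul_pos fun h => hY (hinj Y h)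
  · module
  · rw [hθ, hsmul, sub_eq_add_neg, hadd, hneg, hinv]; module
  · rw [hθ, hsmul, hadd, hinv]; module
  · have h2 : ⁅τ X, X⁆ = 0 := by rw [← lie_skew, hXX, neg_zero]
    simp [hXX, h2]

end CartanInv7

theorem semisimple_element_cartan_decomposition
    {L : Type*} [LieRing L] [LieAlgebra ℝ L] [Module.Finite ℝ L]
    [LieAlgebra.IsSemisimple ℝ L] (X : L)
    (hX : Module.End.IsSemisimple
      (LinearMap.baseChange ℂ (LieAlgebra.ad ℝ L X : L →ₗ[ℝ] L))) :
    ∃ θ : L →ₗ⁅ℝ⁆ L, (∀ Y : L, θ (θ Y) = Y) ∧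
      (∀ Y : L, Y ≠ 0 → 0 < -(killingForm ℝ L Y (θ Y))) ∧
      ∃ E H : L, X = E + H ∧ θ E = E ∧ θ H = -H ∧ ⁅E, H⁆ = 0 := by
  obtain ⟨n, e, D', hcomm, hadj⟩ := exists_normal _ hX
  obtain ⟨μ, hμ⟩ : ∃ μ : EuclideanSpace ℝ (Fin n) →L[ℝ] EuclideanSpace ℝ (Fin n) →L[ℝ]
      EuclideanSpace ℝ (Fin n), ∀ x y, μ x y = e ⁅e.symm x, e.symm y⁆ := by
    refine ⟨LinearMap.toContinuousBilinearMap (LinearMap.mk₂ ℝ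
      (fun x y => e ⁅e.symm x, e.symm y⁆) ?_ ?_ ?_ ?_), fun x y => rfl⟩ <;> intros <;> simp
  have hμe : ∀ x y, μ (e x) (e y) = e ⁅x, y⁆ := fun x y => by simp [hμ]
  have hLie : IsLieBr μ := by
    refine ⟨fun x y => ?_, fun x y z => ?_⟩
    · rw [hμ, hμ, ← map_neg, lie_skew]
    · simp only [hμ, LinearEquiv.symm_apply_apply]
      rw [← map_add, leibniz_lie]
  obtain ⟨D, hDdef⟩ : ∃ D, D = μ (e X) := ⟨_, rfl⟩
  have hDe : ∀ x, D (e x) = e ⁅X, x⁆ := fun x => by rw [hDdef, hμe]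
  have hDder : ∀ x y, D (μ x y) = μ (D x) y + μ x (D y) := fun x y => by
    rw [hDdef]; exact hLie.2 (e X) x y
  have hDadj : ∀ x, ContinuousLinearMap.adjoint D (e x) = e (D' x) := by
    intro x
    apply ext_inner_left ℝ
    intro v
    obtain ⟨y, rfl⟩ := e.surjective v
    rw [ContinuousLinearMap.adjoint_inner_right, hDe]
    exact hadj y x
  have hn : D * ContinuousLinearMap.adjoint D = ContinuousLinearMap.adjoint D * D := by
    ext1 v
    obtain ⟨y, rfl⟩ := e.surjective v
    have := congrArg e (LinearMap.congr_fun hcomm y)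
    simpa [hDadj, hDe] using this
  have hB : (kil μ).Nondegenerate := by
    have h0 := LieAlgebra.IsKilling.killingForm_nondegenerate ℝ L
    have : kil μ = LinearMap.BilinForm.congr e (killingForm ℝ L) := by
      ext v w
      rw [LinearMap.BilinForm.congr_apply, killingForm_apply_apply, kil_apply,
        ← LinearMap.trace_conj' _ e]
      congr 1
      ext v
      simp [hμ, LinearEquiv.conj_apply]
    rw [this]
    exact h0.congr e
  obtain ⟨g, g', h1, h2, h3, h4⟩ := kempf_ness μ hLie hB D hDder hn
  let G : EuclideanSpace ℝ (Fin n) ≃ₗ[ℝ] EuclideanSpace ℝ (Fin n) :=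
    LinearEquiv.ofLinearMap g.toLinearMap g'.toLinearMap
      (LinearMap.ext fun x => mul_eq_one_apply h1 x) (LinearMap.ext fun x => mul_eq_one_apply h2 x)
  have hG : ∀ x, (e.trans G) x = g (e x) := fun _ => rfl
  have hf : ∀ x y, gact g g' μ ((e.trans G) x) ((e.trans G) y) = (e.trans G) ⁅x, y⁆ := by
    intro x y
    simp only [hG, gact_apply, mul_eq_one_apply h2, hμe]
  have hXD : gact g g' μ ((e.trans G) X) = D := by
    ext1 v
    rw [hG, gact_apply, mul_eq_one_apply h2, ← hDdef, commute_apply h3, mul_eq_one_apply h1]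
  exact final_aux X (e.trans G) (gact g g' μ) hf (by rw [hXD]; exact hn) h4
end

section
/- Let g ∈ GL(V) with Jordan decomposition g = e h u, and V = V_{λ₁} ⊕ ⋯ ⊕ V_{λ_n} the eigenspace decomposition of h with λ₁ > ⋯ > λ_n > 0. Then each V_{λ_k} is invariant under g, and the collection {ℙ(V_{λ₁}), …, ℙ(V_{λ_n})} is a Morse decomposition for the induced flow on ℙ(V). Moreover the stable set of ℙ(V_{λ_i}) is {[v_i + v_{i+1} + ⋯ + v_n] : v_k ∈ V_{λ_k}, v_i ≠ 0}. -/
open Filter Topology LinearAlgebra.Projectivization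

instance projectivizationTopology {K V : Type*} [DivisionRing K] [AddCommGroup V]
    [Module K V] [TopologicalSpace V] : TopologicalSpace (ℙ K V) :=
  instTopologicalSpaceQuotient

/-- The flow induced on projective space by iterating a linear automorphism. -/
def projFlow {K V : Type*} [Field K] [AddCommGroup V] [Module K V]
    (g : V ≃ₗ[K] V) (t : ℤ) : ℙ K V → ℙ K V :=
  Projectivization.map ((g ^ t : V ≃ₗ[K] V) : V →ₗ[K] V) (g ^ t).injective

/-- A Morse decomposition of a discrete-time flow on a topological space: a finite family
of pairwise disjoint compact invariant sets containing all omega and alpha limit sets,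
with the property that a point whose omega and alpha limit sets lie in the same member
belongs to that member. -/
def IsMorseDecomposition {P : Type*} [TopologicalSpace P] (φ : ℤ → P → P)
    {n : ℕ} (M : Fin n → Set P) : Prop :=
  (∀ j, IsCompact (M j)) ∧
  (∀ j t, φ t '' M j = M j) ∧
  Pairwise (Function.onFun Disjoint M) ∧
  (∀ x : P, omegaLimit atTop φ {x} ⊆ ⋃ j, M j ∧ omegaLimit atBot φ {x} ⊆ ⋃ j, M j) ∧
  (∀ (x : P) (j : Fin n), omegaLimit atTop φ {x} ⊆ M j →
    omegaLimit atBot φ {x} ⊆ M j → x ∈ M j)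

theorem morse_coe_pow {V : Type*} [AddCommGroup V] [Module ℝ V] (a : V ≃ₗ[ℝ] V) (n : ℕ) :
    ((a ^ n : V ≃ₗ[ℝ] V) : V →ₗ[ℝ] V) = (a : V →ₗ[ℝ] V) ^ n := by
  induction n with
  | zero => rfl
  | succ n ih => rw [pow_succ, pow_succ, ← ih]; rfl

theorem morse_bdd_functional {W : Type*} [AddCommGroup W] [Module ℂ W] (F : W →ₗ[ℂ] W)
    (hF : ⨆ μ : {μ : ℂ // ‖μ‖ = 1}, Module.End.eigenspace F μ = ⊤) (ψ : W →ₗ[ℂ] ℂ) (x : W) :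
    ∃ C : ℝ, ∀ n : ℕ, ‖ψ ((F ^ n) x)‖ ≤ C := by
  have hx : x ∈ ⨆ μ : {μ : ℂ // ‖μ‖ = 1}, Module.End.eigenspace F μ := hF ▸ Submodule.mem_top
  refine Submodule.iSup_induction _ (motive := fun x => ∃ C : ℝ, ∀ n : ℕ, ‖ψ ((F ^ n) x)‖ ≤ C)
    hx ?_ ?_ ?_
  · intro μ x hx
    refine ⟨‖ψ x‖, fun n => ?_⟩
    have : (F ^ n) x = (μ : ℂ) ^ n • x := by
      induction n with
      | zero => simp
      | succ n ih =>
        rw [pow_succ', Module.End.mul_apply, ih, map_smul, Module.End.mem_eigenspace_iff.1 hx,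
          smul_smul, pow_succ]
    rw [this, map_smul, norm_smul, norm_pow, μ.2, one_pow, one_mul]
  · exact ⟨0, fun n => by simp⟩
  · intro x y hx hy
    obtain ⟨C, hC⟩ := hx
    obtain ⟨D, hD⟩ := hy
    refine ⟨C + D, fun n => ?_⟩
    rw [map_add, map_add]
    exact (norm_add_le _ _).trans (add_le_add (hC n) (hD n))

theorem morse_bdd {V : Type*} [NormedAddCommGroup V] [NormedSpace ℝ V] [FiniteDimensional ℝ V]
    (f : V ≃ₗ[ℝ] V)
    (hF : ⨆ μ : {μ : ℂ // ‖μ‖ = 1},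
      Module.End.eigenspace (LinearMap.baseChange ℂ (f : V →ₗ[ℝ] V)) μ = ⊤) (v : V) :
    ∃ C : ℝ, ∀ n : ℕ, ‖(f ^ n) v‖ ≤ C := by
  have key : ∀ φ : V →ₗ[ℝ] ℝ, ∃ C : ℝ, ∀ n : ℕ, ‖φ ((f ^ n) v)‖ ≤ C := by
    intro φ
    obtain ⟨C, hC⟩ := morse_bdd_functional _ hF
      ((TensorProduct.AlgebraTensorModule.rid ℝ ℂ ℂ).toLinearMap ∘ₗ φ.baseChange ℂ)
      ((1 : ℂ) ⊗ₜ[ℝ] v)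
    refine ⟨C, fun n => ?_⟩
    have h1 := hC n
    rw [← LinearMap.baseChange_pow, ← morse_coe_pow] at h1
    simpa using h1
  let b := Module.finBasis ℝ V
  choose C hC using fun i => key (b.coord i)
  refine ⟨∑ i, C i * ‖b i‖, fun n => ?_⟩
  rw [← b.sum_repr ((f ^ n) v)]
  refine (norm_sum_le _ _).trans (Finset.sum_le_sum fun i _ => ?_)
  rw [norm_smul]
  exact mul_le_mul_of_nonneg_right (hC i n) (norm_nonneg _)

theorem morse_unip {V : Type*} [NormedAddCommGroup V] [NormedSpace ℝ V]
    (f u : V ≃ₗ[ℝ] V) (hf : ∀ v, ∃ C : ℝ, ∀ n : ℕ, ‖(f ^ n) v‖ ≤ C) (K : ℕ) :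
    ∀ v, (((u : V →ₗ[ℝ] V) - 1) ^ K) v = 0 →
      ∃ C : ℝ, ∀ n m : ℕ, ‖(f ^ n) ((u ^ m) v)‖ ≤ C * ((m : ℝ) + 1) ^ K := by
  induction K with
  | zero =>
    intro v hv
    have : v = 0 := by simpa using hv
    subst this
    exact ⟨0, by simp⟩
  | succ K ih =>
    intro v hv
    obtain ⟨C, hC⟩ := ih (u v - v) (by
      rw [pow_succ, Module.End.mul_apply] at hv
      simpa using hv)
    obtain ⟨D, hD⟩ := hf v
    have hC0 : 0 ≤ C := by simpa using (norm_nonneg _).trans (hC 0 0)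
    have hD0 : 0 ≤ D := (norm_nonneg _).trans (hD 0)
    have key : ∀ n m : ℕ, ‖(f ^ n) ((u ^ m) v)‖ ≤ D + C * m * ((m : ℝ) + 1) ^ K := by
      intro n m
      induction m with
      | zero => simpa using hD n
      | succ m ihm =>
        have e1 : (u ^ (m + 1)) v = (u ^ m) v + (u ^ m) (u v - v) := by
          rw [pow_succ, LinearEquiv.mul_apply, map_sub]; abel
        rw [e1, map_add]
        refine (norm_add_le _ _).trans ((add_le_add ihm (hC n m)).trans ?_)
        have h2 : ((m : ℝ) + 1) ^ K ≤ (((m + 1 : ℕ) : ℝ) + 1) ^ K := by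
          gcongr; simp
        have h3 : C * (m + 1) * ((m : ℝ) + 1) ^ K ≤ C * (m + 1) * (((m + 1 : ℕ) : ℝ) + 1) ^ K := by
          gcongr
        push_cast at h3 ⊢
        linarith
    refine ⟨D + C, fun n m => (key n m).trans ?_⟩
    have h1 : (1 : ℝ) ≤ ((m : ℝ) + 1) ^ (K + 1) := one_le_pow₀ (by simp)
    have h4 : 0 ≤ ((m : ℝ) + 1) ^ K := by positivity
    rw [add_mul]
    refine add_le_add (by nlinarith) ?_
    rw [pow_succ, mul_assoc]
    refine mul_le_mul_of_nonneg_left ?_ hC0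
    nlinarith

def MorseGrowth {V : Type*} [NormedAddCommGroup V] [NormedSpace ℝ V] (a : V ≃ₗ[ℝ] V) : Prop :=
  ∃ C : ℝ, ∃ d : ℕ, 0 < C ∧ ∀ (n : ℕ) (v : V), ‖(a ^ n) v‖ ≤ C * ((n : ℝ) + 1) ^ d * ‖v‖

theorem morse_growth {V : Type*} [NormedAddCommGroup V] [NormedSpace ℝ V] [FiniteDimensional ℝ V]
    (f u : V ≃ₗ[ℝ] V) (hfu : Commute f u)
    (hF : ⨆ μ : {μ : ℂ // ‖μ‖ = 1},
      Module.End.eigenspace (LinearMap.baseChange ℂ (f : V →ₗ[ℝ] V)) μ = ⊤)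
    (hu : IsNilpotent ((u : V →ₗ[ℝ] V) - 1)) : MorseGrowth (f * u) := by
  obtain ⟨K, hK⟩ := hu
  have hpt := morse_unip f u (morse_bdd f hF) K
  have : CompleteSpace V := FiniteDimensional.complete ℝ V
  let G : ℕ → V →L[ℝ] V := fun n =>
    (((n : ℝ) + 1) ^ K)⁻¹ • LinearMap.toContinuousLinearMap (((f * u) ^ n : V ≃ₗ[ℝ] V) : V →ₗ[ℝ] V)
  have hG : ∀ n v, G n v = (((n : ℝ) + 1) ^ K)⁻¹ • ((f * u) ^ n) v := fun n v => rfl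
  obtain ⟨C, hC⟩ := banach_steinhaus (g := G) (fun v => by
    obtain ⟨C, hC⟩ := hpt v (by rw [hK]; rfl)
    refine ⟨C, fun n => ?_⟩
    rw [hG, norm_smul, hfu.mul_pow, LinearEquiv.mul_apply, norm_inv, norm_pow,
      Real.norm_of_nonneg (by positivity), inv_mul_le_iff₀ (by positivity), mul_comm]
    exact hC n n)
  refine ⟨max C 1, K, by positivity, fun n v => ?_⟩
  have h1 := (G n).le_of_opNorm_le (hC n) v
  rw [hG, norm_smul, norm_inv, norm_pow, Real.norm_of_nonneg (by positivity),
    inv_mul_le_iff₀ (by positivity)] at h1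
  refine h1.trans ?_
  rw [← mul_assoc, mul_comm _ C]
  gcongr
  exact le_max_left _ _

theorem morse_span {V : Type*} [NormedAddCommGroup V] [NormedSpace ℝ V] [FiniteDimensional ℝ V]
    (e : V ≃ₗ[ℝ] V)
    (he : Module.End.IsSemisimple (LinearMap.baseChange ℂ (e : V →ₗ[ℝ] V)) ∧
      ∀ μ ∈ spectrum ℂ (LinearMap.baseChange ℂ (e : V →ₗ[ℝ] V)), ‖μ‖ = 1) :
    ⨆ μ : {μ : ℂ // ‖μ‖ = 1},
      Module.End.eigenspace (LinearMap.baseChange ℂ (e : V →ₗ[ℝ] V)) μ = ⊤ := by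
  rw [eq_top_iff, ← Module.End.iSup_maxGenEigenspace_eq_top]
  refine iSup_le fun μ => ?_
  rw [he.1.isFinitelySemisimple.maxGenEigenspace_eq_eigenspace]
  by_cases hμ : Module.End.HasEigenvalue (LinearMap.baseChange ℂ (e : V →ₗ[ℝ] V)) μ
  · exact le_iSup (fun μ : {μ : ℂ // ‖μ‖ = 1} =>
      Module.End.eigenspace (LinearMap.baseChange ℂ (e : V →ₗ[ℝ] V)) μ)
      ⟨μ, he.2 μ (Module.End.hasEigenvalue_iff_mem_spectrum.1 hμ)⟩
  · rw [Module.End.hasEigenvalue_iff, not_not] at hμ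
    rw [hμ]; exact bot_le

theorem morse_span_inv {V : Type*} [NormedAddCommGroup V] [NormedSpace ℝ V]
    (e : V ≃ₗ[ℝ] V)
    (he : ⨆ μ : {μ : ℂ // ‖μ‖ = 1},
      Module.End.eigenspace (LinearMap.baseChange ℂ (e : V →ₗ[ℝ] V)) μ = ⊤) :
    ⨆ μ : {μ : ℂ // ‖μ‖ = 1},
      Module.End.eigenspace (LinearMap.baseChange ℂ ((e⁻¹ : V ≃ₗ[ℝ] V) : V →ₗ[ℝ] V)) μ = ⊤ := by
  rw [eq_top_iff, ← he]
  refine iSup_le fun μ => ?_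
  refine le_trans ?_ (le_iSup _ (⟨(μ : ℂ)⁻¹, by rw [norm_inv, μ.2, inv_one]⟩ : {μ : ℂ // ‖μ‖ = 1}))
  intro x hx
  rw [Module.End.mem_eigenspace_iff] at hx ⊢
  have hμ : (μ : ℂ) ≠ 0 := by
    intro h0; have := μ.2; rw [h0] at this; simp at this
  have h1 : (LinearMap.baseChange ℂ ((e⁻¹ : V ≃ₗ[ℝ] V) : V →ₗ[ℝ] V))
      ((LinearMap.baseChange ℂ (e : V →ₗ[ℝ] V)) x) = x := by
    rw [← LinearMap.comp_apply, ← LinearMap.baseChange_comp]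
    have : ((e⁻¹ : V ≃ₗ[ℝ] V) : V →ₗ[ℝ] V) ∘ₗ (e : V →ₗ[ℝ] V) = LinearMap.id := by
      ext v; exact e.symm_apply_apply v
    rw [this, LinearMap.baseChange_id]; rfl
  rw [hx, map_smul] at h1
  rw [eq_inv_smul_iff₀ hμ]
  exact h1

theorem morse_nilp_inv {V : Type*} [AddCommGroup V] [Module ℝ V]
    (u : V ≃ₗ[ℝ] V) (hu : IsNilpotent ((u : V →ₗ[ℝ] V) - 1)) :
    IsNilpotent (((u⁻¹ : V ≃ₗ[ℝ] V) : V →ₗ[ℝ] V) - 1) := by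
  have h1 : (((u⁻¹ : V ≃ₗ[ℝ] V) : V →ₗ[ℝ] V)) * (u : V →ₗ[ℝ] V) = 1 := by
    ext v; exact u.symm_apply_apply v
  have h2 : (u : V →ₗ[ℝ] V) * (((u⁻¹ : V ≃ₗ[ℝ] V) : V →ₗ[ℝ] V)) = 1 := by
    ext v; exact u.apply_symm_apply v
  have h3 : (((u⁻¹ : V ≃ₗ[ℝ] V) : V →ₗ[ℝ] V) - 1) =
      (-((u⁻¹ : V ≃ₗ[ℝ] V) : V →ₗ[ℝ] V)) * ((u : V →ₗ[ℝ] V) - 1) := by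
    rw [mul_sub, neg_mul, h1, mul_one, neg_sub_neg]
  rw [h3]
  refine Commute.isNilpotent_mul_left ?_ hu
  change _ * _ = _ * _
  rw [mul_sub, sub_mul, neg_mul, mul_neg, h1, h2]; simp
theorem morse_pow_apply {V : Type*} [NormedAddCommGroup V] [NormedSpace ℝ V]
    (h a : V ≃ₗ[ℝ] V) (hha : Commute h a) (ν : ℝ) (v : V)
    (hv : v ∈ Module.End.eigenspace (h : V →ₗ[ℝ] V) ν) (n : ℕ) :
    ((h * a) ^ n) v = ν ^ n • (a ^ n) v := by
  have h1 : (h ^ n) v = ν ^ n • v := by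
    have hv' : h v = ν • v := Module.End.mem_eigenspace_iff.1 hv
    induction n with
    | zero => simp
    | succ n ih => rw [pow_succ', LinearEquiv.mul_apply, ih, map_smul, hv', smul_smul, pow_succ]
  rw [hha.mul_pow, (hha.pow_pow n n).eq, LinearEquiv.mul_apply, h1, map_smul]

theorem morse_tendsto_aux (k : ℕ) (r : ℝ) (hr : 0 < r) (hr1 : r < 1) :
    Tendsto (fun n : ℕ => ((n : ℝ) + 1) ^ k * r ^ n) atTop (𝓝 0) := by
  have h1 := (tendsto_pow_const_mul_const_pow_of_lt_one k hr.le hr1).comp (tendsto_add_atTop_nat 1)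
  have h2 := h1.mul_const r⁻¹
  rw [zero_mul] at h2
  refine h2.congr fun n => ?_
  simp only [Function.comp_apply]
  push_cast
  rw [pow_succ, ← mul_assoc, mul_assoc, mul_inv_cancel₀ hr.ne', mul_one]

theorem morse_ratio {V : Type*} [NormedAddCommGroup V] [NormedSpace ℝ V]
    (h a : V ≃ₗ[ℝ] V) (hha : Commute h a) (ha : MorseGrowth a) (ha' : MorseGrowth a⁻¹)
    (μ ν : ℝ) (hν : 0 < ν) (hνμ : ν < μ) (v w : V) (hv0 : v ≠ 0)
    (hv : v ∈ Module.End.eigenspace (h : V →ₗ[ℝ] V) μ)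
    (hw : w ∈ Module.End.eigenspace (h : V →ₗ[ℝ] V) ν) :
    Tendsto (fun n : ℕ => ‖((h * a) ^ n) w‖ / ‖((h * a) ^ n) v‖) atTop (𝓝 0) := by
  obtain ⟨C, d, hC, hCd⟩ := ha
  obtain ⟨C', d', hC', hCd'⟩ := ha'
  have hμ : 0 < μ := hν.trans hνμ
  have hvn : 0 < ‖v‖ := norm_pos_iff.2 hv0
  have key := (morse_tendsto_aux (d + d') (ν / μ) (by positivity)
    ((div_lt_one hμ).2 hνμ)).const_mul (C * C' * ‖w‖ / ‖v‖)
  rw [mul_zero] at key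
  refine squeeze_zero (fun n => by positivity) (fun n => ?_) key
  rw [morse_pow_apply h a hha μ v hv, morse_pow_apply h a hha ν w hw, norm_smul, norm_smul,
    norm_pow, norm_pow, Real.norm_of_nonneg hν.le, Real.norm_of_nonneg hμ.le]
  have h0 : (a ^ n) v ≠ 0 := by simpa using hv0
  have hA : 0 < ‖(a ^ n) v‖ := norm_pos_iff.2 h0
  have h1 : ‖v‖ ≤ C' * ((n : ℝ) + 1) ^ d' * ‖(a ^ n) v‖ := by
    have := hCd' n ((a ^ n) v)
    rwa [← LinearEquiv.mul_apply, inv_pow, inv_mul_cancel, LinearEquiv.coe_one, id] at this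
  have h2 := hCd n w
  rw [div_le_iff₀ (by positivity)]
  calc ν ^ n * ‖(a ^ n) w‖ ≤ ν ^ n * (C * ((n : ℝ) + 1) ^ d * ‖w‖) := by gcongr
    _ = ν ^ n * (C * ((n : ℝ) + 1) ^ d * ‖w‖) * (‖v‖ / ‖v‖) := by
        rw [div_self hvn.ne', mul_one]
    _ ≤ ν ^ n * (C * ((n : ℝ) + 1) ^ d * ‖w‖) * ((C' * ((n : ℝ) + 1) ^ d' * ‖(a ^ n) v‖) / ‖v‖) := by
        gcongr
    _ = _ := by rw [div_pow, pow_add]; field_simp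

theorem morse_ratio_sup {V : Type*} [NormedAddCommGroup V] [NormedSpace ℝ V]
    (h a : V ≃ₗ[ℝ] V) (hha : Commute h a) (ha : MorseGrowth a) (ha' : MorseGrowth a⁻¹)
    (μ : ℝ) (v w : V) (hv0 : v ≠ 0)
    (hv : v ∈ Module.End.eigenspace (h : V →ₗ[ℝ] V) μ)
    (hw : w ∈ ⨆ ν : {ν : ℝ // 0 < ν ∧ ν < μ}, Module.End.eigenspace (h : V →ₗ[ℝ] V) ν) :
    Tendsto (fun n : ℕ => ‖((h * a) ^ n) w‖ / ‖((h * a) ^ n) v‖) atTop (𝓝 0) := by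
  refine Submodule.iSup_induction _ (motive := fun w =>
    Tendsto (fun n : ℕ => ‖((h * a) ^ n) w‖ / ‖((h * a) ^ n) v‖) atTop (𝓝 0)) hw ?_ ?_ ?_
  · intro ν w hw
    exact morse_ratio h a hha ha ha' μ ν ν.2.1 ν.2.2 v w hv0 hv hw
  · simp
  · intro x y hx hy
    have := hx.add hy
    rw [add_zero] at this
    refine squeeze_zero (fun n => by positivity) (fun n => ?_) this
    rw [← add_div, map_add]
    gcongr
    exact norm_add_le _ _

theorem morse_defect {V : Type*} [NormedAddCommGroup V] [NormedSpace ℝ V] [FiniteDimensional ℝ V]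
    (h a : V ≃ₗ[ℝ] V) (hha : Commute h a) (ha : MorseGrowth a) (ha' : MorseGrowth a⁻¹)
    (μ : ℝ) (v w : V) (hv0 : v ≠ 0)
    (hv : v ∈ Module.End.eigenspace (h : V →ₗ[ℝ] V) μ)
    (hw : w ∈ ⨆ ν : {ν : ℝ // 0 < ν ∧ ν < μ}, Module.End.eigenspace (h : V →ₗ[ℝ] V) ν) :
    Tendsto (fun n : ℕ => ‖((h : V →ₗ[ℝ] V) - μ • 1) (((h * a) ^ n) (v + w))‖ /
      ‖((h * a) ^ n) (v + w)‖) atTop (𝓝 0) := by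
  have hr := morse_ratio_sup h a hha ha ha' μ v w hv0 hv hw
  set T : V →ₗ[ℝ] V := (h : V →ₗ[ℝ] V) - μ • 1 with hT
  let T' : V →L[ℝ] V := LinearMap.toContinuousLinearMap T
  have hlim : Tendsto (fun n : ℕ => ‖T'‖ * ((‖((h * a) ^ n) w‖ / ‖((h * a) ^ n) v‖) /
      (1 - (‖((h * a) ^ n) w‖ / ‖((h * a) ^ n) v‖)))) atTop (𝓝 0) := by
    have h1 := (hr.div (hr.const_sub 1) (by simp)).const_mul ‖T'‖
    simpa using h1
  refine squeeze_zero' (Eventually.of_forall fun n => by positivity) ?_ hlim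
  filter_upwards [hr.eventually_lt_const (show (0 : ℝ) < 1 by simp)] with n hn
  have hTv : T (((h * a) ^ n) v) = 0 := by
    rw [morse_pow_apply h a hha μ v hv]
    have hc : h ((a ^ n) v) = (a ^ n) (h v) := by
      rw [← LinearEquiv.mul_apply, ← LinearEquiv.mul_apply, (hha.pow_right n).eq]
    have hv' : h v = μ • v := Module.End.mem_eigenspace_iff.1 hv
    simp [hT, hc, hv']
  have hA : 0 < ‖((h * a) ^ n) v‖ := norm_pos_iff.2 (by simpa using hv0)
  have hlt : ‖((h * a) ^ n) w‖ < ‖((h * a) ^ n) v‖ := by rwa [div_lt_one hA] at hn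
  rw [map_add, map_add, hTv, zero_add]
  have h1 : ‖T (((h * a) ^ n) w)‖ ≤ ‖T'‖ * ‖((h * a) ^ n) w‖ := T'.le_opNorm _
  have h2 : ‖((h * a) ^ n) v‖ - ‖((h * a) ^ n) w‖ ≤ ‖((h * a) ^ n) v + ((h * a) ^ n) w‖ := by
    have := norm_sub_le (((h * a) ^ n) v + ((h * a) ^ n) w) (((h * a) ^ n) w)
    rw [add_sub_cancel_right] at this
    linarith
  have h3 : (‖((h * a) ^ n) w‖ / ‖((h * a) ^ n) v‖) / (1 - (‖((h * a) ^ n) w‖ / ‖((h * a) ^ n) v‖))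
      = ‖((h * a) ^ n) w‖ / (‖((h * a) ^ n) v‖ - ‖((h * a) ^ n) w‖) := by
    have := sub_pos.2 hlt
    rw [one_sub_div hA.ne', div_div_div_cancel_right₀ hA.ne']
  rw [h3, ← mul_div_assoc]
  exact div_le_div₀ (by positivity) h1 (sub_pos.2 hlt) h2

noncomputable def morseF {V : Type*} [NormedAddCommGroup V] [NormedSpace ℝ V]
    (T : V →ₗ[ℝ] V) (p : ℙ ℝ V) : ℝ := ‖T p.rep‖ / ‖p.rep‖

theorem morseF_mk {V : Type*} [NormedAddCommGroup V] [NormedSpace ℝ V]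
    (T : V →ₗ[ℝ] V) (v : V) (hv : v ≠ 0) :
    morseF T (Projectivization.mk ℝ v hv) = ‖T v‖ / ‖v‖ := by
  obtain ⟨c, hc⟩ := Projectivization.exists_smul_eq_mk_rep ℝ v hv
  rw [morseF, ← hc, Units.smul_def, map_smul, norm_smul, norm_smul,
    mul_div_mul_left _ _ (norm_ne_zero_iff.2 c.ne_zero)]

theorem morseF_continuous {V : Type*} [NormedAddCommGroup V] [NormedSpace ℝ V]
    [FiniteDimensional ℝ V] (T : V →ₗ[ℝ] V) : Continuous (morseF T) := by
  refine continuous_coinduced_dom.2 ?_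
  have : (morseF T ∘ Quotient.mk (projectivizationSetoid ℝ V)) =
      fun v : {v : V // v ≠ 0} => ‖T v‖ / ‖(v : V)‖ := by
    funext v
    exact morseF_mk T v.1 v.2
  change Continuous (morseF T ∘ Quotient.mk (projectivizationSetoid ℝ V))
  rw [this]
  have hT : Continuous T := T.continuous_of_finiteDimensional
  exact ((hT.comp continuous_subtype_val).norm).div continuous_subtype_val.norm
    (fun v => norm_ne_zero_iff.2 v.2)

theorem morse_compactSpace {V : Type*} [NormedAddCommGroup V] [NormedSpace ℝ V]
    [FiniteDimensional ℝ V] : CompactSpace (ℙ ℝ V) := by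
  have : ProperSpace V := FiniteDimensional.proper ℝ V
  have : CompactSpace (Metric.sphere (0 : V) 1) :=
    isCompact_iff_compactSpace.1 (isCompact_sphere 0 1)
  have hne : ∀ x : Metric.sphere (0 : V) 1, (x : V) ≠ 0 := fun x => by
    have := x.2
    intro h0
    rw [h0] at this
    simp at this
  let q : Metric.sphere (0 : V) 1 → ℙ ℝ V := fun x => Projectivization.mk ℝ x (hne x)
  have hq : Continuous q := by
    have h1 : Continuous (Quotient.mk (projectivizationSetoid ℝ V)) := continuous_coinduced_rng
    exact h1.comp (continuous_subtype_val.subtype_mk hne)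
  have hs : Function.Surjective q := by
    intro p
    induction p using Projectivization.ind with
    | h v hv =>
      have hn : ‖v‖ ≠ 0 := norm_ne_zero_iff.2 hv
      refine ⟨⟨‖v‖⁻¹ • v, by simp [norm_smul, hn]⟩, ?_⟩
      exact (Projectivization.mk_eq_mk_iff' _ _ _ _ _).2 ⟨‖v‖⁻¹, rfl⟩
  exact hs.compactSpace hq

theorem morse_rep_mem {V : Type*} [NormedAddCommGroup V] [NormedSpace ℝ V]
    (W : Submodule ℝ V) (v : V) (hv : v ≠ 0) :
    (Projectivization.mk ℝ v hv).rep ∈ W ↔ v ∈ W := by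
  obtain ⟨c, hc⟩ := Projectivization.exists_smul_eq_mk_rep ℝ v hv
  rw [← hc, Units.smul_def]
  exact W.smul_mem_iff c.ne_zero

theorem morse_set_eq {V : Type*} [NormedAddCommGroup V] [NormedSpace ℝ V]
    (h : V ≃ₗ[ℝ] V) (μ : ℝ) :
    {p : ℙ ℝ V | p.rep ∈ Module.End.eigenspace (h : V →ₗ[ℝ] V) μ} =
      {p | morseF ((h : V →ₗ[ℝ] V) - μ • 1) p = 0} := by
  ext p
  simp [morseF, sub_eq_zero, p.rep_nonzero]

theorem morse_omega_zero {P : Type*} [TopologicalSpace P] (φ : ℤ → P → P) (F : P → ℝ)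
    (hF : Continuous F) (x : P) (hx : Tendsto (fun n : ℕ => F (φ n x)) atTop (𝓝 0)) :
    omegaLimit atTop φ {x} ⊆ {p | F p = 0} := by
  intro y hy
  rw [mem_omegaLimit_singleton_iff_mapClusterPt] at hy
  have h1 : MapClusterPt (F y) atTop (fun t : ℤ => F (φ t x)) := hy.tendsto_comp hF.continuousAt
  have h2 : Tendsto (fun t : ℤ => F (φ t x)) atTop (𝓝 0) := by
    rw [← Nat.map_cast_int_atTop, tendsto_map'_iff]
    exact hx
  have h3 : ClusterPt (F y) (𝓝 (0 : ℝ)) := h1.clusterPt.mono h2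
  exact eq_of_nhds_neBot h3

theorem projFlow_mk {V : Type*} [NormedAddCommGroup V] [NormedSpace ℝ V]
    (g : V ≃ₗ[ℝ] V) (t : ℤ) (v : V) (hv : v ≠ 0) :
    projFlow g t (Projectivization.mk ℝ v hv) =
      Projectivization.mk ℝ ((g ^ t) v) (by simpa using hv) := rfl

theorem morse_omega {V : Type*} [NormedAddCommGroup V] [NormedSpace ℝ V] [FiniteDimensional ℝ V]
    (h a : V ≃ₗ[ℝ] V) (hha : Commute h a) (ha : MorseGrowth a) (ha' : MorseGrowth a⁻¹)
    (μ : ℝ) (v w : V) (hv0 : v ≠ 0)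
    (hv : v ∈ Module.End.eigenspace (h : V →ₗ[ℝ] V) μ)
    (hw : w ∈ ⨆ ν : {ν : ℝ // 0 < ν ∧ ν < μ}, Module.End.eigenspace (h : V →ₗ[ℝ] V) ν)
    (hvw : v + w ≠ 0) :
    omegaLimit atTop (projFlow (h * a)) {Projectivization.mk ℝ (v + w) hvw} ⊆
      {p : ℙ ℝ V | p.rep ∈ Module.End.eigenspace (h : V →ₗ[ℝ] V) μ} := by
  rw [morse_set_eq]
  refine morse_omega_zero _ _ (morseF_continuous _) _ ?_
  refine (morse_defect h a hha ha ha' μ v w hv0 hv hw).congr fun n => ?_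
  rw [projFlow_mk, morseF_mk, zpow_natCast]

theorem morse_eig_inv {V : Type*} [NormedAddCommGroup V] [NormedSpace ℝ V]
    (h : V ≃ₗ[ℝ] V) (μ : ℝ) (hμ : μ ≠ 0) :
    Module.End.eigenspace ((h⁻¹ : V ≃ₗ[ℝ] V) : V →ₗ[ℝ] V) μ⁻¹ =
      Module.End.eigenspace (h : V →ₗ[ℝ] V) μ := by
  ext v
  rw [Module.End.mem_eigenspace_iff, Module.End.mem_eigenspace_iff]
  change h.symm v = _ ↔ h v = _
  rw [LinearEquiv.symm_apply_eq, map_smul, eq_inv_smul_iff₀ hμ, eq_comm]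

theorem morse_alpha_eq {V : Type*} [NormedAddCommGroup V] [NormedSpace ℝ V]
    (g : V ≃ₗ[ℝ] V) (s : Set (ℙ ℝ V)) :
    omegaLimit atBot (projFlow g) s ⊆ omegaLimit atTop (projFlow g⁻¹) s := by
  have h1 := omegaLimit_subset_of_tendsto (projFlow g⁻¹) s (tendsto_neg_atBot_atTop (G := ℤ))
  have h2 : (fun (t : ℤ) x => projFlow g⁻¹ (-t) x) = projFlow g := by
    funext t x
    simp [projFlow]
  rwa [h2] at h1

theorem morse_alpha {V : Type*} [NormedAddCommGroup V] [NormedSpace ℝ V] [FiniteDimensional ℝ V]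
    (h a : V ≃ₗ[ℝ] V) (hha : Commute h a) (ha : MorseGrowth a) (ha' : MorseGrowth a⁻¹)
    (μ : ℝ) (hμ : 0 < μ) (v w : V) (hv0 : v ≠ 0)
    (hv : v ∈ Module.End.eigenspace (h : V →ₗ[ℝ] V) μ)
    (hw : w ∈ ⨆ ν : {ν : ℝ // μ < ν}, Module.End.eigenspace (h : V →ₗ[ℝ] V) ν)
    (hvw : v + w ≠ 0) :
    omegaLimit atBot (projFlow (h * a)) {Projectivization.mk ℝ (v + w) hvw} ⊆
      {p : ℙ ℝ V | p.rep ∈ Module.End.eigenspace (h : V →ₗ[ℝ] V) μ} := by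
  refine (morse_alpha_eq _ _).trans ?_
  have e1 : (h * a)⁻¹ = h⁻¹ * a⁻¹ := by rw [hha.eq, mul_inv_rev]
  rw [e1, ← morse_eig_inv h μ hμ.ne']
  refine morse_omega h⁻¹ a⁻¹ hha.inv_inv ha' (by rwa [inv_inv]) μ⁻¹ v w hv0
    (by rwa [morse_eig_inv h μ hμ.ne']) ?_ hvw
  revert hw
  apply SetLike.le_def.1
  refine iSup_le fun ν : {ν : ℝ // μ < ν} => ?_
  have hν : 0 < (ν : ℝ) := hμ.trans ν.2
  rw [← morse_eig_inv h ν hν.ne']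
  exact le_iSup (fun ν : {ν : ℝ // 0 < ν ∧ ν < μ⁻¹} =>
    Module.End.eigenspace ((h⁻¹ : V ≃ₗ[ℝ] V) : V →ₗ[ℝ] V) ν)
    ⟨(ν : ℝ)⁻¹, inv_pos.2 hν, inv_strictAnti₀ hμ ν.2⟩

/-- Let `g = e h u` be the multiplicative Jordan decomposition of
`g ∈ GL(V)` and `V = V_{λ₁} ⊕ ⋯ ⊕ V_{λ_n}` the eigenspace decomposition of `h`, with
`λ₁ > ⋯ > λ_n > 0`.  Then each `V_{λ_k}` is `g`-invariant, the projectivized eigenspaces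
`ℙ(V_{λ_k})` form a Morse decomposition of the induced flow on `ℙ(V)`, and the stable set
of `ℙ(V_{λ_i})` is `{[v_i + ⋯ + v_n] : v_k ∈ V_{λ_k}, v_i ≠ 0}`. -/
theorem eigenspaces_morse_decomposition
    {V : Type*} [NormedAddCommGroup V] [NormedSpace ℝ V] [FiniteDimensional ℝ V]
    (g e h u : V ≃ₗ[ℝ] V) (hg : g = e * h * u)
    (heh : Commute (e : V →ₗ[ℝ] V) (h : V →ₗ[ℝ] V))
    (heu : Commute (e : V →ₗ[ℝ] V) (u : V →ₗ[ℝ] V))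
    (hhu : Commute (h : V →ₗ[ℝ] V) (u : V →ₗ[ℝ] V))
    (he : Module.End.IsSemisimple (LinearMap.baseChange ℂ (e : V →ₗ[ℝ] V)) ∧
      ∀ μ ∈ spectrum ℂ (LinearMap.baseChange ℂ (e : V →ₗ[ℝ] V)), ‖μ‖ = 1)
    (hu : IsNilpotent ((u : V →ₗ[ℝ] V) - 1))
    (n : ℕ) (l : Fin n → ℝ) (hl : StrictAnti l) (hlpos : ∀ k, 0 < l k)
    (hdiag : ⨆ k : Fin n, Module.End.eigenspace (h : V →ₗ[ℝ] V) (l k) = ⊤) :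
    (∀ k, Submodule.map (g : V →ₗ[ℝ] V)
        (Module.End.eigenspace (h : V →ₗ[ℝ] V) (l k)) =
      Module.End.eigenspace (h : V →ₗ[ℝ] V) (l k)) ∧
    IsMorseDecomposition (projFlow g)
      (fun k : Fin n =>
        {p : ℙ ℝ V | p.rep ∈ Module.End.eigenspace (h : V →ₗ[ℝ] V) (l k)}) ∧
    (∀ i : Fin n,
      {p : ℙ ℝ V | omegaLimit atTop (projFlow g) {p} ⊆
          {q : ℙ ℝ V | q.rep ∈ Module.End.eigenspace (h : V →ₗ[ℝ] V) (l i)}} =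
        {p : ℙ ℝ V |
          p.rep ∈ (⨆ k ≥ i, Module.End.eigenspace (h : V →ₗ[ℝ] V) (l k)) ∧
          p.rep ∉ (⨆ k > i, Module.End.eigenspace (h : V →ₗ[ℝ] V) (l k))}) := by
  have heh' : Commute e h := by
    ext v; exact LinearMap.congr_fun heh.eq v
  have heu' : Commute e u := by
    ext v; exact LinearMap.congr_fun heu.eq v
  have hhu' : Commute h u := by
    ext v; exact LinearMap.congr_fun hhu.eq v
  have hga : g = h * (e * u) := by rw [hg, heh'.eq, mul_assoc]
  have hha : Commute h (e * u) := heh'.symm.mul_right hhu'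
  have hs := morse_span e he
  have ha : MorseGrowth (e * u) := morse_growth e u heu' hs hu
  have ha' : MorseGrowth (e * u)⁻¹ := by
    have := morse_growth e⁻¹ u⁻¹ heu'.inv_inv (morse_span_inv e hs) (morse_nilp_inv u hu)
    rwa [← mul_inv_rev, ← heu'.eq] at this
  clear hg heh heu hhu he hu
  generalize e * u = a at *
  clear heh' heu' hhu' hs e u
  have hgh : Commute h g := by rw [hga]; exact (Commute.refl h).mul_right hha
  set W : Fin n → Submodule ℝ V := fun k => Module.End.eigenspace (h : V →ₗ[ℝ] V) (l k) with hW
  have hmem : ∀ (k : Fin n) (t : ℤ) (v : V), v ∈ W k → (g ^ t) v ∈ W k := by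
    intro k t v hv
    have hv' : h v = l k • v := Module.End.mem_eigenspace_iff.1 hv
    refine Module.End.mem_eigenspace_iff.2 ?_
    change h ((g ^ t) v) = _
    rw [← LinearEquiv.mul_apply, (hgh.zpow_right t).eq, LinearEquiv.mul_apply, hv', map_smul]
  have hcomp : CompactSpace (ℙ ℝ V) := morse_compactSpace
  have hindep : iSupIndep W :=
    (Module.End.eigenspaces_iSupIndep (h : V →ₗ[ℝ] V)).comp hl.injective
  have hdisj : ∀ i j : Fin n, i ≠ j → ∀ p : ℙ ℝ V, p.rep ∈ W i → p.rep ∈ W j → False := by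
    intro i j hij p hi hj
    exact p.rep_nonzero (Submodule.disjoint_def.1 (hindep.pairwiseDisjoint hij) _ hi hj)
  have homega : ∀ (i : Fin n) (v w : V) (hvw : v + w ≠ 0), v ≠ 0 → v ∈ W i →
      w ∈ (⨆ k > i, W k) → omegaLimit atTop (projFlow g) {Projectivization.mk ℝ (v + w) hvw} ⊆
        {p : ℙ ℝ V | p.rep ∈ W i} := by
    intro i v w hvw hv0 hv hw
    rw [hga]
    refine morse_omega h a hha ha ha' (l i) v w hv0 hv ?_ hvw
    revert hw
    apply SetLike.le_def.1
    refine iSup₂_le fun k hk => ?_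
    exact le_iSup (fun ν : {ν : ℝ // 0 < ν ∧ ν < l i} =>
      Module.End.eigenspace (h : V →ₗ[ℝ] V) ν) ⟨l k, hlpos k, hl hk⟩
  have halpha : ∀ (i : Fin n) (v w : V) (hvw : v + w ≠ 0), v ≠ 0 → v ∈ W i →
      w ∈ (⨆ k < i, W k) → omegaLimit atBot (projFlow g) {Projectivization.mk ℝ (v + w) hvw} ⊆
        {p : ℙ ℝ V | p.rep ∈ W i} := by
    intro i v w hvw hv0 hv hw
    rw [hga]
    refine morse_alpha h a hha ha ha' (l i) (hlpos i) v w hv0 hv ?_ hvw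
    revert hw
    apply SetLike.le_def.1
    refine iSup₂_le fun k hk => ?_
    exact le_iSup (fun ν : {ν : ℝ // l i < ν} =>
      Module.End.eigenspace (h : V →ₗ[ℝ] V) ν) ⟨l k, hl hk⟩
  -- decomposition of a point
  have hdec : ∀ p : ℙ ℝ V, ∃ f : Fin n → V, (∀ k, f k ∈ W k) ∧ ∑ k, f k = p.rep ∧
      ∃ i j : Fin n, f i ≠ 0 ∧ f j ≠ 0 ∧ (∀ k, f k ≠ 0 → i ≤ k) ∧ (∀ k, f k ≠ 0 → k ≤ j) := by
    intro p
    have hp : p.rep ∈ ⨆ k ∈ (Finset.univ : Finset (Fin n)), W k := by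
      simp only [Finset.mem_univ, iSup_pos]
      rw [hW, hdiag]; trivial
    obtain ⟨f, hf⟩ := (Submodule.mem_iSup_finset_iff_exists_sum _ _).1 hp
    refine ⟨fun k => f k, fun k => (f k).2, hf, ?_⟩
    classical
    have hne : (Finset.univ.filter fun k : Fin n => (f k : V) ≠ 0).Nonempty := by
      by_contra hcon
      rw [Finset.not_nonempty_iff_eq_empty, Finset.filter_eq_empty_iff] at hcon
      refine p.rep_nonzero ?_
      rw [← hf]
      exact Finset.sum_eq_zero fun k hk => not_not.1 (hcon hk)
    refine ⟨Finset.min' _ hne, Finset.max' _ hne, (Finset.mem_filter.1 (Finset.min'_mem _ hne)).2,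
      (Finset.mem_filter.1 (Finset.max'_mem _ hne)).2, fun k hk => ?_, fun k hk => ?_⟩
    · exact Finset.min'_le _ k (Finset.mem_filter.2 ⟨Finset.mem_univ k, hk⟩)
    · exact Finset.le_max' _ k (Finset.mem_filter.2 ⟨Finset.mem_univ k, hk⟩)
  have hom : ∀ (p : ℙ ℝ V) (i : Fin n) (v w : V), v + w = p.rep → v ≠ 0 → v ∈ W i →
      w ∈ (⨆ k > i, W k) → omegaLimit atTop (projFlow g) {p} ⊆ {p : ℙ ℝ V | p.rep ∈ W i} := by
    intro p i v w hvw hv0 hv hw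
    have h0 : v + w ≠ 0 := hvw ▸ p.rep_nonzero
    have := homega i v w h0 hv0 hv hw
    have e1 : Projectivization.mk ℝ (v + w) h0 = p := by
      conv_rhs => rw [← p.mk_rep]
      congr 1
    rwa [e1] at this
  have hal : ∀ (p : ℙ ℝ V) (i : Fin n) (v w : V), v + w = p.rep → v ≠ 0 → v ∈ W i →
      w ∈ (⨆ k < i, W k) → omegaLimit atBot (projFlow g) {p} ⊆ {p : ℙ ℝ V | p.rep ∈ W i} := by
    intro p i v w hvw hv0 hv hw
    have h0 : v + w ≠ 0 := hvw ▸ p.rep_nonzero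
    have := halpha i v w h0 hv0 hv hw
    have e1 : Projectivization.mk ℝ (v + w) h0 = p := by
      conv_rhs => rw [← p.mk_rep]
      congr 1
    rwa [e1] at this
  have hmain : ∀ p : ℙ ℝ V, ∃ i j : Fin n, ∃ v w : V, v + w = p.rep ∧ v ≠ 0 ∧ v ∈ W i ∧
      w ∈ (⨆ k > i, W k) ∧ omegaLimit atTop (projFlow g) {p} ⊆ {p : ℙ ℝ V | p.rep ∈ W i} ∧
      omegaLimit atBot (projFlow g) {p} ⊆ {p : ℙ ℝ V | p.rep ∈ W j} ∧
      (i = j → p.rep ∈ W i) := by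
    intro p
    obtain ⟨f, hfW, hfs, i, j, hi, hj, hik, hkj⟩ := hdec p
    have h1 : ∑ k ∈ Finset.univ.erase i, f k ∈ (⨆ k > i, W k) := by
      refine Submodule.sum_mem _ fun k hk => ?_
      by_cases h0 : f k = 0
      · rw [h0]; exact Submodule.zero_mem _
      · have : i < k := lt_of_le_of_ne (hik k h0) (Finset.ne_of_mem_erase hk).symm
        exact Submodule.mem_iSup_of_mem k (Submodule.mem_iSup_of_mem this (hfW k))
    have h2 : ∑ k ∈ Finset.univ.erase j, f k ∈ (⨆ k < j, W k) := by
      refine Submodule.sum_mem _ fun k hk => ?_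
      by_cases h0 : f k = 0
      · rw [h0]; exact Submodule.zero_mem _
      · have : k < j := lt_of_le_of_ne (hkj k h0) (Finset.ne_of_mem_erase hk)
        exact Submodule.mem_iSup_of_mem k (Submodule.mem_iSup_of_mem this (hfW k))
    have e1 : f i + ∑ k ∈ Finset.univ.erase i, f k = p.rep := by
      rw [Finset.add_sum_erase _ _ (Finset.mem_univ i), hfs]
    have e2 : f j + ∑ k ∈ Finset.univ.erase j, f k = p.rep := by
      rw [Finset.add_sum_erase _ _ (Finset.mem_univ j), hfs]
    refine ⟨i, j, f i, _, e1, hi, hfW i, h1, hom p i _ _ e1 hi (hfW i) h1,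
      hal p j _ _ e2 hj (hfW j) h2, ?_⟩
    rintro rfl
    rw [← e1, Finset.sum_eq_zero, add_zero]
    · exact hfW i
    · intro k hk
      by_contra h0
      exact Finset.ne_of_mem_erase hk (le_antisymm (hkj k h0) (hik k h0))
  have huniq : ∀ (p : ℙ ℝ V) (F : Filter ℤ) [F.NeBot] (i j : Fin n),
      omegaLimit F (projFlow g) {p} ⊆ {p : ℙ ℝ V | p.rep ∈ W i} →
      omegaLimit F (projFlow g) {p} ⊆ {p : ℙ ℝ V | p.rep ∈ W j} → i = j := by
    intro p F _ i j hi hj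
    obtain ⟨q, hq⟩ := nonempty_omegaLimit F (projFlow g) {p} (Set.singleton_nonempty p)
    by_contra hij
    exact hdisj i j hij q (hi hq) (hj hq)
  have hflow : ∀ (k : Fin n) (t : ℤ) (p : ℙ ℝ V), p.rep ∈ W k → (projFlow g t p).rep ∈ W k := by
    intro k t p hp
    rw [← p.mk_rep, projFlow_mk, morse_rep_mem]
    exact hmem k t _ hp
  refine ⟨?_, ⟨?_, ?_, ?_, ?_, ?_⟩, ?_⟩
  · intro k
    refine le_antisymm ?_ ?_
    · rintro _ ⟨v, hv, rfl⟩
      have h1 := hmem k 1 v hv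
      rw [zpow_one] at h1
      exact h1
    · intro v hv
      refine ⟨(g ^ (-1 : ℤ)) v, hmem k (-1) v hv, ?_⟩
      rw [zpow_neg_one]
      exact g.apply_symm_apply v
  · intro j
    refine IsClosed.isCompact ?_
    change IsClosed {p : ℙ ℝ V | p.rep ∈ Module.End.eigenspace (h : V →ₗ[ℝ] V) (l j)}
    rw [morse_set_eq]
    exact isClosed_eq (morseF_continuous _) continuous_const
  · intro j t
    refine Set.Subset.antisymm ?_ ?_
    · rintro _ ⟨p, hp, rfl⟩
      exact hflow j t p hp
    · intro p hp
      refine ⟨projFlow g (-t) p, hflow j (-t) p hp, ?_⟩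
      induction p using Projectivization.ind with
      | h v hv =>
        rw [projFlow_mk, projFlow_mk]
        congr 1
        rw [← LinearEquiv.mul_apply, ← zpow_add, add_neg_cancel, zpow_zero]
        rfl
  · intro i j hij
    exact Set.disjoint_left.2 fun p hi hj => hdisj i j hij p hi hj
  · intro p
    obtain ⟨i, j, -, -, -, -, -, -, hi, hj, -⟩ := hmain p
    exact ⟨hi.trans (Set.subset_iUnion (fun k => {p : ℙ ℝ V | p.rep ∈ W k}) i),
      hj.trans (Set.subset_iUnion (fun k => {p : ℙ ℝ V | p.rep ∈ W k}) j)⟩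
  · intro p k h1 h2
    obtain ⟨i, j, -, -, -, -, -, -, hi, hj, hij⟩ := hmain p
    have e1 := huniq p atTop k i h1 hi
    have e2 := huniq p atBot k j h2 hj
    subst e1
    exact hij e2
  · intro i
    ext p
    constructor
    · intro h1
      obtain ⟨i', j, v, w, hvw, hv0, hv, hw, hi, -, -⟩ := hmain p
      obtain rfl := huniq p atTop i i' h1 hi
      have hle : (⨆ k > i, W k) ≤ ⨆ k ≥ i, W k :=
        biSup_mono fun k hk => le_of_lt hk
      refine ⟨?_, fun h2 => hv0 ?_⟩
      · change p.rep ∈ (⨆ k ≥ i, W k)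
        rw [← hvw]
        exact add_mem (Submodule.mem_iSup_of_mem i (Submodule.mem_iSup_of_mem le_rfl hv)) (hle hw)
      · change p.rep ∈ (⨆ k > i, W k) at h2
        rw [← hvw] at h2
        have h3 := (Submodule.add_mem_iff_left _ hw).1 h2
        have hle2 : (⨆ k > i, W k) ≤ ⨆ k, ⨆ (_ : k ≠ i), W k :=
          biSup_mono fun k hk => ne_of_gt hk
        exact Submodule.disjoint_def.1 (hindep i) v hv (hle2 h3)
    · rintro ⟨h1, h2⟩
      change p.rep ∈ (⨆ k ≥ i, W k) at h1
      change p.rep ∉ (⨆ k > i, W k) at h2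
      have hle : (⨆ k ≥ i, W k) ≤ W i ⊔ ⨆ k > i, W k := by
        refine iSup₂_le fun k hk => ?_
        rcases eq_or_lt_of_le (show i ≤ k from hk) with rfl | hlt
        · exact le_sup_left
        · exact le_sup_of_le_right (le_iSup₂_of_le k hlt le_rfl)
      obtain ⟨v, hv, w, hw, hvw⟩ := Submodule.mem_sup.1 (hle h1)
      refine hom p i v w hvw ?_ hv hw
      rintro rfl
      rw [zero_add] at hvw
      exact h2 (hvw ▸ hw)
end

section
/- Let g ∈ GL(V), V finite-dimensional, with Jordan decomposition g = e h u. Then the chain recurrent set of the induced flow on ℙ(V) equals the fixed-point set of the induced flow of the hyperbolic part: R_C(g) = fix(h) = ⋃_i ℙ(V_{λ_i}), where V_{λ_i} are the eigenspaces of h; and each ℙ(V_{λ_i}) is chain transitive, so {ℙ(V_{λ_i})} is the finest Morse decomposition. -/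
open Filter Topology LinearAlgebra.Projectivization

/-- An `(ε, T)`-chain from `x` to `y` for a discrete-time flow `φ`, with respect to the
distance function `d`. -/
def IsChainZ {P : Type*} (d : P → P → ℝ) (φ : ℤ → P → P) (ε : ℝ) (T : ℤ) (x y : P) : Prop :=
  ∃ n : ℕ, ∃ xs : Fin (n + 2) → P, ∃ ts : Fin (n + 1) → ℤ,
    xs 0 = x ∧ xs (Fin.last (n + 1)) = y ∧
    ∀ i : Fin (n + 1), T ≤ ts i ∧ d (φ (ts i) (xs i.castSucc)) (xs i.succ) < ε

set_option linter.unusedSectionVars false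
section LinAlg
variable {V : Type*} [NormedAddCommGroup V] [NormedSpace ℝ V] [FiniteDimensional ℝ V]

lemma crs_pow_apply {V : Type*} [AddCommGroup V] [Module ℝ V] (u : V ≃ₗ[ℝ] V) (t : ℕ) (v : V) :
    (u ^ t) v = ((u : V →ₗ[ℝ] V) ^ t) v := by
  rw [LinearEquiv.pow_apply, Module.End.pow_apply]; rfl

lemma crs_uni_expand {V : Type*} [AddCommGroup V] [Module ℝ V] (N : Module.End ℝ V) (v : V) (d : ℕ)
    (hd : (N ^ d) v = 0) (t : ℕ) :
    ((N + 1) ^ t) v = ∑ i ∈ Finset.range d, (t.choose i : ℝ) • (N ^ i) v := by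
  have hz : ∀ i, d ≤ i → (N ^ i) v = 0 := by
    intro i hi
    obtain ⟨j, rfl⟩ := Nat.exists_eq_add_of_le' hi
    rw [pow_add, Module.End.mul_apply, hd, map_zero]
  have h1 : ((N + 1) ^ t) v = ∑ i ∈ Finset.range (t + 1), (t.choose i : ℝ) • (N ^ i) v := by
    rw [(Commute.one_right N).add_pow]
    simp only [one_pow, mul_one, LinearMap.sum_apply]
    refine Finset.sum_congr rfl fun i _ => ?_
    rw [← Nat.cast_comm, ← nsmul_eq_mul, LinearMap.smul_apply, Nat.cast_smul_eq_nsmul]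
  rw [h1]
  have h2 : ∀ D, t + 1 ≤ D → ∑ i ∈ Finset.range (t + 1), (t.choose i : ℝ) • (N ^ i) v
      = ∑ i ∈ Finset.range D, (t.choose i : ℝ) • (N ^ i) v := by
    intro D hD
    refine Finset.sum_subset (Finset.range_mono hD) fun i _ hi => ?_
    rw [Nat.choose_eq_zero_of_lt (by simpa using hi)]; simp
  have h3 : ∀ D, d ≤ D → ∑ i ∈ Finset.range d, (t.choose i : ℝ) • (N ^ i) v
      = ∑ i ∈ Finset.range D, (t.choose i : ℝ) • (N ^ i) v := by
    intro D hD
    refine Finset.sum_subset (Finset.range_mono hD) fun i _ hi => ?_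
    rw [hz i (by simpa using hi)]; simp
  rw [h2 (max (t+1) d) (le_max_left _ _), h3 (max (t+1) d) (le_max_right _ _)]

lemma crs_choose_tendsto {i k : ℕ} (hik : i < k) :
    Tendsto (fun t : ℕ => (t.choose i : ℝ) / (t : ℝ) ^ k) atTop (𝓝 0) := by
  have h1 : Tendsto (fun t : ℕ => ((t : ℝ))⁻¹) atTop (𝓝 0) := tendsto_inv_atTop_nhds_zero_nat
  refine squeeze_zero' (Eventually.of_forall fun t => by positivity) ?_ h1
  filter_upwards [eventually_ge_atTop 1] with t ht
  have ht' : (1 : ℝ) ≤ t := by exact_mod_cast ht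
  have h2 : (t.choose i : ℝ) ≤ (t : ℝ) ^ i := by exact_mod_cast Nat.choose_le_pow t i
  have h3 : (t : ℝ) ^ (i + 1) ≤ (t : ℝ) ^ k := pow_le_pow_right₀ ht' hik
  rw [div_le_iff₀ (by positivity)]
  calc (t.choose i : ℝ) ≤ (t : ℝ) ^ i := h2
    _ = (t : ℝ)⁻¹ * (t : ℝ) ^ (i + 1) := by field_simp; ring
    _ ≤ _ := by gcongr

lemma crs_choose_tendsto_self (k : ℕ) :
    Tendsto (fun t : ℕ => (t.choose k : ℝ) / (t : ℝ) ^ k) atTop (𝓝 (1 / (k.factorial : ℝ))) := by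
  have h := (isEquivalent_choose k)
  have h2 := h.div (Asymptotics.IsEquivalent.refl (u := fun t : ℕ => (t : ℝ) ^ k))
  refine h2.symm.tendsto_nhds ?_
  refine tendsto_const_nhds.congr' ?_
  filter_upwards [eventually_ge_atTop 1] with t ht
  have : (t : ℝ) ≠ 0 := by positivity
  simp only [Pi.div_apply]
  field_simp

lemma crs_uni_asymp (N : Module.End ℝ V) (v : V) (k : ℕ)
    (hd : (N ^ (k+1)) v = 0) :
    Tendsto (fun t : ℕ => ((t : ℝ) ^ k)⁻¹ • ((N + 1) ^ t) v) atTop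
      (𝓝 ((1 / (k.factorial : ℝ)) • (N ^ k) v)) := by
  simp_rw [crs_uni_expand N v (k+1) hd, Finset.sum_range_succ, smul_add, Finset.smul_sum, smul_smul]
  have h0 : ((1 / (k.factorial : ℝ)) • (N ^ k) v) =
     ∑ i ∈ Finset.range k, (0:ℝ) • (N ^ i) v + ((1 / (k.factorial : ℝ)) • (N ^ k) v) := by simp
  rw [h0]
  refine Tendsto.add (tendsto_finsetSum _ fun i hi => Tendsto.smul_const ?_ _) (Tendsto.smul_const ?_ _)
  · refine (crs_choose_tendsto (Finset.mem_range.1 hi)).congr fun t => ?_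
    rw [div_eq_inv_mul]
  · refine (crs_choose_tendsto_self k).congr fun t => ?_
    rw [div_eq_inv_mul]

lemma crs_uni_bdd (N : Module.End ℝ V) (hN : IsNilpotent N) (v : V) (x : ℝ) (hx0 : 0 ≤ x) (hx : x < 1) :
    ∃ C, ∀ t : ℕ, x ^ t * ‖((N + 1) ^ t) v‖ ≤ C := by
  obtain ⟨d, hd⟩ := hN
  have hd' : (N ^ d) v = 0 := by rw [hd]; rfl
  have hb : ∀ i : ℕ, ∃ C : ℝ, ∀ t : ℕ, (t : ℝ) ^ i * x ^ t ≤ C := by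
    intro i
    obtain ⟨C, hC⟩ := (tendsto_pow_const_mul_const_pow_of_lt_one i hx0 hx).bddAbove_range
    exact ⟨C, fun t => hC ⟨t, rfl⟩⟩
  choose C hC using hb
  refine ⟨∑ i ∈ Finset.range d, C i * ‖(N ^ i) v‖, fun t => ?_⟩
  rw [crs_uni_expand N v d hd' t]
  calc x ^ t * ‖∑ i ∈ Finset.range d, (t.choose i : ℝ) • (N ^ i) v‖
      ≤ x ^ t * ∑ i ∈ Finset.range d, ‖(t.choose i : ℝ) • (N ^ i) v‖ := by
        gcongr; exact norm_sum_le _ _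
    _ ≤ _ := by
        rw [Finset.mul_sum]
        refine Finset.sum_le_sum fun i _ => ?_
        rw [norm_smul, ← mul_assoc]
        gcongr
        refine le_trans ?_ (hC i t)
        rw [mul_comm]
        gcongr
        simp only [Real.norm_natCast]
        exact_mod_cast Nat.choose_le_pow t i

lemma crs_unif_bdd {ι : Type*} (F : ι → V →ₗ[ℝ] V) (h : ∀ v, ∃ C, ∀ t, ‖F t v‖ ≤ C) :
    ∃ C, 0 < C ∧ ∀ t v, ‖F t v‖ ≤ C * ‖v‖ := by
  have : CompleteSpace V := FiniteDimensional.complete ℝ V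
  obtain ⟨C, hC⟩ := banach_steinhaus (g := fun t => (F t).toContinuousLinearMap) (by simpa using h)
  refine ⟨max C 1, by positivity, fun t v => ?_⟩
  have := ((F t).toContinuousLinearMap).le_of_opNorm_le ((hC t).trans (le_max_left _ 1)) v
  simpa using this

lemma crs_e_bdd (e : V ≃ₗ[ℝ] V) 
    (he : Module.End.IsSemisimple (LinearMap.baseChange ℂ (e : V →ₗ[ℝ] V)) ∧
      ∀ μ ∈ spectrum ℂ (LinearMap.baseChange ℂ (e : V →ₗ[ℝ] V)), ‖μ‖ = 1) :
    ∃ C, 0 < C ∧ ∀ (t : ℤ) v, ‖(e ^ t) v‖ ≤ C * ‖v‖ := by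
  refine crs_unif_bdd (fun t : ℤ => ((e ^ t : V ≃ₗ[ℝ] V) : V →ₗ[ℝ] V)) ?_
  obtain ⟨hs, hspec⟩ := he
  set E : Module.End ℂ (TensorProduct ℝ ℂ V) := LinearMap.baseChange ℂ (e : V →ₗ[ℝ] V) with hE
  let F : ℤ → Module.End ℂ (TensorProduct ℝ ℂ V) := fun t =>
    LinearMap.baseChange ℂ ((e ^ t : V ≃ₗ[ℝ] V) : V →ₗ[ℝ] V)
  have hF1 : F 1 = E := by simp only [F, zpow_one]; rfl
  have hF0 : ∀ x, F 0 x = x := by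
    intro x
    have : F 0 = LinearMap.id := by
      simp only [F, zpow_zero]
      exact LinearMap.baseChange_id
    rw [this]; rfl
  have hFadd : ∀ s t x, F (s + t) x = F s (F t x) := by
    intro s t x
    have : F (s + t) = F s ∘ₗ F t := by
      simp only [F, zpow_add, ← LinearMap.baseChange_comp]
      rfl
    rw [this]; rfl
  have heig : ∀ μ : ℂ, ∀ x, E x = μ • x → μ ≠ 0 → ∀ t, F t x = μ ^ t • x := by
    intro μ x hx hμ t
    induction t using Int.induction_on with
    | zero => simp [hF0]
    | succ i ih =>
      rw [add_comm, hFadd, ih, map_smul, hF1, hx, smul_smul, zpow_add₀ hμ, zpow_one, mul_comm]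
    | pred i ih =>
      have h1 : F (-(i:ℤ)) x = F (-(i:ℤ) - 1) (F 1 x) := by
        rw [← hFadd]; congr 2; ring
      rw [hF1, hx, map_smul, ih] at h1
      rw [zpow_sub_one₀ hμ, mul_comm, mul_smul, h1, smul_smul, inv_mul_cancel₀ hμ, one_smul]
  let b := Module.finBasis ℝ V
  have key : ∀ G : TensorProduct ℝ ℂ V →ₗ[ℂ] ℂ, ∀ x, ∃ C : ℝ, ∀ t : ℤ, ‖G (F t x)‖ ≤ C := by
    intro G x
    let S : Submodule ℂ (TensorProduct ℝ ℂ V) :=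
      { carrier := {x | ∃ C : ℝ, ∀ t : ℤ, ‖G (F t x)‖ ≤ C}
        add_mem' := by
          rintro x y ⟨C, hC⟩ ⟨D, hD⟩
          refine ⟨C + D, fun t => ?_⟩
          rw [map_add, map_add]
          exact (norm_add_le _ _).trans (add_le_add (hC t) (hD t))
        zero_mem' := ⟨0, fun t => by simp⟩
        smul_mem' := by
          rintro c x ⟨C, hC⟩
          refine ⟨‖c‖ * C, fun t => ?_⟩
          rw [map_smul, map_smul, norm_smul]
          exact mul_le_mul_of_nonneg_left (hC t) (norm_nonneg _) }
    have hS : (⊤ : Submodule ℂ (TensorProduct ℝ ℂ V)) ≤ S := by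
      rw [← Module.End.iSup_maxGenEigenspace_eq_top E]
      refine iSup_le fun μ => ?_
      rw [(Module.End.isFinitelySemisimple_iff_isSemisimple.mpr hs).maxGenEigenspace_eq_eigenspace]
      intro x hx
      by_cases hx0 : x = 0
      · rw [hx0]; exact S.zero_mem
      have hev : Module.End.HasEigenvalue E μ :=
        Module.End.hasEigenvalue_of_hasEigenvector ⟨hx, hx0⟩
      have hμ := hspec μ hev.mem_spectrum
      have hμ0 : μ ≠ 0 := by rintro rfl; simp at hμ
      refine ⟨‖G x‖, fun t => ?_⟩
      rw [heig μ x (Module.End.mem_eigenspace_iff.1 hx) hμ0 t, map_smul, norm_smul, norm_zpow, hμ]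
      simp
    exact hS trivial
  intro v
  have hc : ∀ i, ∃ C : ℝ, ∀ t : ℤ, ‖b.repr ((e ^ t) v) i‖ ≤ C := by
    intro i
    obtain ⟨C, hC⟩ := key ((b.baseChange ℂ).coord i) ((1:ℂ) ⊗ₜ[ℝ] v)
    refine ⟨C, fun t => ?_⟩
    have := hC t
    simp only [F, LinearMap.baseChange_tmul, Module.Basis.coord_apply, Module.Basis.baseChange_repr_tmul] at this
    simpa using this
  choose C hC using hc
  refine ⟨∑ i, C i * ‖b i‖, fun t => ?_⟩
  have h1 := b.sum_repr ((e ^ t) v)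
  change ‖(e ^ t) v‖ ≤ _
  rw [← h1]
  refine (norm_sum_le _ _).trans (Finset.sum_le_sum fun i _ => ?_)
  rw [norm_smul]
  exact mul_le_mul_of_nonneg_right (hC i t) (norm_nonneg _)

lemma crs_e_rec (e : V ≃ₗ[ℝ] V) (hb : ∃ C, 0 < C ∧ ∀ (t : ℤ) v, ‖(e ^ t) v‖ ≤ C * ‖v‖)
    (T : ℕ) (δ : ℝ) (hδ : 0 < δ) :
    ∃ t : ℕ, T ≤ t ∧ ∀ v, ‖(e ^ (t : ℤ)) v - v‖ ≤ δ * ‖v‖ ∧ ‖(e ^ (-(t : ℤ))) v - v‖ ≤ δ * ‖v‖ := by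
  obtain ⟨C, hC0, hC⟩ := hb
  let A : ℕ → V →L[ℝ] V := fun t => ((e ^ (t:ℤ) : V ≃ₗ[ℝ] V) : V →ₗ[ℝ] V).toContinuousLinearMap
  have hA : ∀ t v, A t v = (e ^ (t:ℤ)) v := fun t v => rfl
  have : ProperSpace (V →L[ℝ] V) := FiniteDimensional.proper ℝ _
  have hAb : ∀ t, A t ∈ Metric.closedBall (0 : V →L[ℝ] V) C := by
    intro t
    rw [mem_closedBall_zero_iff]
    exact ContinuousLinearMap.opNorm_le_bound _ hC0.le fun v => hC t v
  obtain ⟨a, -, φ, hφ, hlim⟩ := tendsto_subseq_of_bounded Metric.isBounded_closedBall hAb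
  obtain ⟨N, hN⟩ := Metric.cauchySeq_iff.1 hlim.cauchySeq (δ / C) (by positivity)
  have h1 := hN (N + T) (by omega) N le_rfl
  have h2 : φ N + T ≤ φ (N + T) := by
    have := hφ.add_le_nat T N
    rw [add_comm N T]
    omega
  obtain ⟨s, hs⟩ := Nat.exists_eq_add_of_le (show φ N ≤ φ (N + T) by omega)
  rw [dist_eq_norm] at h1
  have h3 : ∀ w, ‖(e ^ ((φ N : ℤ) + s)) w - (e ^ (φ N : ℤ)) w‖ ≤ δ / C * ‖w‖ := by
    intro w
    have := ContinuousLinearMap.le_of_opNorm_le _ h1.le w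
    simpa [hA, hs] using this
  refine ⟨s, by omega, fun v => ⟨?_, ?_⟩⟩
  · have h4 : (e ^ (s : ℤ)) v - v =
      (e ^ (-(φ N : ℤ))) ((e ^ ((φ N : ℤ) + s)) v - (e ^ (φ N : ℤ)) v) := by
      rw [map_sub, ← LinearEquiv.mul_apply, ← LinearEquiv.mul_apply, ← zpow_add, ← zpow_add]
      simp
    rw [h4]
    refine (hC _ _).trans ?_
    calc C * _ ≤ C * (δ / C * ‖v‖) := mul_le_mul_of_nonneg_left (h3 v) hC0.le
      _ = _ := by field_simp
  · have h4 : (e ^ (-(s : ℤ))) v - v =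
      - ((e ^ ((φ N : ℤ) + s)) ((e ^ (-(φ N : ℤ) - s)) v) - (e ^ (φ N : ℤ)) ((e ^ (-(φ N : ℤ) - s)) v)) := by
      rw [← LinearEquiv.mul_apply, ← LinearEquiv.mul_apply, ← zpow_add, ← zpow_add,
        show (φ N : ℤ) + s + (-(φ N : ℤ) - s) = 0 by ring, show (φ N : ℤ) + (-(φ N : ℤ) - s) = -s by ring]
      simp
    rw [h4, norm_neg]
    refine (h3 _).trans ?_
    calc δ / C * _ ≤ δ / C * (C * ‖v‖) := mul_le_mul_of_nonneg_left (hC _ _) (by positivity)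
      _ = _ := by field_simp
end LinAlg
section Rec
variable {V : Type*} [NormedAddCommGroup V] [NormedSpace ℝ V] [FiniteDimensional ℝ V]

lemma crs_inv_unip {V : Type*} [AddCommGroup V] [Module ℝ V] (u : V ≃ₗ[ℝ] V) :
    Commute ((u⁻¹ : V ≃ₗ[ℝ] V) : Module.End ℝ V) ((u : Module.End ℝ V) - 1) ∧
    ((u⁻¹ : V ≃ₗ[ℝ] V) : Module.End ℝ V) - 1 =
      - (((u⁻¹ : V ≃ₗ[ℝ] V) : Module.End ℝ V) * ((u : Module.End ℝ V) - 1)) := by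
  have h1 : ((u⁻¹ : V ≃ₗ[ℝ] V) : Module.End ℝ V) * (u : Module.End ℝ V) = 1 := by
    ext x
    change (u⁻¹ * u) x = x
    simp
  have h2 : (u : Module.End ℝ V) * ((u⁻¹ : V ≃ₗ[ℝ] V) : Module.End ℝ V) = 1 := by
    ext x
    change (u * u⁻¹) x = x
    simp
  constructor
  · unfold Commute SemiconjBy
    rw [mul_sub, sub_mul, h1, h2, mul_one, one_mul]
  · rw [mul_sub, h1]; simp

lemma crs_inv_nilp {V : Type*} [AddCommGroup V] [Module ℝ V] (u : V ≃ₗ[ℝ] V)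
    (hu : IsNilpotent ((u : Module.End ℝ V) - 1)) :
    IsNilpotent (((u⁻¹ : V ≃ₗ[ℝ] V) : Module.End ℝ V) - 1) := by
  rw [(crs_inv_unip u).2]
  exact ((crs_inv_unip u).1.isNilpotent_mul_left hu).neg

lemma crs_rec_vec (e u : V ≃ₗ[ℝ] V) (hb : ∃ C, 0 < C ∧ ∀ (t : ℤ) v, ‖(e ^ t) v‖ ≤ C * ‖v‖)
    (hu : IsNilpotent ((u : Module.End ℝ V) - 1)) (v : V) (hv : v ≠ 0) :
    ∃ w : V, w ≠ 0 ∧ ∀ δ > (0:ℝ), ∀ T : ℕ, ∃ t : ℕ, T ≤ t ∧ ∃ a b : ℝ, a ≠ 0 ∧ b ≠ 0 ∧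
      ‖a • (e ^ (t:ℤ)) ((u ^ (t:ℤ)) v) - w‖ < δ ∧
      ‖b • (e ^ (-(t:ℤ))) ((u ^ (-(t:ℤ))) v) - w‖ < δ := by
  obtain ⟨hcomm, hinv⟩ := crs_inv_unip u
  set N := (u : Module.End ℝ V) - 1 with hN
  set Ui := ((u⁻¹ : V ≃ₗ[ℝ] V) : Module.End ℝ V) with hUi
  set N' := Ui - 1 with hN'
  obtain ⟨k, hk, hk1⟩ : ∃ k, ((N ^ k) v ≠ 0) ∧
      (N ^ (k+1)) v = 0 := by
    by_contra hcon
    push Not at hcon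
    obtain ⟨d, hd⟩ := hu
    have : ∀ k, ((N ^ k) v ≠ 0) := by
      intro k
      induction k with
      | zero => simpa using hv
      | succ k ih => exact hcon k ih
    exact this d (by rw [hd]; rfl)
  have hpow : ∀ j, N' ^ j = (-1) ^ j * (Ui ^ j * N ^ j) := by
    intro j
    rw [hinv, neg_pow, hcomm.mul_pow]
  have hfix : Ui ((N ^ k) v) = (N ^ k) v := by
    have h1 : N ((N ^ k) v) = 0 := by rw [← hk1, pow_succ']; rfl
    have h2 : N' ((N ^ k) v) = 0 := by
      rw [hinv, LinearMap.neg_apply, Module.End.mul_apply, h1]; simp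
    rw [hN', LinearMap.sub_apply, sub_eq_zero] at h2
    exact h2
  have hfixk : ∀ j : ℕ, (Ui ^ j) ((N ^ k) v) = (N ^ k) v := by
    intro j
    induction j with
    | zero => rfl
    | succ j ih => rw [pow_succ, Module.End.mul_apply, hfix, ih]
  have hsgn : ∀ (j : ℕ) (x : V), (((-1 : Module.End ℝ V)) ^ j) x = ((-1 : ℝ) ^ j) • x := by
    intro j x
    rcases Nat.even_or_odd j with hj | hj <;> simp [hj.neg_one_pow]
  have hN'k : (N' ^ k) v = ((-1:ℝ) ^ k) • (N ^ k) v := by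
    rw [hpow, Module.End.mul_apply, Module.End.mul_apply, hfixk, hsgn]
  have hN'k1 : (N' ^ (k+1)) v = 0 := by
    rw [hpow, Module.End.mul_apply, Module.End.mul_apply, hk1]; simp
  have l1 := crs_uni_asymp N v k hk1
  have l2 := (crs_uni_asymp N' v k hN'k1).const_smul ((-1:ℝ) ^ k)
  set w := (1 / (k.factorial : ℝ)) • (N ^ k) v with hw
  have hw2 : ((-1:ℝ) ^ k) • (1 / (k.factorial : ℝ)) • (N' ^ k) v = w := by
    rw [hN'k, smul_comm, smul_smul, smul_smul, hw]
    congr 1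
    rw [mul_assoc, ← mul_pow]; simp
  rw [hw2] at l2
  refine ⟨w, smul_ne_zero (by positivity) hk, ?_⟩
  intro δ hδ T
  have e1 := Metric.tendsto_atTop.1 l1 (min (δ/2) 1) (by positivity)
  have e2 := Metric.tendsto_atTop.1 l2 (min (δ/2) 1) (by positivity)
  obtain ⟨T1, hT1⟩ := e1
  obtain ⟨T2, hT2⟩ := e2
  obtain ⟨t, ht, hte⟩ := crs_e_rec e hb (max (max T 1) (max T1 T2)) (δ / 2 / (‖w‖ + 1)) (by positivity)
  simp only [max_le_iff] at ht
  have ht0 : (t : ℝ) ≠ 0 := by have := ht.1.2; positivity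
  have gen : ∀ (s : ℤ) (x : V), (∀ y, ‖(e ^ s) y - y‖ ≤ δ / 2 / (‖w‖ + 1) * ‖y‖) →
      dist x w < min (δ/2) 1 → ‖(e ^ s) x - w‖ < δ := by
    intro s x hs hx
    rw [dist_eq_norm, lt_min_iff] at hx
    have hx1 : ‖x‖ ≤ ‖w‖ + 1 := by
      have := norm_le_norm_add_norm_sub' x w
      linarith
    calc ‖(e ^ s) x - w‖ = ‖((e ^ s) x - x) + (x - w)‖ := by congr 1; abel
      _ ≤ ‖(e ^ s) x - x‖ + ‖x - w‖ := norm_add_le _ _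
      _ < δ / 2 / (‖w‖ + 1) * (‖w‖ + 1) + δ / 2 := by
        refine add_lt_add_of_le_of_lt ((hs x).trans ?_) hx.1
        gcongr
      _ = δ := by field_simp; ring
  refine ⟨t, ht.1.1, ((t:ℝ) ^ k)⁻¹, (-1) ^ k * ((t:ℝ) ^ k)⁻¹, by positivity,
    mul_ne_zero (pow_ne_zero _ (by norm_num)) (by positivity), ?_, ?_⟩
  · have := gen t _ (fun y => (hte y).1) (hT1 t ht.2.1)
    rw [map_smul] at this
    have hx : (u ^ (t:ℤ)) v = ((N + 1) ^ t) v := by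
      rw [zpow_natCast, crs_pow_apply, hN, sub_add_cancel]
    rwa [hx]
  · have := gen (-t) _ (fun y => (hte y).2) (hT2 t ht.2.2)
    rw [map_smul, map_smul, smul_smul] at this
    have hx : (u ^ (-(t:ℤ))) v = ((N' + 1) ^ t) v := by
      rw [zpow_neg, ← inv_zpow, zpow_natCast, crs_pow_apply, hN', sub_add_cancel]
    rwa [hx]

lemma crs_zpow {V : Type*} [AddCommGroup V] [Module ℝ V]
    (g e h u : V ≃ₗ[ℝ] V) (hg : g = e * h * u)
    (heh : Commute (e : V →ₗ[ℝ] V) (h : V →ₗ[ℝ] V))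
    (heu : Commute (e : V →ₗ[ℝ] V) (u : V →ₗ[ℝ] V))
    (hhu : Commute (h : V →ₗ[ℝ] V) (u : V →ₗ[ℝ] V)) :
    (∀ t : ℤ, g ^ t = e ^ t * u ^ t * h ^ t) ∧ Commute g h := by
  have cv : ∀ a b : V ≃ₗ[ℝ] V, Commute (a : V →ₗ[ℝ] V) (b : V →ₗ[ℝ] V) → Commute a b := by
    intro a b hab
    ext x
    exact LinearMap.congr_fun hab x
  have h1 := cv _ _ heh
  have h2 := cv _ _ heu
  have h3 := cv _ _ hhu
  have hg' : g = e * u * h := by rw [hg, mul_assoc, h3.eq, mul_assoc]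
  have h4 : Commute (e * u) h := Commute.mul_left h1 h3.symm
  constructor
  · intro t
    rw [hg', h4.mul_zpow, h2.mul_zpow]
  · rw [hg']; exact Commute.mul_left h4 (Commute.refl h)

lemma crs_eig_zpow {V : Type*} [AddCommGroup V] [Module ℝ V] (h : V ≃ₗ[ℝ] V) (c : ℝ) (hc : c ≠ 0)
    (v : V) (hv : h v = c • v) (t : ℤ) : (h ^ t) v = c ^ t • v := by
  induction t using Int.induction_on with
  | zero => simp
  | succ i ih =>
    rw [zpow_add_one, LinearEquiv.mul_apply, hv, map_smul, ih, smul_smul, zpow_add_one₀ hc, mul_comm]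
  | pred i ih =>
    have h1 : (h ^ (-(i:ℤ))) v = (h ^ (-(i:ℤ) - 1)) (h v) := by
      rw [← LinearEquiv.mul_apply, ← zpow_add_one]; congr 2; ring
    rw [hv, map_smul, ih] at h1
    rw [zpow_sub_one₀ hc, mul_comm, mul_smul, h1, smul_smul, inv_mul_cancel₀ hc, one_smul]

end Rec

section Chain

def crsStep {P : Type*} (d : P → P → ℝ) (φ : ℤ → P → P) (ε : ℝ) (T : ℤ) (x y : P) : Prop :=
  ∃ t : ℤ, T ≤ t ∧ d (φ t x) y < ε

lemma crs_chain_iff {P : Type*} (d : P → P → ℝ) (φ : ℤ → P → P) (ε : ℝ) (T : ℤ) (x y : P) :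
    IsChainZ d φ ε T x y ↔ Relation.TransGen (crsStep d φ ε T) x y := by
  constructor
  · rintro ⟨n, xs, ts, rfl, rfl, h⟩
    have : ∀ i : Fin (n+1), Relation.TransGen (crsStep d φ ε T) (xs 0) (xs i.succ) := by
      intro i
      induction i using Fin.induction with
      | zero => exact Relation.TransGen.single ⟨ts 0, h 0⟩
      | succ i ih => exact ih.tail ⟨ts i.succ, h i.succ⟩
    exact this (Fin.last n)
  · intro h
    induction h using Relation.TransGen.head_induction_on with
    | single h =>
      rename_i a
      obtain ⟨t, h1, h2⟩ := h
      refine ⟨0, ![a, y], ![t], rfl, rfl, ?_⟩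
      intro i
      fin_cases i
      exact ⟨h1, h2⟩
    | head h _ ih =>
      rename_i a c _
      obtain ⟨t, h1, h2⟩ := h
      obtain ⟨n, xs, ts, hx0, hxl, hs⟩ := ih
      refine ⟨n + 1, Fin.cons a xs, Fin.cons t ts, rfl, ?_, ?_⟩
      · rw [← Fin.succ_last, Fin.cons_succ, hxl]
      · intro i
        refine Fin.cases ?_ (fun j => ?_) i
        · simp only [Fin.cons_zero, Fin.castSucc_zero, Fin.cons_succ, hx0]
          exact ⟨h1, h2⟩
        · rw [← Fin.succ_castSucc]
          simp only [Fin.cons_succ]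
          exact hs j
end Chain
section Proj
variable {V : Type*} [NormedAddCommGroup V] [NormedSpace ℝ V] [FiniteDimensional ℝ V]

lemma crs_flow_mk {V : Type*} [AddCommGroup V] [Module ℝ V] (g : V ≃ₗ[ℝ] V) (t : ℤ) (v : V)
    (hv : v ≠ 0) :
    projFlow g t (Projectivization.mk ℝ v hv) =
      Projectivization.mk ℝ ((g ^ t) v) ((LinearEquiv.map_ne_zero_iff _).2 hv) := rfl

lemma crs_mk_smul {V : Type*} [AddCommGroup V] [Module ℝ V] (v w : V) (hv : v ≠ 0) (hw : w ≠ 0)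
    (a : ℝ) (h : a • w = v) :
    Projectivization.mk ℝ v hv = Projectivization.mk ℝ w hw :=
  (Projectivization.mk_eq_mk_iff' ℝ v w hv hw).2 ⟨a, h⟩

lemma crs_near (m : MetricSpace (ℙ ℝ V))
    (hq : @IsQuotientMap _ _ _ m.toPseudoMetricSpace.toUniformSpace.toTopologicalSpace (fun v : {v : V // v ≠ 0} => Projectivization.mk ℝ v.1 v.2))
    (g e u : V ≃ₗ[ℝ] V) (hb : ∃ C, 0 < C ∧ ∀ (t : ℤ) v, ‖(e ^ t) v‖ ≤ C * ‖v‖)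
    (hu : IsNilpotent ((u : Module.End ℝ V) - 1)) (c : ℝ) (hc : c ≠ 0) (v : V) (hv : v ≠ 0)
    (hgv : ∀ t : ℤ, (g ^ t) v = c ^ t • (e ^ t) ((u ^ t) v))
    (ε : ℝ) (hε : 0 < ε) (T : ℤ) (q : ℙ ℝ V) (hvq : dist (Projectivization.mk ℝ v hv) q < ε) :
    Relation.TransGen (crsStep m.dist (projFlow g) ε T) (Projectivization.mk ℝ v hv) q := by
  letI tm : TopologicalSpace (ℙ ℝ V) := m.toPseudoMetricSpace.toUniformSpace.toTopologicalSpace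
  obtain ⟨w, hw, hrec⟩ := crs_rec_vec e u hb hu v hv
  have hcw := Metric.continuous_iff.1 hq.continuous ⟨w, hw⟩ (ε / 2) (by positivity)
  obtain ⟨δ, hδ, hcw⟩ := hcw
  obtain ⟨t, hTt, a, b, ha, hb', h1, h2⟩ := hrec δ hδ T.toNat
  have hne : ∀ s : ℤ, (g ^ s) v ≠ 0 := fun s => (LinearEquiv.map_ne_zero_iff _).2 hv
  have hne' : ∀ s : ℤ, (e ^ s) ((u ^ s) v) ≠ 0 := fun s => 
    (LinearEquiv.map_ne_zero_iff _).2 ((LinearEquiv.map_ne_zero_iff _).2 hv)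
  have key : ∀ (s : ℤ) (a : ℝ), a ≠ 0 → ‖a • (e ^ s) ((u ^ s) v) - w‖ < δ →
      dist (Projectivization.mk ℝ ((g ^ s) v) (hne s)) (Projectivization.mk ℝ w hw) < ε / 2 := by
    intro s a ha h
    have := hcw ⟨a • (e ^ s) ((u ^ s) v), smul_ne_zero ha (hne' s)⟩ (by
      rw [Subtype.dist_eq, dist_eq_norm]; exact h)
    rw [crs_mk_smul ((g ^ s) v) (a • (e ^ s) ((u ^ s) v)) (hne s) (smul_ne_zero ha (hne' s))
      (c ^ s * a⁻¹) (by rw [hgv, smul_smul, mul_assoc, inv_mul_cancel₀ ha, mul_one])]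
    exact this
  have k1 := key t a ha h1
  have k2 := key (-t) b hb' h2
  refine (Relation.TransGen.single (b := Projectivization.mk ℝ ((g ^ (-(t:ℤ))) v) (hne _)) ?_).tail ?_
  · refine ⟨t, by omega, ?_⟩
    rw [crs_flow_mk]
    refine (dist_triangle_right _ _ (Projectivization.mk ℝ w hw)).trans_lt ?_
    linarith
  · refine ⟨t, by omega, ?_⟩
    rw [crs_flow_mk]
    have : (g ^ (t:ℤ)) ((g ^ (-(t:ℤ))) v) = v := by
      rw [← LinearEquiv.mul_apply, ← zpow_add]; simp
    simp_rw [this]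
    exact hvq

lemma crs_trans (m : MetricSpace (ℙ ℝ V))
    (hq : @IsQuotientMap _ _ _ m.toPseudoMetricSpace.toUniformSpace.toTopologicalSpace (fun v : {v : V // v ≠ 0} => Projectivization.mk ℝ v.1 v.2))
    (g e u : V ≃ₗ[ℝ] V) (hb : ∃ C, 0 < C ∧ ∀ (t : ℤ) v, ‖(e ^ t) v‖ ≤ C * ‖v‖)
    (hu : IsNilpotent ((u : Module.End ℝ V) - 1)) (c : ℝ) (hc : c ≠ 0) (W : Submodule ℝ V)
    (hgv : ∀ v ∈ W, ∀ t : ℤ, (g ^ t) v = c ^ t • (e ^ t) ((u ^ t) v))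
    (ε : ℝ) (hε : 0 < ε) (T : ℤ) (v w : V) (hv : v ≠ 0) (hw : w ≠ 0) (hvW : v ∈ W) (hwW : w ∈ W) :
    Relation.TransGen (crsStep m.dist (projFlow g) ε T) (Projectivization.mk ℝ v hv)
      (Projectivization.mk ℝ w hw) := by
  letI tm : TopologicalSpace (ℙ ℝ V) := m.toPseudoMetricSpace.toUniformSpace.toTopologicalSpace
  by_cases hdep : ∃ a : ℝ, a • w = v
  · obtain ⟨a, ha⟩ := hdep
    refine crs_near m hq g e u hb hu c hc v hv (hgv v hvW) ε hε T _ ?_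
    rw [crs_mk_smul v w hv hw a ha, dist_self]
    exact hε
  let γ : ℝ → V := fun s => v + s • (w - v)
  have hγ : ∀ s, γ s ≠ 0 := by
    intro s hs
    simp only [γ] at hs
    by_cases h1 : s = 1
    · rw [h1] at hs; apply hw; simpa using hs
    · apply hdep
      have h2 : 1 - s ≠ 0 := fun h => h1 (by linarith)
      refine ⟨-(s / (1 - s)), ?_⟩
      have h3 : (1 - s) • v = -(s • w) := by
        rw [smul_sub] at hs
        rw [sub_smul, one_smul, eq_neg_iff_add_eq_zero, ← hs]; abel
      have h4 : v = (1 - s)⁻¹ • ((1 - s) • v) := by rw [smul_smul, inv_mul_cancel₀ h2, one_smul]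
      rw [h4, h3, smul_neg, smul_smul, neg_smul, div_eq_inv_mul]
  have hγW : ∀ s, γ s ∈ W := fun s => W.add_mem hvW (W.smul_mem _ (W.sub_mem hwW hvW))
  let Γ : ℝ → ℙ ℝ V := fun s => Projectivization.mk ℝ (γ s) (hγ s)
  have hΓ : Continuous Γ := by
    have : Continuous fun s => (⟨γ s, hγ s⟩ : {v : V // v ≠ 0}) :=
      Continuous.subtype_mk (by fun_prop) _
    exact hq.continuous.comp this
  let R : ℝ → ℝ → Prop := fun s t =>
    Relation.TransGen (crsStep m.dist (projFlow g) ε T) (Γ s) (Γ t) ∧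
    Relation.TransGen (crsStep m.dist (projFlow g) ε T) (Γ t) (Γ s)
  have hR : R 0 1 := by
    refine isPreconnected_univ.induction₂ R ?_ ?_ ?_ (Set.mem_univ _) (Set.mem_univ _)
    · intro x _
      rw [nhdsWithin_univ]
      filter_upwards [hΓ.continuousAt.eventually (Metric.ball_mem_nhds (Γ x) hε)] with y hy
      refine ⟨crs_near m hq g e u hb hu c hc _ (hγ x) (hgv _ (hγW x)) ε hε T _ ?_,
        crs_near m hq g e u hb hu c hc _ (hγ y) (hgv _ (hγW y)) ε hε T _ ?_⟩
      · rw [dist_comm]; exact hy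
      · exact hy
    · intro x y z _ _ _ h1 h2
      exact ⟨h1.1.trans h2.1, h2.2.trans h1.2⟩
    · intro x y _ _ h
      exact ⟨h.2, h.1⟩
  have h0 : Γ 0 = Projectivization.mk ℝ v hv := by
    simp [Γ, γ]
  have h1 : Γ 1 = Projectivization.mk ℝ w hw := by
    simp [Γ, γ]
  have := hR.1
  rwa [h0, h1] at this

lemma crs_lyap (m : MetricSpace (ℙ ℝ V))
    (hq : @IsQuotientMap _ _ _ m.toPseudoMetricSpace.toUniformSpace.toTopologicalSpace (fun v : {v : V // v ≠ 0} => Projectivization.mk ℝ v.1 v.2))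
    (g : V ≃ₗ[ℝ] V) (P Q : V →ₗ[ℝ] V) (hPQ : ∀ x, P x + Q x = x) (T : ℤ)
    (hT : ∀ t : ℤ, T ≤ t → ∀ x, 2 * (‖Q ((g ^ t) x)‖ * ‖P x‖) ≤ ‖Q x‖ * ‖P ((g ^ t) x)‖)
    (v : V) (hv : v ≠ 0) (hPv : P v ≠ 0) (hQv : Q v ≠ 0) :
    ∃ ε > 0, ¬ Relation.TransGen (crsStep m.dist (projFlow g) ε T) (Projectivization.mk ℝ v hv)
      (Projectivization.mk ℝ v hv) := by
  letI tm : TopologicalSpace (ℙ ℝ V) := m.toPseudoMetricSpace.toUniformSpace.toTopologicalSpace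
  obtain ⟨c, hc, hcv⟩ : ∃ c : ℝ, 0 < c ∧ ‖Q v‖ = c * ‖P v‖ := by
    refine ⟨‖Q v‖ / ‖P v‖, by positivity, ?_⟩
    have : ‖P v‖ ≠ 0 := by positivity
    field_simp
  have hPc : Continuous P := P.continuous_of_finiteDimensional
  have hQc : Continuous Q := Q.continuous_of_finiteDimensional
  let O : Set (ℙ ℝ V) := {q | ‖Q q.rep‖ < c * ‖P q.rep‖}
  let K : Set (ℙ ℝ V) := {q | ‖Q q.rep‖ ≤ c / 2 * ‖P q.rep‖}
  have hOmk : ∀ x (hx : x ≠ 0), Projectivization.mk ℝ x hx ∈ O ↔ ‖Q x‖ < c * ‖P x‖ := by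
    intro x hx
    obtain ⟨a, ha⟩ := Projectivization.exists_smul_eq_mk_rep ℝ x hx
    have ha0 : 0 < ‖(a : ℝ)‖ := by simp
    simp only [O, Set.mem_ofPred_eq, ← ha, Units.smul_def, map_smul, norm_smul]
    rw [mul_left_comm, mul_lt_mul_iff_right₀ ha0]
  have hKmk : ∀ x (hx : x ≠ 0), Projectivization.mk ℝ x hx ∈ K ↔ ‖Q x‖ ≤ c / 2 * ‖P x‖ := by
    intro x hx
    obtain ⟨a, ha⟩ := Projectivization.exists_smul_eq_mk_rep ℝ x hx
    have ha0 : 0 < ‖(a : ℝ)‖ := by simp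
    simp only [K, Set.mem_ofPred_eq, ← ha, Units.smul_def, map_smul, norm_smul]
    rw [mul_left_comm, mul_le_mul_iff_right₀ ha0]
  have hO : IsOpen O := by
    rw [← hq.isOpen_preimage]
    have : ((fun v : {v : V // v ≠ 0} => Projectivization.mk ℝ v.1 v.2) ⁻¹' O) =
        {x : {v : V // v ≠ 0} | ‖Q x.1‖ < c * ‖P x.1‖} := by
      ext x; exact hOmk x.1 x.2
    rw [this]
    exact isOpen_lt (by fun_prop) (by fun_prop)
  have hK : IsCompact K := by
    have : ProperSpace V := FiniteDimensional.proper ℝ V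
    have hS : IsCompact (Metric.sphere (0:V) 1 ∩ {x | ‖Q x‖ ≤ c / 2 * ‖P x‖}) :=
      (isCompact_sphere 0 1).inter_right (isClosed_le (by fun_prop) (by fun_prop))
    have hS' : IsCompact ((Subtype.val : {v : V // v ≠ 0} → V) ⁻¹'
        (Metric.sphere (0:V) 1 ∩ {x | ‖Q x‖ ≤ c / 2 * ‖P x‖})) := by
      rw [Topology.IsEmbedding.subtypeVal.isInducing.isCompact_preimage_iff]
      · exact hS
      · rintro x ⟨hx, -⟩
        have hx0 : x ≠ 0 := by rintro rfl; simp at hx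
        exact ⟨⟨x, hx0⟩, rfl⟩
    convert hS'.image hq.continuous
    ext q
    constructor
    · intro hqK
      induction q using Projectivization.ind with
      | h x hx =>
      rw [hKmk] at hqK
      have hx1 : ‖x‖ ≠ 0 := by positivity
      refine ⟨⟨‖x‖⁻¹ • x, smul_ne_zero (by positivity) hx⟩, ⟨?_, ?_⟩, ?_⟩
      · simp [norm_smul, hx1]
      · simp only [Set.mem_ofPred_eq, map_smul, norm_smul]
        rw [mul_left_comm]
        gcongr
      · exact crs_mk_smul _ _ _ _ ‖x‖⁻¹ rfl
    · rintro ⟨x, ⟨-, hx⟩, rfl⟩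
      exact (hKmk x.1 x.2).2 hx
  have hP0 : ∀ x, x ≠ 0 → ∀ d : ℝ, ‖Q x‖ ≤ d * ‖P x‖ → 0 < ‖P x‖ := by
    intro x hx d h
    rw [norm_pos_iff]
    intro h0
    rw [h0] at h
    apply hx
    have : Q x = 0 := by simpa using h
    rw [← hPQ x, h0, this, add_zero]
  have hKO : K ⊆ O := by
    intro q hqK
    have := hP0 q.rep q.rep_nonzero _ hqK
    have h1 : ‖Q q.rep‖ ≤ c / 2 * ‖P q.rep‖ := hqK
    change ‖Q q.rep‖ < c * ‖P q.rep‖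
    nlinarith
  obtain ⟨ε, hε, hth⟩ := hK.exists_thickening_subset_open hO hKO
  refine ⟨ε, hε, ?_⟩
  have step : ∀ x (hx : x ≠ 0) y, ‖Q x‖ ≤ c * ‖P x‖ →
      crsStep m.dist (projFlow g) ε T (Projectivization.mk ℝ x hx) y → y ∈ O := by
    rintro x hx y hxc ⟨t, ht, hd⟩
    apply hth
    rw [Metric.mem_thickening_iff]
    refine ⟨_, ?_, (dist_comm _ _).trans_lt hd⟩
    rw [crs_flow_mk, hKmk]
    have h1 := hT t ht x
    have h2 := hP0 x hx c hxc
    have h3 : ‖Q x‖ * ‖P ((g ^ t) x)‖ ≤ c * ‖P x‖ * ‖P ((g ^ t) x)‖ := by gcongr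
    have h4 : ‖P x‖ * ‖Q ((g ^ t) x)‖ ≤ ‖P x‖ * (c / 2 * ‖P ((g ^ t) x)‖) := by nlinarith
    exact le_of_mul_le_mul_left h4 h2
  have all : ∀ y, Relation.TransGen (crsStep m.dist (projFlow g) ε T)
      (Projectivization.mk ℝ v hv) y → y ∈ O := by
    intro y hy
    induction hy with
    | single h => exact step v hv _ hcv.le h
    | tail _ h ih =>
      rename_i b _ _
      rw [← b.mk_rep] at h
      exact step b.rep b.rep_nonzero _ (le_of_lt ih) h
  intro hcon
  have := (hOmk v hv).1 (all _ hcon)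
  linarith

end Proj
section Growth
variable {V : Type*} [NormedAddCommGroup V] [NormedSpace ℝ V] [FiniteDimensional ℝ V]

lemma crs_growth (G e u : V ≃ₗ[ℝ] V) (hb : ∃ C, 0 < C ∧ ∀ (t : ℕ) v, ‖(e ^ t) v‖ ≤ C * ‖v‖)
    (hu : IsNilpotent ((u : Module.End ℝ V) - 1)) {ι : Type*} (s : Set ι) (E : ι → Submodule ℝ V)
    (c : ι → ℝ) (r : ℝ) (hc : ∀ k ∈ s, 0 ≤ c k ∧ c k < r)
    (hG : ∀ k ∈ s, ∀ x ∈ E k, ∀ t : ℕ, (G ^ t) x = (c k) ^ t • (e ^ t) ((u ^ t) x))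
    (P : V →ₗ[ℝ] V) (hP : ∀ x, P x ∈ ⨆ k ∈ s, E k) (hr : 0 < r) :
    ∃ C, 0 < C ∧ ∀ (t : ℕ) x, ‖(G ^ t) (P x)‖ ≤ C * r ^ t * ‖x‖ := by
  obtain ⟨Ce, hCe, hbe⟩ := hb
  let S : Submodule ℝ V :=
    { carrier := {x | ∃ C : ℝ, ∀ t : ℕ, (r⁻¹) ^ t * ‖(G ^ t) x‖ ≤ C}
      add_mem' := by
        rintro x y ⟨C, hC⟩ ⟨D, hD⟩
        refine ⟨C + D, fun t => ?_⟩
        rw [map_add]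
        refine le_trans ?_ (add_le_add (hC t) (hD t))
        rw [← mul_add]
        gcongr
        exact norm_add_le _ _
      zero_mem' := ⟨0, fun t => by simp⟩
      smul_mem' := by
        rintro a x ⟨C, hC⟩
        refine ⟨‖a‖ * C, fun t => ?_⟩
        rw [map_smul, norm_smul, mul_left_comm]
        exact mul_le_mul_of_nonneg_left (hC t) (norm_nonneg _) }
  have hS : (⨆ k ∈ s, E k) ≤ S := by
    refine iSup₂_le fun k hk x hx => ?_
    obtain ⟨h0, h1⟩ := hc k hk
    obtain ⟨C, hC⟩ := crs_uni_bdd ((u : Module.End ℝ V) - 1) hu x (c k / r) (by positivity)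
      (by rw [div_lt_one hr]; exact h1)
    refine ⟨Ce * C, fun t => ?_⟩
    rw [hG k hk x hx t, norm_smul, norm_pow, Real.norm_of_nonneg h0]
    have h2 := hC t
    rw [sub_add_cancel, ← crs_pow_apply] at h2
    calc (r⁻¹) ^ t * ((c k) ^ t * ‖(e ^ t) ((u ^ t) x)‖)
        = (c k / r) ^ t * ‖(e ^ t) ((u ^ t) x)‖ := by rw [div_pow, inv_pow]; ring
      _ ≤ (c k / r) ^ t * (Ce * ‖(u ^ t) x‖) := by gcongr; exact hbe _ _
      _ = Ce * ((c k / r) ^ t * ‖(u ^ t) x‖) := by ring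
      _ ≤ Ce * C := by gcongr
  obtain ⟨C, hC0, hC⟩ := crs_unif_bdd
    (fun t : ℕ => ((r⁻¹) ^ t) • (((G ^ t : V ≃ₗ[ℝ] V) : V →ₗ[ℝ] V) ∘ₗ P)) (by
      intro v
      obtain ⟨C, hC⟩ := hS (hP v)
      refine ⟨C, fun t => ?_⟩
      have := hC t
      simp only [LinearMap.smul_apply, norm_smul, norm_pow, norm_inv, Real.norm_of_nonneg hr.le]
      exact this)
  refine ⟨C, hC0, fun t x => ?_⟩
  have := hC t x
  simp only [LinearMap.smul_apply, norm_smul, norm_pow, norm_inv, Real.norm_of_nonneg hr.le] at this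
  change (r⁻¹) ^ t * ‖(G ^ t) (P x)‖ ≤ _ at this
  rw [inv_pow, inv_mul_le_iff₀ (by positivity)] at this
  linarith

lemma crs_contract (g : V ≃ₗ[ℝ] V) (P Q : V →ₗ[ℝ] V) 
    (hPP : ∀ x, P (P x) = P x) (hQQ : ∀ x, Q (Q x) = Q x)
    (hPg : ∀ (t : ℤ) x, P ((g ^ t) x) = (g ^ t) (P x))
    (hQg : ∀ (t : ℤ) x, Q ((g ^ t) x) = (g ^ t) (Q x))
    (r1 r2 : ℝ) (h1 : 0 < r1) (h12 : r1 < r2)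
    (hQ : ∃ C, 0 < C ∧ ∀ (t : ℕ) x, ‖(g ^ t) (Q x)‖ ≤ C * r1 ^ t * ‖x‖)
    (hP : ∃ C, 0 < C ∧ ∀ (t : ℕ) x, ‖((g⁻¹) ^ t) (P x)‖ ≤ C * (r2⁻¹) ^ t * ‖x‖) :
    ∃ T : ℤ, 0 < T ∧ ∀ t : ℤ, T ≤ t → ∀ x,
      2 * (‖Q ((g ^ t) x)‖ * ‖P x‖) ≤ ‖Q x‖ * ‖P ((g ^ t) x)‖ := by
  obtain ⟨C, hC, hQ⟩ := hQ
  obtain ⟨D, hD, hP⟩ := hP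
  have h2 : 0 < r2 := h1.trans h12
  have hlim : Tendsto (fun t : ℕ => 2 * C * D * (r1 / r2) ^ t) atTop (𝓝 (2 * C * D * 0)) :=
    (tendsto_pow_atTop_nhds_zero_of_lt_one (by positivity) (by rwa [div_lt_one h2])).const_mul _
  rw [mul_zero] at hlim
  obtain ⟨N, hN⟩ := eventually_atTop.1 (hlim.eventually_le_const (show (0:ℝ) < 1 by norm_num))
  refine ⟨N + 1, by omega, fun t ht x => ?_⟩
  lift t to ℕ using by omega
  have a1 : ‖Q ((g ^ (t:ℤ)) x)‖ ≤ C * r1 ^ t * ‖Q x‖ := by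
    rw [hQg, ← hQQ]
    rw [zpow_natCast]
    rw [hQQ]
    have := hQ t (Q x)
    rwa [hQQ] at this
  have a2 : ‖P x‖ ≤ D * (r2⁻¹) ^ t * ‖P ((g ^ (t:ℤ)) x)‖ := by
    have := hP t (P ((g ^ (t:ℤ)) x))
    rw [hPP] at this
    have h3 : (g⁻¹ ^ t) (P ((g ^ (t:ℤ)) x)) = P x := by
      rw [hPg, ← LinearEquiv.mul_apply]
      simp
    rwa [h3] at this
  have a3 := hN t (by omega)
  calc 2 * (‖Q ((g ^ (t:ℤ)) x)‖ * ‖P x‖)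
      ≤ 2 * ((C * r1 ^ t * ‖Q x‖) * (D * (r2⁻¹) ^ t * ‖P ((g ^ (t:ℤ)) x)‖)) := by gcongr
    _ = (2 * C * D * (r1 / r2) ^ t) * (‖Q x‖ * ‖P ((g ^ (t:ℤ)) x)‖) := by
        rw [div_pow, inv_pow]; ring
    _ ≤ 1 * (‖Q x‖ * ‖P ((g ^ (t:ℤ)) x)‖) := by gcongr
    _ = _ := one_mul _

lemma crs_split {V : Type*} [AddCommGroup V] [Module ℝ V] (n : ℕ) (E : Fin n → Submodule ℝ V)
    (hind : iSupIndep E) (htop : ⨆ k, E k = ⊤) (v : V) (hv : v ≠ 0) (hvE : ∀ k, v ∉ E k) :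
    ∃ i : Fin n, v ∉ ⨆ k ∈ {k | k ≤ i}, E k ∧ v ∉ ⨆ k ∈ {k | i < k}, E k := by
  have hB : ∃ m : ℕ, v ∈ ⨆ k ∈ {k : Fin n | m ≤ k.val}, E k ∧
      v ∉ ⨆ k ∈ {k : Fin n | m + 1 ≤ k.val}, E k := by
    by_contra hcon
    push Not at hcon
    have : ∀ m : ℕ, v ∈ ⨆ k ∈ {k : Fin n | m ≤ k.val}, E k := by
      intro m
      induction m with
      | zero => simp [htop]
      | succ m ih => exact hcon m ih
    have h1 := this n
    have h2 : {k : Fin n | n ≤ k.val} = ∅ := by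
      ext k; simp
    rw [h2] at h1
    simp at h1
    exact hv h1
  obtain ⟨m, h1, h2⟩ := hB
  have hm : m < n := by
    by_contra hcon
    have h3 : {k : Fin n | m ≤ k.val} = ∅ := by
      ext k; simp; omega
    rw [h3] at h1
    simp at h1
    exact hv h1
  refine ⟨⟨m, hm⟩, ?_, h2⟩
  intro h3
  have h4 : {k : Fin n | k ≤ ⟨m, hm⟩} = insert ⟨m, hm⟩ {k : Fin n | k.val < m} := by
    ext k
    simp only [Set.mem_ofPred_eq, Set.mem_insert_iff, Fin.le_def, Fin.ext_iff]
    omega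
  rw [h4, iSup_insert, Submodule.mem_sup] at h3
  obtain ⟨b, hb, a, ha, hab⟩ := h3
  have hdis : Disjoint (⨆ k ∈ {k : Fin n | k.val < m}, E k) (⨆ k ∈ {k : Fin n | m ≤ k.val}, E k) := by
    apply hind.disjoint_biSup_biSup
    rw [Set.disjoint_left]
    intro k hk hk'
    simp only [Set.mem_ofPred_eq] at hk hk'
    omega
  have hb' : b ∈ ⨆ k ∈ {k : Fin n | m ≤ k.val}, E k :=
    (le_biSup E (show (⟨m, hm⟩ : Fin n) ∈ {k : Fin n | m ≤ k.val} from le_refl m)) hb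
  have ha' : a ∈ ⨆ k ∈ {k : Fin n | m ≤ k.val}, E k := by
    have : a = v - b := by rw [← hab]; abel
    rw [this]; exact Submodule.sub_mem _ h1 hb'
  have ha0 : a = 0 := Submodule.disjoint_def.1 hdis a ha ha'
  apply hvE ⟨m, hm⟩
  rw [← hab, ha0, add_zero]; exact hb

lemma crs_notrec (m : MetricSpace (ℙ ℝ V))
    (hq : @IsQuotientMap _ _ _ m.toPseudoMetricSpace.toUniformSpace.toTopologicalSpace
      (fun v : {v : V // v ≠ 0} => Projectivization.mk ℝ v.1 v.2))
    (g e h u : V ≃ₗ[ℝ] V) (hgt : ∀ t : ℤ, g ^ t = e ^ t * u ^ t * h ^ t) (hgh : Commute g h)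
    (hb : ∃ C, 0 < C ∧ ∀ (t : ℤ) v, ‖(e ^ t) v‖ ≤ C * ‖v‖)
    (hu : IsNilpotent ((u : Module.End ℝ V) - 1))
    (n : ℕ) (l : Fin n → ℝ) (hl : StrictAnti l) (hlpos : ∀ k, 0 < l k)
    (hdiag : ⨆ k : Fin n, Module.End.eigenspace (h : V →ₗ[ℝ] V) (l k) = ⊤)
    (v : V) (hv : v ≠ 0) (hvE : ∀ k, v ∉ Module.End.eigenspace (h : V →ₗ[ℝ] V) (l k)) :
    ∃ ε > 0, ∃ T > 0, ¬ Relation.TransGen (crsStep m.dist (projFlow g) ε T)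
      (Projectivization.mk ℝ v hv) (Projectivization.mk ℝ v hv) := by
  have hind : iSupIndep fun k => Module.End.eigenspace (h : V →ₗ[ℝ] V) (l k) :=
    (Module.End.eigenspaces_iSupIndep (h : V →ₗ[ℝ] V)).comp hl.injective
  obtain ⟨i, hiA, hiB⟩ := crs_split n _ hind hdiag v hv hvE
  have hgE : ∀ k, ∀ x ∈ Module.End.eigenspace (h : V →ₗ[ℝ] V) (l k), ∀ t : ℤ,
      (g ^ t) x = (l k) ^ t • (e ^ t) ((u ^ t) x) := by
    intro k x hx t
    rw [hgt, LinearEquiv.mul_apply, LinearEquiv.mul_apply,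
      crs_eig_zpow h (l k) (hlpos k).ne' x (Module.End.mem_eigenspace_iff.1 hx), map_smul, map_smul]
  have hinv : ∀ k, ∀ x ∈ Module.End.eigenspace (h : V →ₗ[ℝ] V) (l k), ∀ t : ℤ,
      (g ^ t) x ∈ Module.End.eigenspace (h : V →ₗ[ℝ] V) (l k) := by
    intro k x hx t
    rw [Module.End.mem_eigenspace_iff] at hx ⊢
    change h x = _ at hx
    change h ((g ^ t) x) = _
    rw [← LinearEquiv.mul_apply, ← (hgh.zpow_left t).eq, LinearEquiv.mul_apply, hx, map_smul]
  generalize hE : (fun k => Module.End.eigenspace (h : V →ₗ[ℝ] V) (l k)) = E at *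
  have hE' : ∀ k, Module.End.eigenspace (h : V →ₗ[ℝ] V) (l k) = E k := fun k => congrFun hE k
  simp only [hE'] at *
  have hinvS : ∀ s : Set (Fin n), ∀ x ∈ ⨆ k ∈ s, E k, ∀ t : ℤ, (g ^ t) x ∈ ⨆ k ∈ s, E k := by
    intro s x hx t
    have : (⨆ k ∈ s, E k) ≤ (⨆ k ∈ s, E k).comap ((g ^ t : V ≃ₗ[ℝ] V) : V →ₗ[ℝ] V) := by
      refine iSup₂_le fun k hk x hx => ?_
      exact le_biSup E hk (hinv k x hx t)
    exact this hx
  have hcompl : IsCompl (⨆ k ∈ {k | k ≤ i}, E k) (⨆ k ∈ {k | i < k}, E k) := by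
    constructor
    · apply hind.disjoint_biSup_biSup
      rw [Set.disjoint_left]
      intro k hk hk'
      simp only [Set.mem_ofPred_eq] at hk hk'
      exact absurd hk' (not_lt.2 hk)
    · rw [codisjoint_iff_le_sup, ← hdiag]
      refine iSup_le fun k => ?_
      rcases le_or_gt k i with hk | hk
      · exact le_sup_of_le_left (le_biSup E hk)
      · exact le_sup_of_le_right (le_biSup E hk)
  have hIA := hinvS {k | k ≤ i}
  have hIB := hinvS {k | i < k}
  obtain ⟨A, hA⟩ : ∃ A, A = (⨆ k ∈ {k | k ≤ i}, E k) := ⟨_, rfl⟩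
  obtain ⟨B, hB⟩ : ∃ B, B = (⨆ k ∈ {k | i < k}, E k) := ⟨_, rfl⟩
  rw [← hA] at hcompl hiA hIA
  rw [← hB] at hcompl hiB hIB
  let P := A.projection B hcompl
  let Q := B.projection A hcompl.symm
  have hPQ : ∀ x, P x + Q x = x := fun x => Submodule.projection_add_projection_eq_self hcompl x
  have hPm : ∀ x, P x ∈ A := fun x => Submodule.projection_apply_mem hcompl x
  have hQm : ∀ x, Q x ∈ B := fun x => Submodule.projection_apply_mem hcompl.symm x
  have hPA : ∀ x ∈ A, P x = x := fun x hx => Submodule.projection_apply_of_mem_left hcompl hx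
  have hQB : ∀ x ∈ B, Q x = x := fun x hx => Submodule.projection_apply_of_mem_left hcompl.symm hx
  have hPB : ∀ x, P x = 0 ↔ x ∈ B := fun x => Submodule.projection_apply_eq_zero_iff hcompl
  have hQA : ∀ x, Q x = 0 ↔ x ∈ A := fun x => Submodule.projection_apply_eq_zero_iff hcompl.symm
  have hPg : ∀ (t : ℤ) x, P ((g ^ t) x) = (g ^ t) (P x) := by
    intro t x
    conv_lhs => rw [← hPQ x, map_add, map_add, hPA _ (hIA _ (hPm x) t), 
      (hPB _).2 (hIB _ (hQm x) t), add_zero]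
  have hQg : ∀ (t : ℤ) x, Q ((g ^ t) x) = (g ^ t) (Q x) := by
    intro t x
    conv_lhs => rw [← hPQ x, map_add, map_add, hQB _ (hIB _ (hQm x) t), 
      (hQA _).2 (hIA _ (hPm x) t), zero_add]
  obtain ⟨r1, hr1, hr10, hr1l⟩ : ∃ r : ℝ, r < l i ∧ 0 < r ∧ ∀ k, i < k → l k < r := by
    have h1 : ∀ᶠ r in 𝓝[<] (l i), r < l i := eventually_mem_nhdsWithin
    have h2 : ∀ᶠ r in 𝓝[<] (l i), 0 < r := 
      nhdsWithin_le_nhds (eventually_gt_nhds (hlpos i))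
    have h3 : ∀ᶠ r in 𝓝[<] (l i), ∀ k, i < k → l k < r := by
      rw [eventually_all]
      intro k
      by_cases hk : i < k
      · filter_upwards [nhdsWithin_le_nhds (eventually_gt_nhds (hl hk))] with r hr _ using hr
      · exact Eventually.of_forall fun r h => absurd h hk
    obtain ⟨r, hr⟩ := (h1.and (h2.and h3)).exists
    exact ⟨r, hr⟩
  obtain ⟨r2, hr12, hr2⟩ := exists_between hr1
  obtain ⟨C, hC, hbC⟩ := hb
  have gQ := crs_growth g e u ⟨C, hC, fun t v => by simpa using hbC t v⟩ hu {k | i < k} E l r1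
    (fun k hk => ⟨(hlpos k).le, hr1l k hk⟩)
    (fun k _ x hx t => by simpa using hgE k x hx t) Q (fun x => hB ▸ hQm x) hr10
  have gP := crs_growth g⁻¹ e⁻¹ u⁻¹
    ⟨C, hC, fun t v => by
      have := hbC (-t) v
      rwa [zpow_neg, ← inv_zpow, zpow_natCast] at this⟩
    (crs_inv_nilp u hu) {k | k ≤ i} E (fun k => (l k)⁻¹) r2⁻¹
    (fun k hk => ⟨(inv_pos.2 (hlpos k)).le, by
      have h1 : l i ≤ l k := hl.antitone hk
      exact inv_strictAnti₀ (hr10.trans hr12) (hr2.trans_le h1)⟩)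
    (fun k _ x hx t => by
      have := hgE k x hx (-t)
      simp only [zpow_neg, ← inv_zpow] at this
      simpa only [zpow_natCast] using this) P (fun x => hA ▸ hPm x)
      (inv_pos.2 (hr10.trans hr12))
  obtain ⟨T, hT0, hT⟩ := crs_contract g P Q (fun x => hPA _ (hPm x)) (fun x => hQB _ (hQm x)) hPg hQg r1 r2
    hr10 hr12 gQ gP
  obtain ⟨ε, hε, hno⟩ := crs_lyap m hq g P Q hPQ T hT v hv (fun h => hiB ((hPB v).1 h))
    (fun h => hiA ((hQA v).1 h))
  exact ⟨ε, hε, T, hT0, hno⟩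

end Growth

/-- Let `g = e h u` be the multiplicative Jordan decomposition of
`g ∈ GL(V)`, with eigenspace decomposition `V = V_{λ₁} ⊕ ⋯ ⊕ V_{λ_n}` of `h`.  For any
metric inducing the topology of `ℙ(V)`: each projectivized eigenspace `ℙ(V_{λ_i})` is chain
transitive, and the chain recurrent set of the induced flow of `g` equals the fixed point
set of the induced flow of `h`, which is `⋃ᵢ ℙ(V_{λ_i})`; hence `{ℙ(V_{λ_i})}` is the
finest Morse decomposition. -/
theorem chain_recurrent_set_eq_fix_hyperbolic
    {V : Type*} [NormedAddCommGroup V] [NormedSpace ℝ V] [FiniteDimensional ℝ V]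
    (g e h u : V ≃ₗ[ℝ] V) (hg : g = e * h * u)
    (heh : Commute (e : V →ₗ[ℝ] V) (h : V →ₗ[ℝ] V))
    (heu : Commute (e : V →ₗ[ℝ] V) (u : V →ₗ[ℝ] V))
    (hhu : Commute (h : V →ₗ[ℝ] V) (u : V →ₗ[ℝ] V))
    (he : Module.End.IsSemisimple (LinearMap.baseChange ℂ (e : V →ₗ[ℝ] V)) ∧
      ∀ μ ∈ spectrum ℂ (LinearMap.baseChange ℂ (e : V →ₗ[ℝ] V)), ‖μ‖ = 1)
    (hu : IsNilpotent ((u : V →ₗ[ℝ] V) - 1))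
    (n : ℕ) (l : Fin n → ℝ) (hl : StrictAnti l) (hlpos : ∀ k, 0 < l k)
    (hdiag : ⨆ k : Fin n, Module.End.eigenspace (h : V →ₗ[ℝ] V) (l k) = ⊤)
    (m : MetricSpace (ℙ ℝ V))
    (hm : m.toUniformSpace.toTopologicalSpace =
      (projectivizationTopology : TopologicalSpace (ℙ ℝ V))) :
    (∀ (k : Fin n) (p q : ℙ ℝ V),
      p.rep ∈ Module.End.eigenspace (h : V →ₗ[ℝ] V) (l k) →
      q.rep ∈ Module.End.eigenspace (h : V →ₗ[ℝ] V) (l k) →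
      ∀ ε > (0 : ℝ), ∀ T > (0 : ℤ), IsChainZ m.dist (projFlow g) ε T p q) ∧
    {p : ℙ ℝ V | ∀ ε > (0 : ℝ), ∀ T > (0 : ℤ), IsChainZ m.dist (projFlow g) ε T p p} =
      {p : ℙ ℝ V | ∀ t : ℤ, projFlow h t p = p} ∧
    {p : ℙ ℝ V | ∀ t : ℤ, projFlow h t p = p} =
      ⋃ k : Fin n, {p : ℙ ℝ V | p.rep ∈ Module.End.eigenspace (h : V →ₗ[ℝ] V) (l k)} := by
  have hq : @IsQuotientMap _ _ _ m.toPseudoMetricSpace.toUniformSpace.toTopologicalSpace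
      (fun v : {v : V // v ≠ 0} => Projectivization.mk ℝ v.1 v.2) := by
    rw [hm]
    exact isQuotientMap_quotient_mk'
  obtain ⟨hgt, hgh⟩ := crs_zpow g e h u hg heh heu hhu
  have hb := crs_e_bdd e he
  have part1 : ∀ (k : Fin n) (p q : ℙ ℝ V),
      p.rep ∈ Module.End.eigenspace (h : V →ₗ[ℝ] V) (l k) →
      q.rep ∈ Module.End.eigenspace (h : V →ₗ[ℝ] V) (l k) →
      ∀ ε > (0 : ℝ), ∀ T > (0 : ℤ), IsChainZ m.dist (projFlow g) ε T p q := by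
    intro k p q hp hq' ε hε T _
    rw [crs_chain_iff]
    have := crs_trans m hq g e u hb hu (l k) (hlpos k).ne'
      (Module.End.eigenspace (h : V →ₗ[ℝ] V) (l k)) (fun x hx t => by
        rw [hgt, LinearEquiv.mul_apply, LinearEquiv.mul_apply,
          crs_eig_zpow h (l k) (hlpos k).ne' x (Module.End.mem_eigenspace_iff.1 hx),
          map_smul, map_smul]) ε hε T p.rep q.rep p.rep_nonzero q.rep_nonzero hp hq'
    rwa [p.mk_rep, q.mk_rep] at this
  have part3 : {p : ℙ ℝ V | ∀ t : ℤ, projFlow h t p = p} =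
      ⋃ k : Fin n, {p : ℙ ℝ V | p.rep ∈ Module.End.eigenspace (h : V →ₗ[ℝ] V) (l k)} := by
    ext p
    simp only [Set.mem_iUnion, Set.mem_ofPred_eq]
    constructor
    · intro hp
      have h1 := hp 1
      rw [← p.mk_rep, crs_flow_mk, Projectivization.mk_eq_mk_iff'] at h1
      obtain ⟨a, ha⟩ := h1
      rw [zpow_one] at ha
      have hmem : p.rep ∈ Module.End.eigenspace (h : V →ₗ[ℝ] V) a :=
        Module.End.mem_eigenspace_iff.2 ha.symm
      by_cases hk : ∃ k, l k = a
      · obtain ⟨k, rfl⟩ := hk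
        exact ⟨k, hmem⟩
      · exfalso
        have hdis := (Module.End.eigenspaces_iSupIndep (h : V →ₗ[ℝ] V)).disjoint_biSup
          (x := a) (y := Set.range l) (by rintro ⟨k, hk'⟩; exact hk ⟨k, hk'⟩)
        rw [iSup_range, hdiag, disjoint_top] at hdis
        rw [hdis] at hmem
        exact p.rep_nonzero (by simpa using hmem)
    · rintro ⟨k, hk⟩ t
      have h1 := crs_eig_zpow h (l k) (hlpos k).ne' p.rep (Module.End.mem_eigenspace_iff.1 hk) t
      conv_lhs => rw [← p.mk_rep, crs_flow_mk]
      conv_rhs => rw [← p.mk_rep]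
      exact crs_mk_smul _ _ _ _ _ h1.symm
  refine ⟨part1, ?_, part3⟩
  rw [part3]
  ext p
  simp only [Set.mem_iUnion, Set.mem_ofPred_eq]
  constructor
  · intro hp
    by_contra hcon
    push Not at hcon
    obtain ⟨ε, hε, T, hT, hno⟩ := crs_notrec m hq g e h u hgt hgh hb hu n l hl hlpos hdiag p.rep
      p.rep_nonzero hcon
    apply hno
    rw [p.mk_rep, ← crs_chain_iff]
    exact hp ε hε T hT
  · rintro ⟨k, hk⟩ ε hε T hT
    exact part1 k p p hk hk ε hε T hT
end
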